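/- For every r > 0 there exists a constant C = C(r) > 0, independent of f, x, n and d, with the following property. Let d ≥ 3 be an integer, x ∈ S^d, δ > 0, and f ∈ C(S^d) be such that ‖f‖ := ‖f‖_∞ + min_{P ∈ Π_r^d} max_{y ∈ B(x,δ)} |f(y)−P(y)|/|x−y|_{d+1}^r < ∞. Let n be an integer with nd ≥ (d+r+1)² and √(16 r (log n)/n) ≤ δ, and let ν ∈ MZQ(d; 2(d+2)n). Then |f(x) − σ_{d;n,r}(ν,f)(x)| ≤ C · d^{1/6} · dim(Π_{2(d+2)n}^d)^{−r/d} · ‖f‖ · |||ν|||_{d;2(d+2)n}. -/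

import Mathlib

noncomputable section

open MeasureTheory Real Set
open scoped RealInnerProductSpace

/-- Value at `x` of the orthonormalized Jacobi polynomial `p_n^{(α,β)}`. -/
def jacobiP (α β : ℝ) (n : ℕ) (x : ℝ) : ℝ :=
  Real.sqrt ((2 * (n : ℝ) + α + β + 1) / 2 ^ (α + β + 1) *
      (Real.Gamma ((n : ℝ) + α + β + 1) * (n.factorial : ℝ) /
        (Real.Gamma ((n : ℝ) + α + 1) * Real.Gamma ((n : ℝ) + β + 1)))) *
    (Real.Gamma (α + n + 1) / ((n.factorial : ℝ) * Real.Gamma (α + β + n + 1))) *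
    ∑ m ∈ Finset.range (n + 1),
      (n.choose m : ℝ) * (Real.Gamma (α + β + n + m + 1) / Real.Gamma (α + m + 1)) *
        ((x - 1) / 2) ^ m

/-- The kernel `K_n^{(α,β)}(x) = Σ_{ℓ<n} p_ℓ^{(α,β)}(1) p_ℓ^{(α,β)}(x)`. -/
def jacobiK (α β : ℝ) (n : ℕ) (x : ℝ) : ℝ :=
  ∑ ℓ ∈ Finset.range n, jacobiP α β ℓ 1 * jacobiP α β ℓ x

/-- The unit sphere `S^d ⊂ ℝ^{d+1}`. -/
abbrev Sph (d : ℕ) := Metric.sphere (0 : EuclideanSpace ℝ (Fin (d + 1))) 1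

/-- The rotation invariant Riemannian volume probability measure `μ_d^*` on `S^d`. -/
def sphMeasure (d : ℕ) : Measure (Sph d) :=
  ((volume : Measure (EuclideanSpace ℝ (Fin (d + 1)))).toSphere Set.univ)⁻¹ •
    (volume : Measure (EuclideanSpace ℝ (Fin (d + 1)))).toSphere

/-- `f : S^d → ℝ` is the restriction to the sphere of an algebraic polynomial in `d+1`
variables of total degree `< n`, i.e. `f ∈ Π_n^d`. -/
def IsSphPoly (d : ℕ) (n : ℝ) (f : Sph d → ℝ) : Prop :=
  ∃ p : MvPolynomial (Fin (d + 1)) ℝ, (p.totalDegree : ℝ) < n ∧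
    ∀ y : Sph d, f y = MvPolynomial.eval (fun i => (y : EuclideanSpace ℝ (Fin (d + 1))) i) p

/-- Integral of `f` with respect to a signed measure (via the Jordan decomposition). -/
def sInt {X : Type*} [MeasurableSpace X] (ν : SignedMeasure X) (f : X → ℝ) : ℝ :=
  (∫ x, f x ∂ν.toJordanDecomposition.posPart) - ∫ x, f x ∂ν.toJordanDecomposition.negPart

/-- Integral of `f` over a set `s` with respect to a signed measure. -/
def sIntOn {X : Type*} [MeasurableSpace X] (ν : SignedMeasure X) (s : Set X) (f : X → ℝ) : ℝ :=
  (∫ x in s, f x ∂ν.toJordanDecomposition.posPart) -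
    ∫ x in s, f x ∂ν.toJordanDecomposition.negPart

/-- `ν` is a quadrature measure of order `n` on `S^d`. -/
def IsQuadrature (d : ℕ) (n : ℝ) (ν : SignedMeasure (Sph d)) : Prop :=
  ∀ f : Sph d → ℝ, IsSphPoly d n f → sInt ν f = ∫ y, f y ∂sphMeasure d

/-- `ν` satisfies the Marcinkiewicz-Zygmund inequality of order `n` with constant `c`;
`ν ∈ MZ(d;n)` means this holds for some `c`, and `|||ν|||_{d;n}` is the least such `c`. -/
def IsMZ (d : ℕ) (n : ℝ) (ν : SignedMeasure (Sph d)) (c : ℝ) : Prop :=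
  ∀ f : Sph d → ℝ, IsSphPoly d (n / 2) f →
    (∫ y, (f y) ^ 2 ∂ν.totalVariation) ≤ c * ∫ y, (f y) ^ 2 ∂sphMeasure d

/-- `ω_d`, the volume of `S^d`. -/
def omegaS (d : ℕ) : ℝ := 2 * Real.pi ^ (((d : ℝ) + 1) / 2) / Real.Gamma (((d : ℝ) + 1) / 2)

/-- The reproducing kernel `K_{d;n}` of `Π_n^d`. -/
def sphK (d n : ℕ) (x : ℝ) : ℝ :=
  (omegaS d / omegaS (d - 1)) * jacobiK ((d : ℝ) / 2 - 1) ((d : ℝ) / 2 - 1) n x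

/-- The kernel `Φ̃_{d;n,r}`. -/
def PhiTilde (d n : ℕ) (r : ℝ) (x : ℝ) : ℝ :=
  sphK d ((d + 2) * n) x *
    (jacobiP ((d : ℝ) / 2 + r) ((d : ℝ) / 2 - 2) (d * n) x /
      jacobiP ((d : ℝ) / 2 + r) ((d : ℝ) / 2 - 2) (d * n) 1)

/-- The kernel `Φ_{d;n,r}`. -/
def Phi (d n : ℕ) (r : ℝ) (x : ℝ) : ℝ := PhiTilde d n r x * ((1 + x) / 2) ^ n

/-- The inner product `x·y` of two points of `S^d`. -/
def ip {d : ℕ} (x y : Sph d) : ℝ :=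
  ⟪(x : EuclideanSpace ℝ (Fin (d + 1))), (y : EuclideanSpace ℝ (Fin (d + 1)))⟫

/-- The operator `σ_{d;n,r}(ν, f)`. -/
def sigmaOp (d n : ℕ) (r : ℝ) (ν : SignedMeasure (Sph d)) (f : Sph d → ℝ) (x : Sph d) : ℝ :=
  sInt ν (fun y => f y * Phi d n r (ip x y))

/-- The operator `σ̃_{d;n,r}(ν, f)`. -/
def sigmaTildeOp (d n : ℕ) (r : ℝ) (ν : SignedMeasure (Sph d)) (f : Sph d → ℝ) (x : Sph d) : ℝ :=
  sInt ν (fun y => f y * PhiTilde d n r (ip x y))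

/-- The uniform (supremum) norm `‖f‖_∞`. -/
def supNorm {X : Type*} (f : X → ℝ) : ℝ := sSup (Set.range fun x => |f x|)

/-- `E_{d;n}(f)`, the degree of approximation of `f` from `Π_n^d` in the uniform norm. -/
def bestApprox (d : ℕ) (n : ℝ) (f : Sph d → ℝ) : ℝ :=
  sInf {t | ∃ g, IsSphPoly d n g ∧ ∀ y, |f y - g y| ≤ t}

/-- `dim Π_n^d = (2n+d−2)·Γ(n+d−1)/(Γ(n)·Γ(d+1))` (for `n ≥ 2`). -/
def dimPi (d n : ℕ) : ℝ :=
  (2 * (n : ℝ) + d - 2) * Real.Gamma ((n : ℝ) + d - 1) /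
    (Real.Gamma n * Real.Gamma ((d : ℝ) + 1))

section Part1

/-- Weighted integral on `[0,1]`. -/
def wI (a b : ℝ) (g : ℝ → ℝ) : ℝ := ∫ u in (0:ℝ)..1, u ^ a * (1 - u) ^ b * g u

lemma wI_base_integrable {a b : ℝ} (ha : -1 < a) (hb : -1 < b) :
    IntervalIntegrable (fun u : ℝ => u ^ a * (1 - u) ^ b) volume 0 1 := by
  have h := (Complex.betaIntegral_convergent (u := ((a + 1 : ℝ) : ℂ)) (v := ((b + 1 : ℝ) : ℂ))
    (by simp; linarith) (by simp; linarith)).norm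
  refine h.congr ?_
  intro x hx
  rw [uIoc_of_le zero_le_one] at hx
  have e1 : ((a + 1 : ℝ) : ℂ) - 1 = ((a : ℝ) : ℂ) := by push_cast; ring
  have e2 : ((b + 1 : ℝ) : ℂ) - 1 = ((b : ℝ) : ℂ) := by push_cast; ring
  have e3 : (1 : ℂ) - (x : ℂ) = ((1 - x : ℝ) : ℂ) := by push_cast; ring
  have h1 : 0 ≤ x := hx.1.le
  have h2 : 0 ≤ 1 - x := by linarith [hx.2]
  simp only [e1, e2, e3]
  rw [← Complex.ofReal_cpow h1, ← Complex.ofReal_cpow h2, ← Complex.ofReal_mul,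
    Complex.norm_real, Real.norm_of_nonneg (by positivity)]

lemma wI_integrable {a b : ℝ} (ha : -1 < a) (hb : -1 < b) {g : ℝ → ℝ} (hg : Continuous g) :
    IntervalIntegrable (fun u : ℝ => u ^ a * (1 - u) ^ b * g u) volume 0 1 :=
  (wI_base_integrable ha hb).mul_continuousOn hg.continuousOn

lemma wI_beta {a b : ℝ} (ha : -1 < a) (hb : -1 < b) :
    wI a b (fun _ => 1) = Gamma (a + 1) * Gamma (b + 1) / Gamma (a + b + 2) := by
  have h := ProbabilityTheory.beta_eq_betaIntegralReal (a + 1) (b + 1) (by linarith) (by linarith)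
  rw [ProbabilityTheory.beta, show a + 1 + (b + 1) = a + b + 2 by ring] at h
  rw [h, Complex.betaIntegral, wI]
  have : (∫ x in (0:ℝ)..1, (x:ℂ) ^ (((a + 1 : ℝ) : ℂ) - 1) * (1 - (x:ℂ)) ^ (((b + 1 : ℝ) : ℂ) - 1))
      = ∫ x in (0:ℝ)..1, (((x ^ a * (1 - x) ^ b * 1 : ℝ)) : ℂ) := by
    apply intervalIntegral.integral_congr
    intro x hx
    rw [uIcc_of_le zero_le_one] at hx
    have e1 : ((a + 1 : ℝ) : ℂ) - 1 = ((a : ℝ) : ℂ) := by push_cast; ring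
    have e2 : ((b + 1 : ℝ) : ℂ) - 1 = ((b : ℝ) : ℂ) := by push_cast; ring
    have e3 : (1 : ℂ) - (x : ℂ) = ((1 - x : ℝ) : ℂ) := by push_cast; ring
    have h1 : 0 ≤ x := hx.1
    have h2 : 0 ≤ 1 - x := by linarith [hx.2]
    simp only [e1, e2, e3]
    rw [← Complex.ofReal_cpow h1, ← Complex.ofReal_cpow h2, ← Complex.ofReal_mul, mul_one]
  rw [this, intervalIntegral.integral_ofReal, Complex.ofReal_re]

lemma wI_add {a b : ℝ} (ha : -1 < a) (hb : -1 < b) {f g : ℝ → ℝ} (hf : Continuous f)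
    (hg : Continuous g) : wI a b (fun u => f u + g u) = wI a b f + wI a b g := by
  unfold wI
  rw [← intervalIntegral.integral_add (wI_integrable ha hb hf) (wI_integrable ha hb hg)]
  congr 1; ext u; ring

lemma wI_smul (a b c : ℝ) (f : ℝ → ℝ) : wI a b (fun u => c * f u) = c * wI a b f := by
  unfold wI
  rw [← intervalIntegral.integral_const_mul]
  congr 1; ext u; ring

lemma wI_sub {a b : ℝ} (ha : -1 < a) (hb : -1 < b) {f g : ℝ → ℝ} (hf : Continuous f)
    (hg : Continuous g) : wI a b (fun u => f u - g u) = wI a b f - wI a b g := by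
  unfold wI
  rw [← intervalIntegral.integral_sub (wI_integrable ha hb hf) (wI_integrable ha hb hg)]
  congr 1; ext u; ring

lemma wI_sum {a b : ℝ} (ha : -1 < a) (hb : -1 < b) {ι : Type*} (s : Finset ι) {f : ι → ℝ → ℝ}
    (hf : ∀ i, Continuous (f i)) :
    wI a b (fun u => ∑ i ∈ s, f i u) = ∑ i ∈ s, wI a b (f i) := by
  classical
  induction s using Finset.induction_on with
  | empty => simp [wI]
  | insert i s hi ih =>
    simp only [Finset.sum_insert hi]
    rw [wI_add ha hb (hf i) (continuous_finsetSum _ fun j _ => hf j), ih]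

lemma wI_congr_ioo {a b a' b' : ℝ} {f g : ℝ → ℝ}
    (h : ∀ u ∈ Ioo (0:ℝ) 1, u ^ a * (1 - u) ^ b * f u = u ^ a' * (1 - u) ^ b' * g u) :
    wI a b f = wI a' b' g := by
  unfold wI
  rw [intervalIntegral.integral_of_le zero_le_one, intervalIntegral.integral_of_le zero_le_one,
    integral_Ioc_eq_integral_Ioo, integral_Ioc_eq_integral_Ioo]
  exact setIntegral_congr_fun measurableSet_Ioo h

lemma wI_mono {a b : ℝ} (ha : -1 < a) (hb : -1 < b) {f g : ℝ → ℝ} (hf : Continuous f)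
    (hg : Continuous g) (h : ∀ u ∈ Icc (0:ℝ) 1, f u ≤ g u) : wI a b f ≤ wI a b g := by
  unfold wI
  apply intervalIntegral.integral_mono_on zero_le_one (wI_integrable ha hb hf)
    (wI_integrable ha hb hg)
  intro u hu
  have : 0 ≤ 1 - u := by linarith [hu.2]
  have := hu.1
  exact mul_le_mul_of_nonneg_left (h u hu) (by positivity)

lemma wI_nonneg {a b : ℝ} {f : ℝ → ℝ} (h : ∀ u ∈ Icc (0:ℝ) 1, 0 ≤ f u) : 0 ≤ wI a b f := by
  unfold wI
  apply intervalIntegral.integral_nonneg zero_le_one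
  intro u hu
  have : 0 ≤ 1 - u := by linarith [hu.2]
  have := hu.1
  have := h u hu
  positivity

/-- multiply by `u` -/
lemma wI_mul_u (a b : ℝ) (f : ℝ → ℝ) : wI a b (fun u => u * f u) = wI (a + 1) b f := by
  apply wI_congr_ioo
  intro u hu
  rw [rpow_add_one hu.1.ne']; ring

lemma wI_mul_one_sub (a b : ℝ) (f : ℝ → ℝ) :
    wI a b (fun u => (1 - u) * f u) = wI a (b + 1) f := by
  apply wI_congr_ioo
  intro u hu
  rw [rpow_add_one (by linarith [hu.2] : (1 - u) ≠ 0)]; ring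

lemma wI_mul_u_pow (a b : ℝ) (k : ℕ) (f : ℝ → ℝ) :
    wI a b (fun u => u ^ k * f u) = wI (a + k) b f := by
  apply wI_congr_ioo
  intro u hu
  rw [rpow_add_natCast hu.1.ne']; ring

/-- Integration by parts. -/
lemma wI_ibp {a b : ℝ} (ha : 0 < a) (hb : 0 < b) {q q' : ℝ → ℝ} 
    (hd : ∀ u, HasDerivAt q (q' u) u) (hq' : Continuous q') :
    a * wI (a - 1) b q - b * wI a (b - 1) q + wI a b q' = 0 := by
  have hq : Continuous q := continuous_iff_continuousAt.2 fun u => (hd u).continuousAt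
  have hi1 := wI_integrable (a := a - 1) (b := b) (by linarith) (by linarith) hq
  have hi2 := wI_integrable (a := a) (b := b - 1) (by linarith) (by linarith) hq
  have hi3 := wI_integrable (a := a) (b := b) (by linarith) (by linarith) hq'
  have key := intervalIntegral.integral_eq_sub_of_hasDerivAt_of_le (a := (0:ℝ)) (b := 1)
    (f := fun u => u ^ a * (1 - u) ^ b * q u)
    (f' := fun u => a * (u ^ (a - 1) * (1 - u) ^ b * q u) - b * (u ^ a * (1 - u) ^ (b - 1) * q u)
      + u ^ a * (1 - u) ^ b * q' u) zero_le_one ?_ ?_ ?_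
  · rw [intervalIntegral.integral_add ((hi1.const_mul a).sub (hi2.const_mul b)) hi3,
      intervalIntegral.integral_sub (hi1.const_mul a) (hi2.const_mul b),
      intervalIntegral.integral_const_mul, intervalIntegral.integral_const_mul] at key
    simp only [sub_self, zero_rpow ha.ne', zero_rpow hb.ne', mul_zero, zero_mul] at key
    exact key
  · apply Continuous.continuousOn
    have h1 : Continuous fun u : ℝ => u ^ a := continuous_id.rpow_const fun _ => Or.inr ha.le
    have h2 : Continuous fun u : ℝ => (1 - u) ^ b :=
      (continuous_const.sub continuous_id).rpow_const fun _ => Or.inr hb.le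
    exact (h1.mul h2).mul hq
  · intro u hu
    have h1 : HasDerivAt (fun u : ℝ => u ^ a) (a * u ^ (a - 1)) u :=
      Real.hasDerivAt_rpow_const (Or.inl hu.1.ne')
    have h2 : HasDerivAt (fun u : ℝ => (1 - u) ^ b) (-1 * b * (1 - u) ^ (b - 1)) u :=
      ((hasDerivAt_id u).const_sub 1).rpow_const (Or.inl (by simp; linarith [hu.2]))
    refine ((h1.mul h2).mul (hd u)).congr_deriv ?_
    simp only [Pi.mul_apply]
    ring
  · exact ((hi1.const_mul a).sub (hi2.const_mul b)).add hi3

end Part1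

section Part2

open Polynomial in
/-- Unnormalized Jacobi polynomial in the variable `u = (1-x)/2`. -/
def jac (α β : ℝ) (n : ℕ) : Polynomial ℝ :=
  ∑ m ∈ Finset.range (n + 1), C ((-1) ^ m * (n.choose m : ℝ) *
    (Gamma (α + β + n + m + 1) / Gamma (α + m + 1))) * X ^ m

lemma gamma_add_nat {x : ℝ} (hx : 0 < x) (j : ℕ) :
    Gamma (x + j) = Gamma x * ∏ i ∈ Finset.range j, (x + i) := by
  induction j with
  | zero => simp
  | succ j ih =>
    rw [Finset.prod_range_succ, ← mul_assoc, ← ih]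
    push_cast
    rw [← add_assoc, Real.Gamma_add_one (by positivity)]
    ring

open Polynomial in
lemma alt_sum_eq_zero {n : ℕ} {q : Polynomial ℝ} (hq : q.natDegree < n) :
    ∑ m ∈ Finset.range (n + 1), (-1 : ℝ) ^ m * (n.choose m : ℝ) * q.eval (m : ℝ) = 0 := by
  have h := congrFun (Polynomial.fwdDiff_iter_eq_zero_of_degree_lt hq) 0
  rw [fwdDiff_iter_eq_sum_shift] at h
  simp only [Pi.zero_apply, zero_add, nsmul_eq_mul, mul_one, zsmul_eq_mul] at h
  have h2 := congrArg (fun x => (-1 : ℝ) ^ n * x) h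
  simp only [mul_zero, Finset.mul_sum] at h2
  rw [← h2]
  apply Finset.sum_congr rfl
  intro m hm
  have hm' : m ≤ n := by simpa [Nat.lt_succ_iff] using hm
  push_cast
  have : (-1 : ℝ) ^ n * (-1) ^ (n - m) = (-1) ^ m := by
    obtain ⟨k, rfl⟩ := Nat.exists_eq_add_of_le hm'
    rw [Nat.add_sub_cancel_left, pow_add, mul_assoc, ← pow_add, ← two_mul]
    simp [pow_mul]
  rw [← this]; ring

open Polynomial in
lemma jac_eval (α β : ℝ) (n : ℕ) (u : ℝ) : (jac α β n).eval u =
    ∑ m ∈ Finset.range (n + 1), ((-1) ^ m * (n.choose m : ℝ) *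
    (Gamma (α + β + n + m + 1) / Gamma (α + m + 1))) * u ^ m := by
  simp [jac, eval_finsetSum]

lemma wI_jac (α β a b : ℝ) (ha : -1 < a) (hb : -1 < b) (n : ℕ) :
    wI a b (fun u => (jac α β n).eval u) =
    ∑ m ∈ Finset.range (n + 1), ((-1) ^ m * (n.choose m : ℝ) *
    (Gamma (α + β + n + m + 1) / Gamma (α + m + 1))) *
      (Gamma (a + m + 1) * Gamma (b + 1) / Gamma (a + m + b + 2)) := by
  simp only [jac_eval]
  rw [wI_sum ha hb]
  · apply Finset.sum_congr rfl
    intro m _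
    rw [wI_smul, ← wI_beta (by have : (0:ℝ) ≤ m := by positivity
                               linarith) hb]
    congr 1
    have := wI_mul_u_pow a b m (fun _ => 1)
    simpa using this
  · intro i; fun_prop

open Polynomial in
lemma natDegree_prod_le' (s : ℝ) (j : ℕ) :
    (∏ i ∈ Finset.range j, (X + C (s + i)) : Polynomial ℝ).natDegree ≤ j := by
  refine (natDegree_prod_le _ _).trans ?_
  refine (Finset.sum_le_sum fun (i : ℕ) _ => (natDegree_X_add_C (s + (i:ℝ))).le).trans ?_
  simp

open Polynomial in
lemma jac_orth_pow {α β : ℝ} (hα : -1 < α) (hβ : -1 < β) {n k : ℕ}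
    (hk : k < n) : wI α β (fun u => (jac α β n).eval u * u ^ k) = 0 := by
  have h1 : wI α β (fun u => (jac α β n).eval u * u ^ k)
      = wI (α + k) β (fun u => (jac α β n).eval u) := by
    rw [← wI_mul_u_pow]; congr 1; ext u; ring
  have hk0 : (0:ℝ) ≤ k := by positivity
  rw [h1, wI_jac _ _ _ _ (by linarith) hβ]
  set q : Polynomial ℝ := C (Gamma (β + 1)) * ((∏ i ∈ Finset.range (n - k - 1), (X + C (α + β + k + 2 + i))) *
    (∏ i ∈ Finset.range k, (X + C (α + 1 + i)))) with hq
  have hdeg : q.natDegree < n := by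
    refine lt_of_le_of_lt (natDegree_C_mul_le _ _) ?_
    refine lt_of_le_of_lt natDegree_mul_le ?_
    have := natDegree_prod_le' (α + β + k + 2) (n - k - 1)
    have := natDegree_prod_le' (α + 1) k
    omega
  rw [← alt_sum_eq_zero hdeg]
  apply Finset.sum_congr rfl
  intro m _
  have hm0 : (0:ℝ) ≤ m := by positivity
  rw [mul_assoc]
  congr 1
  have e1 : Gamma (α + k + m + 1) = Gamma (α + m + 1) * ∏ i ∈ Finset.range k, (α + m + 1 + i) := by
    rw [← gamma_add_nat (by linarith)]; congr 1; ring
  have e2 : Gamma (α + β + n + m + 1) =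
      Gamma (α + k + m + β + 2) * ∏ i ∈ Finset.range (n - k - 1), (α + k + m + β + 2 + i) := by
    rw [← gamma_add_nat (by linarith)]; congr 1
    rw [Nat.sub_sub, Nat.cast_sub (by omega)]; push_cast; ring
  have g1 : Gamma (α + m + 1) ≠ 0 := (Gamma_pos_of_pos (by linarith)).ne'
  have g2 : Gamma (α + k + m + β + 2) ≠ 0 := (Gamma_pos_of_pos (by linarith)).ne'
  rw [e1, e2, hq]
  simp only [eval_mul, eval_C, eval_prod, eval_add, eval_X]
  have e3 : ∏ i ∈ Finset.range k, ((m:ℝ) + (α + 1 + i)) = ∏ i ∈ Finset.range k, (α + m + 1 + i) :=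
    Finset.prod_congr rfl fun i _ => by ring
  have e4 : ∏ i ∈ Finset.range (n - k - 1), ((m:ℝ) + (α + β + k + 2 + i)) =
     ∏ i ∈ Finset.range (n - k - 1), (α + k + m + β + 2 + i) :=
    Finset.prod_congr rfl fun i _ => by ring
  rw [e3, e4]
  field_simp

open Polynomial in
/-- A polynomial orthogonal (for the weight `u^a(1-u)^b`) to all of lower degree. -/
def OrthTo (a b : ℝ) (n : ℕ) (p : Polynomial ℝ) : Prop :=
  ∀ q : Polynomial ℝ, q.degree < n → wI a b (fun u => p.eval u * q.eval u) = 0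

open Polynomial in
lemma jac_orth {α β : ℝ} (hα : -1 < α) (hβ : -1 < β) (n : ℕ) :
    OrthTo α β n (jac α β n) := by
  intro q hq
  by_cases h0 : q = 0
  · simp [h0, wI]
  have hq' : q.natDegree < n := (natDegree_lt_iff_degree_lt h0).2 hq
  have : (fun u => (jac α β n).eval u * q.eval u) =
      fun u => ∑ k ∈ Finset.range n, q.coeff k * ((jac α β n).eval u * u ^ k) := by
    ext u
    rw [eval_eq_sum_range' hq', Finset.mul_sum]
    exact Finset.sum_congr rfl fun k _ => by ring
  rw [this, wI_sum hα hβ]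
  · apply Finset.sum_eq_zero
    intro k hk
    rw [wI_smul, jac_orth_pow hα hβ (Finset.mem_range.1 hk), mul_zero]
  · intro k
    have := (jac α β n).continuous
    fun_prop

open Polynomial in
lemma jac_lead_sub (α β : ℝ) (n : ℕ) : (jac α β n -
    C ((-1) ^ n * (Gamma (α + β + n + n + 1) / Gamma (α + n + 1))) * X ^ n).degree < (n : WithBot ℕ) := by
  rw [jac, Finset.sum_range_succ, Nat.choose_self, Nat.cast_one, mul_one, add_sub_cancel_right,
    ← mem_degreeLT]
  apply Submodule.sum_mem
  intro m hm
  rw [mem_degreeLT]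
  refine lt_of_le_of_lt (degree_C_mul_X_pow_le _ _) ?_
  exact_mod_cast Finset.mem_range.1 hm

lemma alt_sum_recip {z : ℝ} (hz : 0 < z) (n : ℕ) :
    ∑ m ∈ Finset.range (n + 1), (-1 : ℝ) ^ m * (n.choose m : ℝ) * (1 / (z + m)) =
      Gamma z * n.factorial / Gamma (z + n + 1) := by
  have hb : (-1:ℝ) < n := by have : (0:ℝ) ≤ n := by positivity
                             linarith
  have h := wI_beta (a := z - 1) (b := n) (by linarith) hb
  rw [sub_add_cancel, Real.Gamma_nat_eq_factorial,
    show z - 1 + (n:ℝ) + 2 = z + n + 1 by ring] at h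
  rw [← h]
  have h2 := wI_congr_ioo (a := z - 1) (b := n) (a' := z - 1) (b' := 0) (f := fun _ => 1)
    (g := fun u => ∑ m ∈ Finset.range (n + 1), ((-1 : ℝ) ^ m * (n.choose m : ℝ)) * u ^ m) ?_
  · rw [h2, wI_sum (by linarith) (by norm_num)]
    · apply Finset.sum_congr rfl
      intro m _
      have hm0 : (0:ℝ) ≤ m := by positivity
      rw [wI_smul]
      have := wI_mul_u_pow (z - 1) 0 m (fun _ => 1)
      simp only [mul_one] at this
      rw [this, wI_beta (by linarith) (by norm_num),
        show z - 1 + (m:ℝ) + 0 + 2 = (z + m) + 1 by ring, show z - 1 + (m:ℝ) + 1 = z + m by ring,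
        Real.Gamma_add_one (s := z + m) (by linarith)]
      have : z + m ≠ 0 := by linarith
      have : Gamma (z + m) ≠ 0 := (Gamma_pos_of_pos (by linarith)).ne'
      rw [zero_add, Real.Gamma_one]
      field_simp
    · intro i; fun_prop
  · intro u hu
    rw [rpow_zero, rpow_natCast]
    have : (1 - u) ^ n = ∑ m ∈ Finset.range (n + 1), ((-1 : ℝ) ^ m * (n.choose m : ℝ)) * u ^ m := by
      rw [show (1:ℝ) - u = -u + 1 by ring, add_pow]
      apply Finset.sum_congr rfl
      intro m _
      rw [neg_pow]; simp; ring
    rw [this]; ring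

open Polynomial in
lemma jac_inner_pow {α β : ℝ} (hα : -1 < α) (hβ : -1 < β) (hab : 0 < α + β + 1) (n : ℕ) :
    wI α β (fun u => (jac α β n).eval u * u ^ n) =
      (-1) ^ n * (Gamma (β + n + 1) * (Gamma (α + β + n + 1) * n.factorial /
        Gamma (α + β + 2 * n + 2))) := by
  have hn0 : (0:ℝ) ≤ n := by positivity
  have hdeg : ((1 - X) ^ n - C ((-1) ^ n) * X ^ n : Polynomial ℝ).degree < n := by
    have : ((1 - X) ^ n : Polynomial ℝ) = ∑ m ∈ Finset.range (n + 1), C ((-1) ^ m * (n.choose m : ℝ)) * X ^ m := by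
      rw [show (1:Polynomial ℝ) - X = -X + 1 by ring, add_pow]
      apply Finset.sum_congr rfl
      intro m _
      rw [neg_pow]; simp; ring
    rw [this, Finset.sum_range_succ, Nat.choose_self, Nat.cast_one, mul_one, add_sub_cancel_right,
      ← mem_degreeLT]
    apply Submodule.sum_mem
    intro m hm
    rw [mem_degreeLT]
    refine lt_of_le_of_lt (degree_C_mul_X_pow_le _ _) ?_
    exact_mod_cast Finset.mem_range.1 hm
  have h := jac_orth hα hβ n _ hdeg
  have hc := (jac α β n).continuous
  have e : (fun u => (jac α β n).eval u * ((1 - X) ^ n - C ((-1) ^ n) * X ^ n : Polynomial ℝ).eval u)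
      = fun u => (jac α β n).eval u * (1 - u) ^ n - (-1) ^ n * ((jac α β n).eval u * u ^ n) := by
    ext u; simp; ring
  rw [e, wI_sub hα hβ (by fun_prop) (by fun_prop), wI_smul] at h
  have h2 : wI α β (fun u => (jac α β n).eval u * (1 - u) ^ n) =
      wI α (β + n) (fun u => (jac α β n).eval u) := by
    apply wI_congr_ioo
    intro u hu
    rw [rpow_add_natCast (by linarith [hu.2])]; ring
  have h3 : wI α (β + n) (fun u => (jac α β n).eval u) =
      Gamma (β + n + 1) * (Gamma (α + β + n + 1) * n.factorial / Gamma (α + β + 2 * n + 2)) := by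
    rw [wI_jac _ _ _ _ hα (by linarith), show α + β + 2 * (n:ℝ) + 2 = (α + β + n + 1) + n + 1 by ring,
      ← alt_sum_recip (by linarith), Finset.mul_sum]
    apply Finset.sum_congr rfl
    intro m _
    have hm0 : (0:ℝ) ≤ m := by positivity
    have g1 : Gamma (α + m + 1) ≠ 0 := (Gamma_pos_of_pos (by linarith)).ne'
    have g2 : Gamma (α + β + n + m + 1) ≠ 0 := (Gamma_pos_of_pos (by linarith)).ne'
    rw [show α + (m:ℝ) + (β + n) + 2 = (α + β + n + m + 1) + 1 by ring,
      Real.Gamma_add_one (s := α + β + n + m + 1) (by linarith)]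
    have : α + β + n + m + 1 ≠ 0 := by linarith
    have : α + β + n + 1 + m ≠ 0 := by linarith
    field_simp
    ring
  rw [h2, h3] at h
  have h4 : ((-1:ℝ) ^ n) * (-1) ^ n = 1 := by rw [← pow_add, ← two_mul]; simp [pow_mul]
  linear_combination (-(-1:ℝ)^n) * h - (wI α β (fun u => (jac α β n).eval u * u ^ n)) * h4

open Polynomial in
lemma jac_norm {α β : ℝ} (hα : -1 < α) (hβ : -1 < β) (hab : 0 < α + β + 1) (n : ℕ) :
    wI α β (fun u => (jac α β n).eval u * (jac α β n).eval u) =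
      n.factorial * Gamma (β + n + 1) * Gamma (α + β + n + 1) /
        (Gamma (α + n + 1) * (α + β + 2 * n + 1)) := by
  have hn0 : (0:ℝ) ≤ n := by positivity
  have h := jac_orth hα hβ n _ (jac_lead_sub α β n)
  have hc := (jac α β n).continuous
  set a := (-1) ^ n * (Gamma (α + β + n + n + 1) / Gamma (α + n + 1)) with ha
  have e : (fun u => (jac α β n).eval u * (jac α β n - C a * X ^ n : Polynomial ℝ).eval u)
      = fun u => (jac α β n).eval u * (jac α β n).eval u - a * ((jac α β n).eval u * u ^ n) := by
    ext u; simp; ring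
  rw [e, wI_sub hα hβ (by fun_prop) (by fun_prop), wI_smul, jac_inner_pow hα hβ hab] at h
  have h4 : ((-1:ℝ) ^ n) * (-1) ^ n = 1 := by rw [← pow_add, ← two_mul]; simp [pow_mul]
  rw [sub_eq_zero.1 h, ha]
  have g1 : Gamma (α + n + 1) ≠ 0 := (Gamma_pos_of_pos (by linarith)).ne'
  have g2 : Gamma (α + β + 2 * n + 1) ≠ 0 := (Gamma_pos_of_pos (by linarith)).ne'
  rw [show α + β + 2 * (n:ℝ) + 2 = (α + β + 2 * n + 1) + 1 by ring,
      Real.Gamma_add_one (s := α + β + 2 * n + 1) (by linarith), show α + β + n + (n:ℝ) + 1 = α + β + 2 * n + 1 by ring]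
  have : α + β + 2 * n + 1 ≠ 0 := by linarith
  rw [show ∀ x y z : ℝ, ((-1:ℝ) ^ n * x) * ((-1) ^ n * y) = ((-1:ℝ) ^ n * (-1) ^ n) * (x * y) from
    fun x y z => by ring, h4]
  field_simp
  exact 0

end Part2

section Part3

/-- normalization coefficient -/
def jcoef (α β : ℝ) (n : ℕ) : ℝ :=
  Real.sqrt ((2 * (n : ℝ) + α + β + 1) / 2 ^ (α + β + 1) *
      (Real.Gamma ((n : ℝ) + α + β + 1) * (n.factorial : ℝ) /
        (Real.Gamma ((n : ℝ) + α + 1) * Real.Gamma ((n : ℝ) + β + 1)))) *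
    (Real.Gamma (α + n + 1) / ((n.factorial : ℝ) * Real.Gamma (α + β + n + 1)))

open Polynomial in
/-- Orthonormal Jacobi polynomial in `u=(1-x)/2`. -/
def jp (α β : ℝ) (n : ℕ) : Polynomial ℝ := C (jcoef α β n) * jac α β n

lemma jacobiP_eq (α β : ℝ) (n : ℕ) (x : ℝ) : jacobiP α β n x = (jp α β n).eval ((1 - x) / 2) := by
  rw [jp, Polynomial.eval_mul, Polynomial.eval_C, jac_eval, jacobiP, jcoef]
  congr 1
  apply Finset.sum_congr rfl
  intro m _
  rw [show (x - 1) / 2 = (-1) * ((1 - x) / 2) by ring, mul_pow]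
  ring

lemma jcoef_sq {α β : ℝ} (hα : -1 < α) (hβ : -1 < β) (hab : 0 < α + β + 1) (n : ℕ) :
    jcoef α β n ^ 2 = (2 * (n : ℝ) + α + β + 1) / 2 ^ (α + β + 1) *
      (Gamma (α + n + 1) / (n.factorial * Gamma (β + n + 1) * Gamma (α + β + n + 1))) := by
  have hn0 : (0:ℝ) ≤ n := by positivity
  have g1 : 0 < Gamma (α + n + 1) := (Gamma_pos_of_pos (by linarith))
  have g2 : 0 < Gamma (β + n + 1) := (Gamma_pos_of_pos (by linarith))
  have g3 : 0 < Gamma (α + β + n + 1) := (Gamma_pos_of_pos (by linarith))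
  have g4 : (0:ℝ) < n.factorial := by positivity
  have h5 : (0:ℝ) < 2 ^ (α + β + 1) := by positivity
  have h6 : 0 < 2 * (n : ℝ) + α + β + 1 := by linarith
  rw [jcoef, mul_pow, show (n:ℝ) + α + β + 1 = α + β + n + 1 by ring,
    show (n:ℝ) + α + 1 = α + n + 1 by ring, show (n:ℝ) + β + 1 = β + n + 1 by ring,
    Real.sq_sqrt (by positivity)]
  field_simp

lemma jcoef_pos {α β : ℝ} (hα : -1 < α) (hβ : -1 < β) (hab : 0 < α + β + 1) (n : ℕ) :
    0 < jcoef α β n := by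
  have hn0 : (0:ℝ) ≤ n := by positivity
  have g1 : 0 < Gamma (α + n + 1) := (Gamma_pos_of_pos (by linarith))
  have g2 : 0 < Gamma (β + n + 1) := (Gamma_pos_of_pos (by linarith))
  have g3 : 0 < Gamma (α + β + n + 1) := (Gamma_pos_of_pos (by linarith))
  have g4 : (0:ℝ) < n.factorial := by positivity
  have h5 : (0:ℝ) < 2 ^ (α + β + 1) := by positivity
  have h6 : 0 < 2 * (n : ℝ) + α + β + 1 := by linarith
  rw [jcoef, show (n:ℝ) + α + β + 1 = α + β + n + 1 by ring,
    show (n:ℝ) + α + 1 = α + n + 1 by ring, show (n:ℝ) + β + 1 = β + n + 1 by ring]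
  have := Real.sqrt_pos.2 (show 0 < (2 * (n : ℝ) + α + β + 1) / 2 ^ (α + β + 1) *
    (Gamma (α + β + n + 1) * n.factorial / (Gamma (α + n + 1) * Gamma (β + n + 1))) by positivity)
  positivity

lemma jac_zero (α β : ℝ) (n : ℕ) :
    (jac α β n).eval 0 = Gamma (α + β + n + 1) / Gamma (α + 1) := by
  rw [jac_eval, Finset.sum_eq_single 0]
  · simp
  · intro m _ hm; simp [hm]
  · simp

lemma jp_orth {α β : ℝ} (hα : -1 < α) (hβ : -1 < β) (n : ℕ) :
    OrthTo α β n (jp α β n) := by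
  intro q hq
  have := jac_orth hα hβ n q hq
  simp only [jp, Polynomial.eval_mul, Polynomial.eval_C, mul_assoc]
  rw [wI_smul, this, mul_zero]

lemma jp_norm {α β : ℝ} (hα : -1 < α) (hβ : -1 < β) (hab : 0 < α + β + 1) (n : ℕ) :
    wI α β (fun u => (jp α β n).eval u * (jp α β n).eval u) = 1 / 2 ^ (α + β + 1) := by
  have e : (fun u => (jp α β n).eval u * (jp α β n).eval u) =
      fun u => jcoef α β n ^ 2 * ((jac α β n).eval u * (jac α β n).eval u) := by
    ext u; simp [jp]; ring
  have hn0 : (0:ℝ) ≤ n := by positivity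
  have g1 : Gamma (α + n + 1) ≠ 0 := (Gamma_pos_of_pos (by linarith)).ne'
  have g2 : Gamma (β + n + 1) ≠ 0 := (Gamma_pos_of_pos (by linarith)).ne'
  have g3 : Gamma (α + β + n + 1) ≠ 0 := (Gamma_pos_of_pos (by linarith)).ne'
  have g4 : (n.factorial : ℝ) ≠ 0 := by positivity
  have h5 : (2 : ℝ) ^ (α + β + 1) ≠ 0 := by positivity
  have h6 : α + β + 2 * n + 1 ≠ 0 := by linarith
  rw [e, wI_smul, jac_norm hα hβ hab, jcoef_sq hα hβ hab,
    show 2 * (n:ℝ) + α + β + 1 = α + β + 2 * n + 1 by ring]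
  field_simp

open Polynomial in
lemma jp_decomp {α β : ℝ} (hα : -1 < α) (hβ : -1 < β) (hab : 0 < α + β + 1) (n : ℕ)
    (q : Polynomial ℝ) (hq : q.degree < ((n + 1 : ℕ) : WithBot ℕ)) :
    ∃ c : ℝ, (q - C c * jp α β n).degree < (n : WithBot ℕ) := by
  have hn0 : (0:ℝ) ≤ n := by positivity
  have h1 := jac_lead_sub α β n
  set a := (-1) ^ n * (Gamma (α + β + n + n + 1) / Gamma (α + n + 1)) with ha
  have ha0 : a ≠ 0 := by
    have g1 : Gamma (α + n + 1) ≠ 0 := (Gamma_pos_of_pos (by linarith)).ne'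
    have g3 : Gamma (α + β + n + n + 1) ≠ 0 := (Gamma_pos_of_pos (by linarith)).ne'
    rw [ha]; exact mul_ne_zero (by simp) (div_ne_zero g3 g1)
  have hj := (jcoef_pos hα hβ hab n).ne'
  refine ⟨q.coeff n / (a * jcoef α β n), ?_⟩
  rw [degree_lt_iff_coeff_zero] at *
  intro m hm
  have h1m := h1 m hm
  simp only [coeff_sub, coeff_C_mul, coeff_X_pow, jp] at *
  rcases hm.lt_or_eq with hlt | rfl
  · have h2 := hq m (by omega)
    rw [if_neg (by omega)] at h1m
    have : (jac α β n).coeff m = 0 := by linarith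
    rw [this, h2]; simp
  · simp only [if_true] at h1m
    have : (jac α β n).coeff n = a := by linarith
    rw [this]; field_simp; ring

open Polynomial in
lemma jp_degree (α β : ℝ) (n : ℕ) : (jp α β n).natDegree ≤ n := by
  refine (natDegree_C_mul_le _ _).trans ?_
  rw [jac]
  apply natDegree_sum_le_of_forall_le
  intro m hm
  refine (natDegree_C_mul_X_pow_le _ _).trans ?_
  have := Finset.mem_range.1 hm
  omega

open Polynomial in
/-- the kernel polynomial in `u` -/
def jK (α β : ℝ) (n : ℕ) : Polynomial ℝ :=
  ∑ l ∈ Finset.range n, C ((jp α β l).eval 0) * jp α β l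

lemma jacobiK_eq (α β : ℝ) (n : ℕ) (x : ℝ) : jacobiK α β n x = (jK α β n).eval ((1 - x) / 2) := by
  simp [jacobiK, jK, Polynomial.eval_finsetSum, jacobiP_eq]

open Polynomial in
lemma jK_degree (α β : ℝ) (n : ℕ) : (jK α β n).degree < (n : WithBot ℕ) := by
  rw [jK, ← mem_degreeLT]
  apply Submodule.sum_mem
  intro m hm
  rw [mem_degreeLT]
  refine lt_of_le_of_lt (degree_le_of_natDegree_le
    ((natDegree_C_mul_le _ _).trans (jp_degree α β m))) ?_
  exact_mod_cast Finset.mem_range.1 hm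

open Polynomial in
lemma jK_repro {α β : ℝ} (hα : -1 < α) (hβ : -1 < β) (hab : 0 < α + β + 1) (n : ℕ) :
    ∀ q : Polynomial ℝ, q.degree < (n : WithBot ℕ) →
    wI α β (fun u => (jK α β n).eval u * q.eval u) = 1 / 2 ^ (α + β + 1) * q.eval 0 := by
  induction n with
  | zero =>
    intro q hq
    have : q = 0 := by simpa using hq
    simp [this, wI]
  | succ n ih =>
    intro q hq
    obtain ⟨c, hc⟩ := jp_decomp hα hβ hab n q hq
    set q' := q - C c * jp α β n with hq'
    have hqq : q = q' + C c * jp α β n := by rw [hq']; ring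
    have e : (fun u => (jK α β (n + 1)).eval u * q.eval u) = fun u =>
        ((jK α β n).eval u * q'.eval u + c * ((jp α β n).eval u * (jK α β n).eval u)) +
        ((jp α β n).eval 0 * ((jp α β n).eval u * q'.eval u) +
        (c * (jp α β n).eval 0) * ((jp α β n).eval u * (jp α β n).eval u)) := by
      ext u
      rw [hqq, jK, Finset.sum_range_succ, ← jK]
      simp only [eval_add, eval_mul, eval_C]
      ring
    have c1 := (jp α β n).continuous
    have c2 := (jK α β n).continuous
    have c3 := q'.continuous
    rw [e, wI_add hα hβ (by fun_prop) (by fun_prop), wI_add hα hβ (by fun_prop) (by fun_prop),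
      wI_add hα hβ (by fun_prop) (by fun_prop), wI_smul, wI_smul, wI_smul, ih q' hc,
      jp_orth hα hβ n _ hc, jp_orth hα hβ n _ (jK_degree α β n), jp_norm hα hβ hab, hqq]
    simp only [eval_add, eval_mul, eval_C]
    ring

open Polynomial in
lemma coeff_X_mul_deriv (p : Polynomial ℝ) (m : ℕ) :
    (X * derivative p).coeff m = m * p.coeff m := by
  cases m with
  | zero => simp
  | succ m => rw [coeff_X_mul, coeff_derivative]; push_cast; ring

open Polynomial in
lemma lead1 {N : ℕ} {p : Polynomial ℝ} (hp : p.natDegree ≤ N) :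
    (X * derivative p - C (N:ℝ) * p).degree < (N : WithBot ℕ) := by
  rw [degree_lt_iff_coeff_zero]
  intro m hm
  rw [coeff_sub, coeff_X_mul_deriv, coeff_C_mul]
  rcases hm.lt_or_eq with hlt | rfl
  · rw [coeff_eq_zero_of_natDegree_lt (by omega)]; simp
  · ring

open Polynomial in
lemma lead0 {N : ℕ} (hN : 1 ≤ N) {p : Polynomial ℝ} (hp : p.natDegree ≤ N) :
    (derivative p).degree < (N : WithBot ℕ) := by
  rw [degree_lt_iff_coeff_zero]
  intro m hm
  rw [coeff_derivative, coeff_eq_zero_of_natDegree_lt (by omega)]; simp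

open Polynomial in
lemma lead2 {N : ℕ} {p : Polynomial ℝ} (hp : p.natDegree ≤ N) :
    (X * (X * derivative (derivative p)) - C ((N:ℝ) * (N - 1)) * p).degree < (N : WithBot ℕ) := by
  rw [degree_lt_iff_coeff_zero]
  intro m hm
  have e : X * (X * derivative (derivative p)) =
      X * derivative (X * derivative p) - X * derivative p := by
    simp [derivative_mul]; ring
  rw [e, coeff_sub, coeff_sub, coeff_X_mul_deriv, coeff_X_mul_deriv, coeff_C_mul]
  rcases hm.lt_or_eq with hlt | rfl
  · rw [coeff_eq_zero_of_natDegree_lt (by omega)]; simp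
  · ring

open Polynomial in
lemma lead3 {N : ℕ} (hN : 1 ≤ N) {p : Polynomial ℝ} (hp : p.natDegree ≤ N) :
    (X * derivative (derivative p)).degree < (N : WithBot ℕ) := by
  rw [degree_lt_iff_coeff_zero]
  intro m hm
  rw [coeff_X_mul_deriv, coeff_derivative, coeff_eq_zero_of_natDegree_lt (by omega)]; simp

open Polynomial in
/-- replace a factor modulo lower degree -/
lemma orth_mod {a b : ℝ} (ha : -1 < a) (hb : -1 < b) {N : ℕ} {p q : Polynomial ℝ} {c : ℝ}
    (ho : OrthTo a b N p) (h : (q - C c * p).degree < (N : WithBot ℕ)) :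
    wI a b (fun u => p.eval u * q.eval u) = c * wI a b (fun u => p.eval u * p.eval u) := by
  have h1 := ho _ h
  have c1 := p.continuous
  have c2 := q.continuous
  have e : (fun u => p.eval u * (q - C c * p).eval u) =
    fun u => p.eval u * q.eval u - c * (p.eval u * p.eval u) := by ext u; simp; ring
  rw [e, wI_sub ha hb (by fun_prop) (by fun_prop), wI_smul] at h1
  linarith

open Polynomial in
lemma orth_I {a b : ℝ} (ha : 0 < a) (hb : -1 < b) {N : ℕ} (hN : 1 ≤ N) {p : Polynomial ℝ}
    (ho : OrthTo a b N p) (hp : p.natDegree ≤ N) :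
    a * wI (a - 1) (b + 1) (fun u => p.eval u * p.eval u) =
      (2 * N + b + 1) * wI a b (fun u => p.eval u * p.eval u) := by
  have h := wI_ibp ha (by linarith : 0 < b + 1) (q := fun u => p.eval u * p.eval u)
    (q' := fun u => 2 * (p.eval u * (derivative p).eval u))
    (fun u => ((p.hasDerivAt u).mul (p.hasDerivAt u)).congr_deriv (by ring))
    (by have := p.continuous
        have := (derivative p).continuous
        fun_prop)
  rw [add_sub_cancel_right, wI_smul,
    ← wI_mul_one_sub a b (fun u => p.eval u * (derivative p).eval u)] at h
  have e : (fun u => (1 - u) * (p.eval u * (derivative p).eval u)) =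
      fun u => p.eval u * (derivative p - X * derivative p).eval u := by ext u; simp; ring
  rw [e, orth_mod (q := derivative p - X * derivative p) (c := -(N:ℝ)) (by linarith) hb ho] at h
  · linarith
  · have : derivative p - X * derivative p - C (-(N:ℝ)) * p =
      derivative p - (X * derivative p - C (N:ℝ) * p) := by simp; ring
    rw [this]
    exact lt_of_le_of_lt (degree_sub_le _ _) (max_lt (lead0 hN hp) (lead1 hp))

lemma orth_I' {a b : ℝ} (ha : 0 < a) (hb : -1 < b) {f : ℝ → ℝ} (hf : Continuous f) :
    wI (a - 1) b f = wI (a - 1) (b + 1) f + wI a b f := by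
  have h1 := wI_mul_one_sub (a - 1) b f
  have h2 := wI_mul_u (a - 1) b f
  rw [sub_add_cancel] at h2
  rw [← h1, ← h2, ← wI_add (by linarith) hb (by fun_prop) (by fun_prop)]
  congr 1; ext u; ring

open Polynomial in
lemma orth_deriv {a b : ℝ} (ha : -1 < a) (hb : -1 < b) {N : ℕ} {p : Polynomial ℝ}
    (ho : OrthTo a b N p) :
    OrthTo (a + 1) (b + 1) (N - 1) (derivative p) := by
  intro q hq
  have hdX : ∀ q : Polynomial ℝ, q.degree < ((N - 1 : ℕ) : WithBot ℕ) →
      (X * q).degree < (N : WithBot ℕ) ∧ q.degree < (N : WithBot ℕ) := by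
    intro q hq
    rw [degree_lt_iff_coeff_zero] at hq
    rw [degree_lt_iff_coeff_zero, degree_lt_iff_coeff_zero]
    refine ⟨fun m hm => ?_, fun m hm => hq m (by omega)⟩
    cases m with
    | zero => simp
    | succ m => rw [coeff_X_mul]; exact hq m (by omega)
  have h := wI_ibp (by linarith : 0 < a + 1) (by linarith : 0 < b + 1)
    (q := fun u => p.eval u * q.eval u)
    (q' := fun u => (derivative p).eval u * q.eval u + p.eval u * (derivative q).eval u)
    (fun u => ((p.hasDerivAt u).mul (q.hasDerivAt u)).congr_deriv (by ring))
    (by have := p.continuous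
        have := q.continuous
        have := (derivative q).continuous
        have := (derivative p).continuous
        fun_prop)
  have c1 := p.continuous
  have c2 := q.continuous
  have c3 := (derivative q).continuous
  have c4 := (derivative p).continuous
  rw [wI_add (by linarith) (by linarith) (by fun_prop) (by fun_prop), add_sub_cancel_right,
    add_sub_cancel_right] at h
  have hd' : (derivative q).degree < ((N - 1 : ℕ) : WithBot ℕ) :=
    lt_of_le_of_lt degree_derivative_le hq
  have t1 : wI a (b + 1) (fun u => p.eval u * q.eval u) = 0 := by
    rw [← wI_mul_one_sub, ← ho (q - X * q) (lt_of_le_of_lt (degree_sub_le _ _)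
      (max_lt (hdX q hq).2 (hdX q hq).1))]
    congr 1; ext u; simp; ring
  have t2 : wI (a + 1) b (fun u => p.eval u * q.eval u) = 0 := by
    rw [← wI_mul_u, ← ho (X * q) (hdX q hq).1]
    congr 1; ext u; simp; ring
  have hq1 : (X * derivative q).degree < ((N - 1 : ℕ) : WithBot ℕ) := by
    rw [degree_lt_iff_coeff_zero] at hq ⊢
    intro m hm
    rw [coeff_X_mul_deriv, hq m hm, mul_zero]
  have t3 : wI (a + 1) (b + 1) (fun u => p.eval u * (derivative q).eval u) = 0 := by
    rw [← wI_mul_one_sub, ← wI_mul_u, ← ho (X * derivative q - X * (X * derivative q))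
      (lt_of_le_of_lt (degree_sub_le _ _)
      (max_lt (hdX _ hd').1 (hdX _ hq1).1))]
    congr 1; ext u; simp; ring
  rw [t1, t2, t3] at h
  linarith

open Polynomial in
lemma orth_energy {a b : ℝ} (ha : -1 < a) (hb : -1 < b) {N : ℕ} (hN : 1 ≤ N) {p : Polynomial ℝ}
    (ho : OrthTo a b N p) (hp : p.natDegree ≤ N) :
    wI (a + 1) (b + 1) (fun u => (derivative p).eval u * (derivative p).eval u) =
      N * (N + a + b + 1) * wI a b (fun u => p.eval u * p.eval u) := by
  set p' := derivative p with hp'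
  have c1 := p.continuous
  have c2 := p'.continuous
  have c3 := (derivative p').continuous
  have h := wI_ibp (by linarith : 0 < a + 1) (by linarith : 0 < b + 1)
    (q := fun u => p.eval u * p'.eval u)
    (q' := fun u => p'.eval u * p'.eval u + p.eval u * (derivative p').eval u)
    (fun u => ((p.hasDerivAt u).mul (p'.hasDerivAt u)).congr_deriv (by ring))
    (by fun_prop)
  rw [wI_add (by linarith) (by linarith) (by fun_prop) (by fun_prop), add_sub_cancel_right,
    add_sub_cancel_right] at h
  have t1 : wI a (b + 1) (fun u => p.eval u * p'.eval u) =
      -(N:ℝ) * wI a b (fun u => p.eval u * p.eval u) := by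
    rw [← wI_mul_one_sub, ← orth_mod (q := p' - X * p') ha hb ho]
    · congr 1; ext u; simp; ring
    · have : p' - X * p' - C (-(N:ℝ)) * p = p' - (X * p' - C (N:ℝ) * p) := by simp; ring
      rw [this]
      exact lt_of_le_of_lt (degree_sub_le _ _) (max_lt (lead0 hN hp) (lead1 hp))
  have t2 : wI (a + 1) b (fun u => p.eval u * p'.eval u) =
      (N:ℝ) * wI a b (fun u => p.eval u * p.eval u) := by
    rw [← wI_mul_u, ← orth_mod (q := X * p') ha hb ho]
    · congr 1; ext u; simp; ring
    · exact lead1 hp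
  have t3 : wI (a + 1) (b + 1) (fun u => p.eval u * (derivative p').eval u) =
      -((N:ℝ) * (N - 1)) * wI a b (fun u => p.eval u * p.eval u) := by
    rw [← wI_mul_one_sub, ← wI_mul_u,
      ← orth_mod (q := X * derivative p' - X * (X * derivative p')) ha hb ho]
    · congr 1; ext u; simp; ring
    · have : X * derivative p' - X * (X * derivative p') - C (-((N:ℝ) * (N - 1))) * p =
        X * derivative p' - (X * (X * derivative p') - C ((N:ℝ) * (N - 1)) * p) := by
          simp; ring
      rw [this]
      exact lt_of_le_of_lt (degree_sub_le _ _) (max_lt (lead3 hN hp) (lead2 hp))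
  rw [t1, t2, t3] at h
  linarith

end Part3

section Part4

set_option maxHeartbeats 1000000 in
open Polynomial in
lemma orth_J {a b : ℝ} (ha : 1 < a) (hb : -1 < b) {N : ℕ} (hN : 2 ≤ N) {p : Polynomial ℝ}
    (ho : OrthTo a b N p) (hp : p.natDegree ≤ N) {n : ℝ} (hn : 1 ≤ n) (hba : b + 2 ≤ a)
    (habN : a + b + 1 ≤ N) (hNn : N ≤ 6 * n * (a - 1)) :
    wI (a - 2) (b + 1) (fun u => p.eval u * p.eval u) ≤
      580 * n ^ 2 * wI (a - 1) (b + 1) (fun u => p.eval u * p.eval u) := by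
  have c1 := p.continuous
  have c2 := (derivative p).continuous
  set J := wI (a - 2) (b + 1) (fun u => p.eval u * p.eval u) with hJ
  set I := wI (a - 1) (b + 1) (fun u => p.eval u * p.eval u) with hI
  set H := wI a b (fun u => p.eval u * p.eval u) with hH
  set E := wI a (b + 1) (fun u => (derivative p).eval u * (derivative p).eval u) with hE
  set F := wI (a + 1) (b + 1) (fun u => (derivative p).eval u * (derivative p).eval u) with hF
  have hNr : (2:ℝ) ≤ N := by exact_mod_cast hN
  have h1 : a * I = (2 * N + b + 1) * H := orth_I (by linarith) hb (by omega) ho hp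
  have h2 : wI (a - 1) b (fun u => p.eval u * p.eval u) = I + H :=
    orth_I' (by linarith) hb (by fun_prop)
  have h3 : F = N * (N + a + b + 1) * H := orth_energy (by linarith) hb (by omega) ho hp
  have hd : (derivative p).natDegree ≤ N - 1 := (natDegree_derivative_le p).trans (by omega)
  have h4 := orth_I (a := a + 1) (b := b + 1) (by linarith) (by linarith) (by omega : 1 ≤ N - 1)
    (orth_deriv (by linarith) hb ho) hd
  have h5 := orth_I' (a := a + 1) (b := b + 1) (by linarith) (by linarith)
    (f := fun u => (derivative p).eval u * (derivative p).eval u) (by fun_prop)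
  rw [add_sub_cancel_right] at h4 h5
  rw [← hF, Nat.cast_sub (by omega), Nat.cast_one] at h4
  rw [← hF, ← hE] at h5
  have h6 := wI_ibp (a := a - 1) (b := b + 1) (by linarith : 0 < a - 1) (by linarith : 0 < b + 1)
    (q := fun u => p.eval u * p.eval u)
    (q' := fun u => 2 * (p.eval u * (derivative p).eval u))
    (fun u => ((p.hasDerivAt u).mul (p.hasDerivAt u)).congr_deriv (by ring))
    (by fun_prop)
  rw [add_sub_cancel_right, h2, show a - 1 - 1 = a - 2 by ring, ← hJ] at h6
  have ha1 : 0 < a - 1 := by linarith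
  have h7 : -wI (a - 1) (b + 1) (fun u => 2 * (p.eval u * (derivative p).eval u)) ≤
      (a - 1) / 2 * J + 2 / (a - 1) * E := by
    have e1 : -wI (a - 1) (b + 1) (fun u => 2 * (p.eval u * (derivative p).eval u)) =
        wI (a - 2) (b + 1) (fun u => (-1) * (u * (2 * (p.eval u * (derivative p).eval u)))) := by
      rw [wI_smul (a - 2), wI_mul_u, show a - 2 + 1 = a - 1 by ring]; ring
    have e2 : E = wI (a - 2) (b + 1)
        (fun u => u ^ 2 * ((derivative p).eval u * (derivative p).eval u)) := by
      rw [wI_mul_u_pow, hE]; congr 1; push_cast; ring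
    rw [e1, e2, hJ, ← wI_smul, ← wI_smul, ← wI_add (by linarith) (by linarith) (by fun_prop)
      (by fun_prop)]
    apply wI_mono (by linarith) (by linarith) (by fun_prop) (by fun_prop)
    intro u _
    have : 0 ≤ 2 / (a - 1) * (((a - 1) / 2) * p.eval u + u * (derivative p).eval u) ^ 2 := by
      positivity
    have e : 2 / (a - 1) * (((a - 1) / 2) * p.eval u + u * (derivative p).eval u) ^ 2 =
      (a - 1) / 2 * (p.eval u * p.eval u) + 2 / (a - 1) * (u ^ 2 * ((derivative p).eval u *
        (derivative p).eval u)) + 2 * u * (p.eval u * (derivative p).eval u) := by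
      field_simp; ring
    linarith
  have hI0 : 0 ≤ I := wI_nonneg fun u _ => mul_self_nonneg _
  have hH0 : 0 ≤ H := wI_nonneg fun u _ => mul_self_nonneg _
  have hF0 : 0 ≤ F := wI_nonneg fun u _ => mul_self_nonneg _
  have hHI : H ≤ I := by
    by_contra hc
    push Not at hc
    nlinarith
  have hE1 : E ≤ 4 * N ^ 2 * I := by
    have e : (a + 1) * E = (2 * N + b + a + 1) * F := by rw [h5, mul_add, h4]; ring
    have e3 : (a + 1) * E * (2 * N + b + 1) = (2 * N + b + a + 1) * (N * (N + a + b + 1)) * (a * I) := by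
      rw [e, h3, h1]; ring
    have b1 : (2 * N + b + a + 1) * (N * (N + a + b + 1)) ≤ (2 * (2 * N + b + 1)) * (N * (2 * N)) := by
      apply mul_le_mul (by linarith) _ (by nlinarith) (by linarith)
      apply mul_le_mul_of_nonneg_left (by linarith) (by linarith)
    have b2 : (a + 1) * E * (2 * N + b + 1) ≤ (2 * (2 * N + b + 1)) * (N * (2 * N)) * ((a + 1) * I) := by
      rw [e3]
      apply mul_le_mul b1 _ (by positivity) _
      · nlinarith
      · apply mul_nonneg (by linarith) (by positivity)
    have b3 : 0 < (a + 1) * (2 * N + b + 1) := by apply mul_pos <;> linarith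
    have : (a + 1) * (2 * N + b + 1) * E ≤ (a + 1) * (2 * N + b + 1) * (4 * N ^ 2 * I) := by
      have e5 : (a + 1) * E * (2 * N + b + 1) = (a + 1) * (2 * N + b + 1) * E := by ring
      have e6 : (2 * (2 * N + b + 1)) * (N * (2 * N)) * ((a + 1) * I) =
        (a + 1) * (2 * N + b + 1) * (4 * N ^ 2 * I) := by ring
      rw [← e5, ← e6]; exact b2
    exact le_of_mul_le_mul_left this b3
  have h8 : (a - 1) / 2 * J ≤ (b + 1) * (I + H) + 2 / (a - 1) * E := by linarith
  have h9 : (a - 1) / 2 * J ≤ (a - 1) * (2 * I) + 2 / (a - 1) * (4 * N ^ 2 * I) := by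
    refine h8.trans (add_le_add ?_ ?_)
    · apply mul_le_mul (by linarith) (by linarith) (by linarith) (by linarith)
    · apply mul_le_mul_of_nonneg_left hE1 (by positivity)
  have h10 : (4:ℝ) * N ^ 2 * I ≤ 4 * (36 * n ^ 2 * (a - 1) ^ 2) * I := by
    have : (N:ℝ) ^ 2 ≤ (6 * n * (a - 1)) ^ 2 := by gcongr
    have e : (6 * n * (a - 1)) ^ 2 = 36 * n ^ 2 * (a - 1) ^ 2 := by ring
    rw [e] at this
    apply mul_le_mul_of_nonneg_right (by linarith) hI0
  have h11 : (a - 1) / 2 * J ≤ (a - 1) / 2 * (580 * n ^ 2 * I) := by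
    refine h9.trans ?_
    have : 2 / (a - 1) * (4 * N ^ 2 * I) ≤ 2 / (a - 1) * (4 * (36 * n ^ 2 * (a - 1) ^ 2) * I) :=
      mul_le_mul_of_nonneg_left h10 (by positivity)
    have e : 2 / (a - 1) * (4 * (36 * n ^ 2 * (a - 1) ^ 2) * I) = (a - 1) / 2 * (576 * n ^ 2 * I) := by
      field_simp; ring
    have e4 : (a - 1) * (2 * I) ≤ (a - 1) / 2 * (4 * n ^ 2 * I) := by
      have h1n : 1 ≤ n ^ 2 := one_le_pow₀ hn
      have : I ≤ n ^ 2 * I := le_mul_of_one_le_left hI0 h1n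
      have := mul_le_mul_of_nonneg_left this (by linarith : 0 ≤ 2 * (a - 1))
      linarith
    linarith
  exact le_of_mul_le_mul_left h11 (by positivity)

end Part4

section Part5

lemma gamma_ge {x s : ℝ} (hx : 0 < x) (hs : 1 ≤ s) : x ^ s * Gamma x ≤ Gamma (x + s) := by
  have h := convexOn_log_Gamma.secant_mono (a := x) (x := x + 1) (y := x + s) (mem_Ioi.2 hx)
    (mem_Ioi.2 (by linarith)) (mem_Ioi.2 (by linarith)) (by linarith) (by linarith) (by linarith)
  have g0 := Gamma_pos_of_pos hx
  have g1 := Gamma_pos_of_pos (by linarith : 0 < x + s)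
  simp only [Function.comp_apply, add_sub_cancel_left, div_one] at h
  rw [Gamma_add_one (s := x) hx.ne', log_mul hx.ne' g0.ne', add_sub_cancel_right,
    le_div_iff₀ (by linarith)] at h
  rw [← log_le_log_iff (by positivity) g1, log_mul (by positivity) g0.ne', log_rpow hx]
  linarith

lemma gamma_le {x s : ℝ} (hx : 0 < x) (hs : 0 ≤ s) : Gamma (x + s) ≤ (x + s) ^ s * Gamma x := by
  rcases hs.eq_or_lt with rfl | hs
  · simp
  have h := convexOn_log_Gamma.slope_mono_adjacent (x := x) (y := x + s) (z := x + s + 1)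
    (mem_Ioi.2 hx) (mem_Ioi.2 (by linarith)) (by linarith) (by linarith)
  have g0 := Gamma_pos_of_pos hx
  have g1 := Gamma_pos_of_pos (by linarith : 0 < x + s)
  have h0 : 0 < x + s := by linarith
  simp only [Function.comp_apply, add_sub_cancel_left, div_one] at h
  rw [Gamma_add_one (s := x + s) h0.ne', log_mul h0.ne' g1.ne', add_sub_cancel_right,
    div_le_iff₀ hs] at h
  rw [← log_le_log_iff g1 (by positivity), log_mul (by positivity) g0.ne', log_rpow h0]
  linarith

/-- `κ_d = Γ(d)/Γ(d/2)^2` -/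
def kap (d : ℕ) : ℝ := Gamma d / Gamma ((d:ℝ) / 2) ^ 2

lemma omega_ratio {d : ℕ} (hd : 3 ≤ d) : omegaS d / omegaS (d - 1) * kap d = 2 ^ ((d:ℝ) - 1) := by
  have hd' : (3:ℝ) ≤ d := by exact_mod_cast hd
  have h := Real.Gamma_mul_Gamma_add_half ((d:ℝ)/2)
  rw [mul_div_cancel₀ _ (two_ne_zero)] at h
  have g0 : 0 < Gamma ((d:ℝ)/2) := Gamma_pos_of_pos (by linarith)
  have g1 : 0 < Gamma ((d:ℝ)/2 + 1/2) := Gamma_pos_of_pos (by linarith)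
  have g2 : 0 < Gamma (d:ℝ) := Gamma_pos_of_pos (by linarith)
  have e1 : omegaS d = 2 * Real.pi ^ ((d:ℝ)/2) * √Real.pi / Gamma ((d:ℝ)/2 + 1/2) := by
    rw [omegaS, show ((d:ℝ) + 1)/2 = d/2 + 1/2 by ring, rpow_add Real.pi_pos, sqrt_eq_rpow]; ring
  have e2 : omegaS (d - 1) = 2 * Real.pi ^ ((d:ℝ)/2) / Gamma ((d:ℝ)/2) := by
    rw [omegaS, Nat.cast_sub (by omega), Nat.cast_one, sub_add_cancel]
  have hp : 0 < Real.pi ^ ((d:ℝ)/2) := by positivity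
  have hs : 0 < √Real.pi := by positivity
  rw [e1, e2, kap]
  have e3 : (2:ℝ) ^ ((d:ℝ) - 1) * 2 ^ (1 - (d:ℝ)) = 1 := by
    rw [← rpow_add two_pos]; simp
  rw [show Gamma ((d:ℝ)/2 + 1/2) = Gamma d * 2 ^ (1 - (d:ℝ)) * √Real.pi / Gamma ((d:ℝ)/2) by
    rw [eq_div_iff g0.ne', mul_comm]; exact h]
  have h2 : (0:ℝ) < 2 ^ (1 - (d:ℝ)) := by positivity
  field_simp
  linarith

lemma kap_pos {d : ℕ} (hd : 3 ≤ d) : 0 < kap d := by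
  have hd' : (3:ℝ) ≤ d := by exact_mod_cast hd
  have g0 : 0 < Gamma ((d:ℝ)/2) := Gamma_pos_of_pos (by linarith)
  have g2 : 0 < Gamma (d:ℝ) := Gamma_pos_of_pos (by linarith)
  unfold kap; positivity

lemma sphK_one {d : ℕ} (hd : 3 ≤ d) (M : ℕ) : sphK d M 1 =
    ∑ l ∈ Finset.range M, (2 * (l:ℝ) + d - 1) * Gamma (l + d - 1) / (l.factorial * Gamma d) := by
  have hd' : (3:ℝ) ≤ d := by exact_mod_cast hd
  have g0 : 0 < Gamma ((d:ℝ)/2) := Gamma_pos_of_pos (by linarith)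
  have g2 : 0 < Gamma (d:ℝ) := Gamma_pos_of_pos (by linarith)
  have hr := omega_ratio hd
  have hk := kap_pos hd
  rw [sphK, jacobiK, Finset.mul_sum]
  apply Finset.sum_congr rfl
  intro l _
  have hl : (0:ℝ) ≤ l := by positivity
  rw [jacobiP_eq, sub_self, zero_div, jp, Polynomial.eval_mul, Polynomial.eval_C, jac_zero]
  have h := jcoef_sq (α := (d:ℝ)/2-1) (β := (d:ℝ)/2-1) (by linarith) (by linarith) (by linarith) l
  have e : jcoef ((d:ℝ)/2-1) ((d:ℝ)/2-1) l * (Gamma ((d:ℝ)/2-1 + (d/2-1) + l + 1) / Gamma ((d:ℝ)/2-1+1)) *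
     (jcoef ((d:ℝ)/2-1) ((d:ℝ)/2-1) l * (Gamma ((d:ℝ)/2-1 + (d/2-1) + l + 1) / Gamma ((d:ℝ)/2-1+1))) =
     jcoef ((d:ℝ)/2-1) ((d:ℝ)/2-1) l ^ 2 * (Gamma ((d:ℝ)/2-1 + (d/2-1) + l + 1) / Gamma ((d:ℝ)/2-1+1))^2 := by
    ring
  rw [e, h, show (d:ℝ)/2-1 + (d/2-1) + l + 1 = l + d - 1 by ring, sub_add_cancel,
    show (d:ℝ)/2-1 + (d/2-1) + 1 = d - 1 by ring, eq_div_of_mul_eq hk.ne' hr, kap,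
    show 2 * (l:ℝ) + (d/2-1) + (d/2-1) + 1 = 2 * l + d - 1 by ring]
  have g3 : 0 < Gamma ((d:ℝ)/2 - 1 + l + 1) := Gamma_pos_of_pos (by linarith)
  have g4 : 0 < Gamma ((l:ℝ) + d - 1) := Gamma_pos_of_pos (by linarith)
  have g5 : (0:ℝ) < l.factorial := by positivity
  have g6 : (0:ℝ) < 2 ^ ((d:ℝ) - 1) := by positivity
  generalize Gamma ((d:ℝ)/2 - 1 + l + 1) = G at g3 ⊢
  field_simp

lemma pow_sum_le (d M : ℕ) (hd : 1 ≤ d) :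
    d * ∑ l ∈ Finset.range M, ((l:ℝ) + d) ^ (d - 1) ≤ ((M:ℝ) + d) ^ d := by
  induction M with
  | zero => simp
  | succ M ih =>
    rw [Finset.sum_range_succ, mul_add]
    have hx : 0 < (M:ℝ) + d := by
      have : (1:ℝ) ≤ d := by exact_mod_cast hd
      positivity
    have h := one_add_mul_le_pow (a := 1 / ((M:ℝ) + d)) (by have : 0 < 1 / ((M:ℝ) + d) := by positivity
                                                            linarith) d
    have h2 := mul_le_mul_of_nonneg_left h (by positivity : 0 ≤ ((M:ℝ) + d) ^ d)
    rw [← mul_pow] at h2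
    have e1 : ((M:ℝ) + d) * (1 + 1 / ((M:ℝ) + d)) = (M + 1 : ℕ) + d := by
      push_cast; field_simp; ring
    have e2 : ((M:ℝ) + d) ^ d * (1 + d * (1 / ((M:ℝ) + d))) = ((M:ℝ) + d) ^ d + d * ((M:ℝ) + d) ^ (d - 1) := by
      have : ((M:ℝ) + d) ^ d = ((M:ℝ) + d) ^ (d - 1) * (M + d) := by
        rw [← pow_succ]; congr 1; omega
      rw [this]; field_simp
    rw [e1, e2] at h2
    linarith

lemma sphK_one_le {d : ℕ} (hd : 3 ≤ d) (M : ℕ) :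
    sphK d M 1 ≤ 2 * ((M:ℝ) + d) ^ d / (d * Gamma d) := by
  have hd' : (3:ℝ) ≤ d := by exact_mod_cast hd
  have g2 : 0 < Gamma (d:ℝ) := Gamma_pos_of_pos (by linarith)
  rw [sphK_one hd]
  have h := pow_sum_le d M (by omega)
  have : ∀ l ∈ Finset.range M, (2 * (l:ℝ) + d - 1) * Gamma (l + d - 1) / (l.factorial * Gamma d) ≤
      2 / Gamma d * ((l:ℝ) + d) ^ (d - 1) := by
    intro l _
    have hl : (0:ℝ) ≤ l := by positivity
    have h1 := gamma_le (x := (l:ℝ) + 1) (s := ((d - 2 : ℕ) : ℝ)) (by positivity) (by positivity)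
    rw [rpow_natCast, Gamma_nat_eq_factorial] at h1
    have e : (l:ℝ) + 1 + ((d - 2 : ℕ) : ℝ) = l + d - 1 := by
      rw [Nat.cast_sub (by omega)]; push_cast; ring
    rw [e] at h1
    have g5 : (0:ℝ) < l.factorial := by positivity
    have g4 : 0 < Gamma ((l:ℝ) + d - 1) := Gamma_pos_of_pos (by linarith)
    rw [div_le_iff₀ (by positivity)]
    calc (2 * (l:ℝ) + d - 1) * Gamma (l + d - 1) ≤ (2 * (l + d)) * (((l:ℝ) + d) ^ (d - 2) * l.factorial) := by
          apply mul_le_mul (by linarith) _ g4.le (by linarith)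
          refine h1.trans ?_
          gcongr
          · linarith
          · linarith
      _ = 2 / Gamma d * ((l:ℝ) + d) ^ (d - 1) * (l.factorial * Gamma d) := by
          rw [show d - 1 = (d - 2) + 1 by omega, pow_succ]; field_simp
  refine (Finset.sum_le_sum this).trans ?_
  rw [← Finset.mul_sum, div_mul_eq_mul_div, div_le_div_iff₀ g2 (by positivity)]
  nlinarith

lemma sphK_one_pos {d : ℕ} (hd : 3 ≤ d) (M : ℕ) : 0 ≤ sphK d M 1 := by
  have hd' : (3:ℝ) ≤ d := by exact_mod_cast hd
  rw [sphK_one hd]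
  apply Finset.sum_nonneg
  intro l _
  have hl : (0:ℝ) ≤ l := by positivity
  have g4 : 0 < Gamma ((l:ℝ) + d - 1) := Gamma_pos_of_pos (by linarith)
  have g2 : 0 < Gamma (d:ℝ) := Gamma_pos_of_pos (by linarith)
  have : 0 ≤ 2 * (l:ℝ) + d - 1 := by linarith
  positivity

lemma I_le {α β : ℝ} (hα : 1 ≤ α) (hβ1 : -1 < β) {N : ℕ} (hN : 1 ≤ N) :
    wI (α - 1) (β + 1) (fun u => (jac α β N).eval u * (jac α β N).eval u) ≤
      Gamma (α + 1) ^ 2 / (α * (N:ℝ) ^ (2 * α)) * (jac α β N).eval 0 ^ 2 := by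
  have hNr : (1:ℝ) ≤ N := by exact_mod_cast hN
  have hdeg : (jac α β N).natDegree ≤ N := by
    rw [jac]
    apply Polynomial.natDegree_sum_le_of_forall_le
    intro m hm
    refine (Polynomial.natDegree_C_mul_X_pow_le _ _).trans ?_
    have := Finset.mem_range.1 hm
    omega
  have h1 := orth_I (a := α) (b := β) (by linarith) hβ1 hN (jac_orth (by linarith) hβ1 N) hdeg
  rw [jac_norm (by linarith) hβ1 (by linarith) N] at h1
  have a1 := gamma_ge (x := (N:ℝ) + 1) (s := α) (by linarith) hα
  have a2 := gamma_ge (x := β + (N:ℝ) + 1) (s := α) (by linarith) hα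
  rw [Gamma_nat_eq_factorial] at a1
  rw [show (N:ℝ) + 1 + α = α + N + 1 by ring] at a1
  rw [show β + (N:ℝ) + 1 + α = α + β + N + 1 by ring] at a2
  have p1 : (N:ℝ) ^ α ≤ ((N:ℝ) + 1) ^ α := by gcongr; linarith
  have p2 : (N:ℝ) ^ α ≤ (β + (N:ℝ) + 1) ^ α := by gcongr; linarith
  have g1 : 0 < Gamma (α + N + 1) := Gamma_pos_of_pos (by linarith)
  have g2 : 0 < Gamma (β + N + 1) := Gamma_pos_of_pos (by linarith)
  have g3 : 0 < Gamma (α + β + N + 1) := Gamma_pos_of_pos (by linarith)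
  have g4 : 0 < Gamma (α + 1) := Gamma_pos_of_pos (by linarith)
  have hNp : 0 < (N:ℝ) ^ α := by positivity
  have hf : (0:ℝ) < N.factorial := by positivity
  have b1 : (N:ℝ) ^ α * N.factorial ≤ Gamma (α + N + 1) := le_trans (by gcongr) a1
  have b2 : (N:ℝ) ^ α * Gamma (β + N + 1) ≤ Gamma (α + β + N + 1) := le_trans (by gcongr) a2
  have b3 := mul_le_mul b1 b2 (by positivity) (by positivity)
  set I := wI (α - 1) (β + 1) (fun u => (jac α β N).eval u * (jac α β N).eval u)
  have e1 : I = (2 * N + β + 1) / (α + β + 2 * N + 1) * (N.factorial * Gamma (β + N + 1) *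
      Gamma (α + β + N + 1) / (Gamma (α + N + 1) * α)) := by
    have : α * I = α * ((2 * N + β + 1) / (α + β + 2 * N + 1) * (N.factorial * Gamma (β + N + 1) *
      Gamma (α + β + N + 1) / (Gamma (α + N + 1) * α))) := by
      rw [h1]; field_simp
    exact mul_left_cancel₀ (by linarith) this
  have q1 : (2 * N + β + 1) / (α + β + 2 * N + 1) ≤ 1 := by
    rw [div_le_one (by linarith)]; linarith
  have e2 : (N:ℝ) ^ (2 * α) = (N:ℝ) ^ α * (N:ℝ) ^ α := by
    rw [← rpow_add (by linarith)]; congr 1; ring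
  rw [e1, jac_zero, e2]
  have hα0 : 0 < α := by linarith
  calc _ ≤ 1 * (N.factorial * Gamma (β + N + 1) *
      Gamma (α + β + N + 1) / (Gamma (α + N + 1) * α)) := by gcongr
    _ ≤ _ := by
      rw [one_mul, div_pow, div_mul_div_comm, div_le_div_iff₀ (by positivity) (by positivity)]
      have := mul_le_mul_of_nonneg_left b3
        (by positivity : 0 ≤ α * Gamma (α + 1) ^ 2 * Gamma (α + β + N + 1))
      nlinarith

lemma dimPi_bound {d n : ℕ} (hd : 3 ≤ d) (hn : 2 ≤ n) :
    0 < dimPi d (2 * (d + 2) * n) ∧ dimPi d (2 * (d + 2) * n) ≤ (8 * exp 1 * n) ^ d := by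
  have hd' : (3:ℝ) ≤ d := by exact_mod_cast hd
  have hn' : (2:ℝ) ≤ n := by exact_mod_cast hn
  set m := 2 * (d + 2) * n with hm
  have hmr : (m:ℝ) = 2 * (d + 2) * n := by rw [hm]; push_cast; ring
  have hm1 : (1:ℝ) ≤ m := by rw [hmr]; nlinarith
  have g1 : 0 < Gamma (m:ℝ) := Gamma_pos_of_pos (by linarith)
  have g2 : 0 < Gamma ((m:ℝ) + d - 1) := Gamma_pos_of_pos (by linarith)
  have g3 : 0 < Gamma ((d:ℝ) + 1) := Gamma_pos_of_pos (by linarith)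
  have hp : 0 < 2 * (m:ℝ) + d - 2 := by linarith
  refine ⟨by unfold dimPi; positivity, ?_⟩
  have h1 := gamma_le (x := (m:ℝ)) (s := ((d - 1 : ℕ) : ℝ)) (by linarith) (by positivity)
  have e : (m:ℝ) + ((d - 1 : ℕ) : ℝ) = m + d - 1 := by
      rw [Nat.cast_sub (by omega)]; push_cast; ring
  rw [rpow_natCast, e] at h1
  have h2 : dimPi d m ≤ 2 * ((m:ℝ) + d) ^ d / d.factorial := by
    rw [dimPi, Gamma_nat_eq_factorial, div_le_div_iff₀ (by positivity) (by positivity)]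
    have : (2 * (m:ℝ) + d - 2) * Gamma (m + d - 1) ≤ (2 * (m + d)) * (((m:ℝ) + d) ^ (d - 1) * Gamma m) := by
      apply mul_le_mul (by linarith) _ g2.le (by linarith)
      refine h1.trans ?_
      gcongr
      · linarith
      · linarith
    have e3 : ((m:ℝ) + d) ^ d = ((m:ℝ) + d) ^ (d - 1) * (m + d) := by
      rw [← pow_succ]; congr 1; omega
    rw [e3]
    have hf : (0:ℝ) ≤ d.factorial := by positivity
    have := mul_le_mul_of_nonneg_right this hf
    linarith
  have h3 : (d:ℝ) ^ d / d.factorial ≤ exp 1 ^ d := by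
    have := Real.pow_div_factorial_le_exp (d:ℝ) (by positivity) d
    rwa [← exp_nat_mul, mul_one]
  have h4 : (m:ℝ) + d ≤ 4 * n * d := by rw [hmr]; nlinarith
  calc dimPi d m ≤ 2 * ((m:ℝ) + d) ^ d / d.factorial := h2
    _ ≤ 2 ^ d * (4 * n * d) ^ d / d.factorial := by
        gcongr
        calc (2:ℝ) = 2 ^ 1 := by norm_num
          _ ≤ 2 ^ d := pow_le_pow_right₀ (by norm_num) (by omega)
    _ = (8 * n) ^ d * ((d:ℝ) ^ d / d.factorial) := by
        rw [← mul_pow, mul_div_assoc', ← mul_pow]; congr 2; ring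
    _ ≤ (8 * n) ^ d * exp 1 ^ d := by gcongr
    _ = _ := by rw [← mul_pow]; congr 1; ring

lemma npow_dim {d n : ℕ} (hd : 3 ≤ d) (hn : 2 ≤ n) {r : ℝ} (hr : 0 < r) :
    (n:ℝ) ^ (-r) ≤ (8 * exp 1) ^ r * dimPi d (2 * (d + 2) * n) ^ (-(r / (d:ℝ))) := by
  obtain ⟨h0, h1⟩ := dimPi_bound hd hn
  have hd' : (3:ℝ) ≤ d := by exact_mod_cast hd
  have hn' : (2:ℝ) ≤ n := by exact_mod_cast hn
  have h2 : dimPi d (2 * (d + 2) * n) ^ (r / (d:ℝ)) ≤ (8 * exp 1 * n) ^ r := by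
    calc _ ≤ ((8 * exp 1 * n) ^ d) ^ (r / (d:ℝ)) := by gcongr
      _ = _ := by
        rw [← rpow_natCast, ← rpow_mul (by positivity)]; congr 1; field_simp
  rw [rpow_neg (by positivity), rpow_neg h0.le, ← div_eq_mul_inv, inv_eq_one_div,
    div_le_div_iff₀ (by positivity) (by positivity), one_mul, ← mul_rpow (by positivity) (by positivity)]
  exact h2

lemma key_size {d n : ℕ} {r : ℝ} (hd : 3 ≤ d) (hr : 0 < r) (hdn : (d:ℝ) ≤ n) :
    sphK d ((d + 2) * n) 1 * kap d *
      (Gamma ((d:ℝ)/2 + r + 1) ^ 2 / (((d:ℝ)/2 + r) * ((d * n : ℕ):ℝ) ^ (2 * ((d:ℝ)/2 + r)))) ≤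
      exp 3 * (1 + r) ^ (2 * r) * (n:ℝ) ^ (-(2 * r)) := by
  have hd' : (3:ℝ) ≤ d := by exact_mod_cast hd
  have hn' : (3:ℝ) ≤ n := hd'.trans hdn
  have g0 : 0 < Gamma ((d:ℝ)/2) := Gamma_pos_of_pos (by linarith)
  have g2 : 0 < Gamma (d:ℝ) := Gamma_pos_of_pos (by linarith)
  have g3 : 0 < Gamma ((d:ℝ)/2 + r + 1) := Gamma_pos_of_pos (by linarith)
  have hK := sphK_one_le hd ((d + 2) * n)
  have h1 := gamma_le (x := (d:ℝ)/2 + 1) (s := r) (by linarith) hr.le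
  rw [Gamma_add_one (s := (d:ℝ)/2) (by linarith), show (d:ℝ)/2 + 1 + r = d/2 + r + 1 by ring] at h1
  have h2 : Gamma ((d:ℝ)/2 + r + 1) ≤ (d ^ r * (1 + r) ^ r) * (d / 2 * Gamma (d / 2)) := by
    refine h1.trans ?_
    rw [← mul_rpow (by positivity) (by positivity)]
    gcongr
    nlinarith
  have hM : (((d + 2) * n : ℕ):ℝ) + d ≤ (d * n) * (1 + 3 / d) := by
    push_cast
    have : ((d:ℝ) * n) * (1 + 3 / d) = d * n + 3 * n := by field_simp
    rw [this]; linarith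
  have hM2 : ((((d + 2) * n : ℕ):ℝ) + d) ^ d ≤ (d * n) ^ d * exp 3 := by
    calc ((((d + 2) * n : ℕ):ℝ) + d) ^ d ≤ ((d * n) * (1 + 3 / d)) ^ d := by gcongr
      _ = (d * n) ^ d * (1 + 3 / d : ℝ) ^ d := by rw [mul_pow]
      _ ≤ (d * n) ^ d * (exp (3 / d)) ^ d := by
          gcongr
          have := add_one_le_exp (3 / (d:ℝ)); linarith
      _ = _ := by rw [← exp_nat_mul]; congr 2; field_simp
  have e1 : ((d * n : ℕ):ℝ) ^ (2 * ((d:ℝ)/2 + r)) = (d * n : ℝ) ^ d * (d ^ r * d ^ r) * (n:ℝ) ^ (2 * r) := by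
    push_cast
    rw [show 2 * ((d:ℝ)/2 + r) = d + 2 * r by ring, rpow_add (by positivity), rpow_natCast,
      mul_rpow (x := (d:ℝ)) (by positivity) (by positivity), two_mul, rpow_add (x := (d:ℝ)) (by positivity)]
    ring
  have e2 : (n:ℝ) ^ (-(2 * r)) = ((n:ℝ) ^ (2 * r))⁻¹ := rpow_neg (by positivity) _
  have e3 : (1 + r) ^ (2 * r) = (1 + r) ^ r * (1 + r) ^ r := by
    rw [two_mul, rpow_add (by positivity)]
  rw [e1, e2, e3]
  have hkp := kap_pos hd
  have hdr : 0 < (d:ℝ) ^ r := by positivity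
  have hnr : 0 < (n:ℝ) ^ (2 * r) := by positivity
  have hrr : 0 < (1 + r) ^ r := by positivity
  have hdn0 : 0 < (d * n : ℝ) ^ d := by positivity
  calc _ ≤ (2 * ((d * n) ^ d * exp 3) / (d * Gamma d)) * kap d *
      (((d ^ r * (1 + r) ^ r) * (d / 2 * Gamma (d / 2))) ^ 2 /
      (((d:ℝ)/2) * ((d * n : ℝ) ^ d * (d ^ r * d ^ r) * (n:ℝ) ^ (2 * r)))) := by
        have hK2 : sphK d ((d + 2) * n) 1 ≤ 2 * ((d * n) ^ d * exp 3) / (d * Gamma d) := by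
          refine hK.trans ?_
          gcongr
        gcongr
        linarith
    _ = _ := by
        unfold kap
        field_simp

end Part5

section Part6

/-- ambient Euclidean space -/
abbrev Amb (d : ℕ) := EuclideanSpace ℝ (Fin (d + 1))

lemma polar_hom {d m : ℕ} (F : Sph d → ℝ) (G : Amb d → ℝ)
    (hG : ∀ (y : Sph d) (ρ : ℝ), 0 < ρ → G (ρ • (y : Amb d)) = ρ ^ m * F y) :
    ∫ z : Amb d, G z * exp (-‖z‖ ^ 2) =
      (∫ y, F y ∂(volume : Measure (Amb d)).toSphere) * (Gamma (((d:ℝ) + 1 + m) / 2) / 2) := by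
  have hdim : Module.finrank ℝ (Amb d) = d + 1 := by simp
  have h1 : ∫ z : Amb d, G z * exp (-‖z‖ ^ 2) =
      ∫ z : ({(0)}ᶜ : Set (Amb d)), G z * exp (-‖(z : Amb d)‖ ^ 2) ∂((volume : Measure (Amb d)).comap Subtype.val) := by
    rw [integral_subtype_comap (measurableSet_singleton _).compl
      fun z : Amb d => G z * exp (-‖z‖ ^ 2), restrict_compl_singleton]
  rw [h1]
  have h2 := (volume : Measure (Amb d)).measurePreserving_homeomorphUnitSphereProd.integral_comp
        (Homeomorph.measurableEmbedding _)
        (fun q : Sph d × Ioi (0:ℝ) => F q.1 * ((q.2 : ℝ) ^ m * exp (-(q.2 : ℝ) ^ 2)))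
  have h3 : ∀ z : ({(0)}ᶜ : Set (Amb d)),
      F (homeomorphUnitSphereProd (Amb d) z).1 * (((homeomorphUnitSphereProd (Amb d) z).2 : ℝ) ^ m *
        exp (-((homeomorphUnitSphereProd (Amb d) z).2 : ℝ) ^ 2)) = G z * exp (-‖(z : Amb d)‖ ^ 2) := by
    intro z
    have hz : (z : Amb d) ≠ 0 := z.2
    have hz' : 0 < ‖(z : Amb d)‖ := norm_pos_iff.2 hz
    have e := hG (homeomorphUnitSphereProd (Amb d) z).1 ‖(z : Amb d)‖ hz'
    rw [homeomorphUnitSphereProd_apply_fst_coe, smul_inv_smul₀ hz'.ne'] at e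
    rw [homeomorphUnitSphereProd_apply_snd_coe, e]; ring
  simp_rw [h3] at h2
  rw [h2, integral_prod_mul F (fun ρ : Ioi (0:ℝ) => (ρ:ℝ) ^ m * exp (-(ρ:ℝ) ^ 2)), hdim]
  congr 1
  simp only [Measure.volumeIoiPow, ENNReal.ofReal]
  rw [integral_withDensity_eq_integral_smul,
        integral_subtype_comap measurableSet_Ioi
          fun a : ℝ => Real.toNNReal (a ^ (d + 1 - 1)) • (a ^ m * exp (-a ^ 2))]
  · have h4 := integral_rpow_mul_exp_neg_rpow (p := 2) (q := (d:ℝ) + m) two_pos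
      (by have : (0:ℝ) ≤ (d:ℝ) + m := by positivity
          linarith)
    rw [show ((d:ℝ) + m + 1) / 2 = ((d:ℝ) + 1 + m) / 2 by ring] at h4
    rw [show Gamma (((d:ℝ) + 1 + m) / 2) / 2 = 1 / 2 * Gamma (((d:ℝ) + 1 + m) / 2) by ring, ← h4]
    apply setIntegral_congr_fun measurableSet_Ioi
    intro a ha
    have ha' : (0:ℝ) < a := ha
    simp only [add_tsub_cancel_right]
    rw [NNReal.smul_def, Real.coe_toNNReal _ (pow_nonneg ha'.le _), smul_eq_mul, ← mul_assoc,
      ← pow_add]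
    congr 1
    · rw [← rpow_natCast]; push_cast; rfl
    · congr 2; rw [← rpow_natCast]; norm_num
  · exact (measurable_subtype_coe.pow_const _).real_toNNReal

/-- one dimensional gaussian moments -/
def gmom (k : ℕ) : ℝ := ∫ t : ℝ, t ^ k * exp (-t ^ 2)

lemma gmom_odd {k : ℕ} (hk : Odd k) : gmom k = 0 := by
  have h := integral_neg_eq_self (fun t : ℝ => t ^ k * exp (-t ^ 2)) volume
  simp only [hk.neg_pow, even_two.neg_pow, neg_mul, integral_neg] at h
  unfold gmom
  linarith

lemma gmom_even (l : ℕ) : gmom (2 * l) = Gamma ((l:ℝ) + 1 / 2) := by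
  have h := integral_comp_abs (f := fun t : ℝ => t ^ (2 * l) * exp (-t ^ 2))
  have e : ∀ t : ℝ, |t| ^ (2 * l) * exp (-|t| ^ 2) = t ^ (2 * l) * exp (-t ^ 2) := by
    intro t; rw [pow_mul, sq_abs, ← pow_mul]
  simp only [e] at h
  rw [gmom, h]
  have h4 := integral_rpow_mul_exp_neg_rpow (p := 2) (q := ((2 * l : ℕ) : ℝ)) two_pos
      (by have : (0:ℝ) ≤ ((2 * l : ℕ) : ℝ) := by positivity
          linarith)
  have e2 : ∫ (x : ℝ) in Ioi 0, x ^ (2 * l) * rexp (-x ^ 2) =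
      ∫ (x : ℝ) in Ioi 0, x ^ ((2 * l : ℕ) : ℝ) * rexp (-x ^ (2:ℝ)) := by
    apply setIntegral_congr_fun measurableSet_Ioi
    intro a _
    simp only [rpow_natCast, rpow_ofNat]
  rw [e2, h4]
  push_cast
  rw [show (2 * (l:ℝ) + 1) / 2 = l + 1 / 2 by ring]; ring

lemma gmom_succ (k : ℕ) : gmom (k + 2) = ((k:ℝ) + 1) / 2 * gmom k := by
  rcases Nat.even_or_odd k with hk | hk
  · obtain ⟨l, rfl⟩ := even_iff_exists_two_mul.1 hk
    rw [show 2 * l + 2 = 2 * (l + 1) by ring, gmom_even, gmom_even,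
      show ((l + 1 : ℕ) : ℝ) + 1 / 2 = (l + 1 / 2) + 1 by push_cast; ring,
      Gamma_add_one (s := (l:ℝ) + 1 / 2) (by positivity)]
    push_cast; ring
  · rw [gmom_odd hk, gmom_odd (by rw [Nat.odd_add]; exact iff_of_true hk even_two)]; simp

lemma sphere_moment {d : ℕ} (b : OrthonormalBasis (Fin (d + 1)) ℝ (Amb d)) (a : Fin (d + 1) → ℕ) :
    (∫ y : Sph d, ∏ i, (⟪b i, (y : Amb d)⟫) ^ a i ∂(volume : Measure (Amb d)).toSphere) *
      (Gamma (((d:ℝ) + 1 + (∑ i, a i : ℕ)) / 2) / 2) = ∏ i, gmom (a i) := by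
  rw [← polar_hom (fun y : Sph d => ∏ i, (⟪b i, (y : Amb d)⟫) ^ a i)
    (fun z : Amb d => ∏ i, (⟪b i, z⟫) ^ a i)]
  · have h1 := b.measurePreserving_repr_symm.integral_comp
      b.repr.symm.toHomeomorph.measurableEmbedding
      (fun z : Amb d => (∏ i, (⟪b i, z⟫) ^ a i) * exp (-‖z‖ ^ 2))
    have h2 := (PiLp.volume_preserving_toLp (Fin (d + 1))).integral_comp
      (MeasurableEquiv.toLp 2 _).measurableEmbedding
      (fun z : EuclideanSpace ℝ (Fin (d + 1)) =>
        (∏ i, (⟪b i, b.repr.symm z⟫) ^ a i) * exp (-‖b.repr.symm z‖ ^ 2))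
    rw [← h1]
    erw [← h2]
    rw [← (show _ = ∏ i, gmom (a i) from
      integral_fintype_prod_volume_eq_prod (fun i (t : ℝ) => t ^ a i * exp (-t ^ 2)))]
    congr 1
    ext z
    rw [Finset.prod_mul_distrib, ← exp_sum]
    congr 1
    · apply Finset.prod_congr rfl
      intro i _
      rw [← b.repr_apply_apply]; simp
    · simp [EuclideanSpace.norm_sq_eq]
  · intro y ρ _
    simp only [inner_smul_right, mul_pow, Finset.prod_mul_distrib]
    rw [Finset.prod_pow_eq_pow_sum]

end Part6

section Part7

lemma wI_pos_one {b : ℝ} (hb : -1 < b) : 0 < wI b b (fun _ => 1) := by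
  rw [wI_beta hb hb]
  have := Gamma_pos_of_pos (by linarith : 0 < b + 1)
  have := Gamma_pos_of_pos (by linarith : 0 < b + b + 2)
  positivity

lemma A_one {b : ℝ} (hb : -1 < b) : wI b b (fun u => (1 - 2 * u) ^ 1) = 0 := by
  have h := wI_ibp (a := b + 1) (b := b + 1) (by linarith) (by linarith) (q := fun _ => 1)
    (q' := fun _ => 0) (fun u => hasDerivAt_const _ _) continuous_const
  rw [add_sub_cancel_right, ← wI_mul_one_sub b b, ← wI_mul_u b b, ← mul_sub,
    ← wI_sub hb hb (by fun_prop) (by fun_prop)] at h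
  have e : wI (b + 1) (b + 1) (fun _ => (0:ℝ)) = 0 := by simp [wI]
  rw [e, add_zero] at h
  rcases mul_eq_zero.1 h with h | h
  · linarith
  · rw [← h]; congr 1; ext u; ring

lemma A_succ {b : ℝ} (hb : -1 < b) (k : ℕ) :
    (b + 1 + ((k:ℝ) + 1) / 2) * wI b b (fun u => (1 - 2 * u) ^ (k + 2)) =
      ((k:ℝ) + 1) / 2 * wI b b (fun u => (1 - 2 * u) ^ k) := by
  have h := wI_ibp (a := b + 1) (b := b + 1) (by linarith) (by linarith)
    (q := fun u => (1 - 2 * u) ^ (k + 1))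
    (q' := fun u => (-2 * ((k:ℝ) + 1)) * (1 - 2 * u) ^ k) (fun u => by
      have h1 : HasDerivAt (fun u : ℝ => 1 - 2 * u) (-2) u := by
        simpa using ((hasDerivAt_id u).const_mul 2).const_sub 1
      exact (h1.pow (k + 1)).congr_deriv (by push_cast; simp; ring)) (by fun_prop)
  rw [add_sub_cancel_right, ← wI_mul_one_sub b b, ← wI_mul_u b b, ← mul_sub,
    ← wI_sub hb hb (by fun_prop) (by fun_prop), wI_smul, ← wI_mul_one_sub (b + 1) b,
    ← wI_mul_u b b] at h
  have e1 : (fun u : ℝ => (1 - u) * (1 - 2 * u) ^ (k + 1) - u * (1 - 2 * u) ^ (k + 1)) =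
    fun u => (1 - 2 * u) ^ (k + 2) := by ext u; ring
  have e2 : (fun u : ℝ => u * ((1 - u) * (1 - 2 * u) ^ k)) =
    fun u => (1 / 4) * ((1 - 2 * u) ^ k - (1 - 2 * u) ^ (k + 2)) := by ext u; ring
  rw [e1, e2, wI_smul, wI_sub hb hb (by fun_prop) (by fun_prop)] at h
  linarith

lemma sph_moment {d : ℕ} (b : OrthonormalBasis (Fin (d + 1)) ℝ (Amb d)) (a : Fin d → ℕ) (k : ℕ) :
    (∫ y : Sph d, (∏ i : Fin d, (⟪b i.succ, (y : Amb d)⟫) ^ a i) * ⟪b 0, (y : Amb d)⟫ ^ k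
      ∂(volume : Measure (Amb d)).toSphere) *
      (Gamma (((d:ℝ) + 1 + k + (∑ i, a i : ℕ)) / 2) / 2) = gmom k * ∏ i, gmom (a i) := by
  have h := sphere_moment b (Fin.cons k a)
  simp only [Fin.prod_univ_succ, Fin.sum_univ_succ, Fin.cons_zero, Fin.cons_succ] at h
  rw [← h]
  congr 1
  · congr 1; ext y; ring
  · push_cast; congr 3; ring

lemma S1 {d : ℕ} (hd : 3 ≤ d) (b : OrthonormalBasis (Fin (d + 1)) ℝ (Amb d)) (a : Fin d → ℕ) :
    ∃ (C : ℝ) (j : ℕ), 2 * j ≤ ∑ i, a i ∧ ((∑ i, a i ≠ 0) → C = 0 ∨ 1 ≤ j) ∧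
      ∀ k : ℕ, (∫ y : Sph d, (∏ i : Fin d, (⟪b i.succ, (y : Amb d)⟫) ^ a i) *
        ⟪b 0, (y : Amb d)⟫ ^ k ∂(volume : Measure (Amb d)).toSphere) =
        C * wI ((d:ℝ)/2 - 1 + j) ((d:ℝ)/2 - 1 + j) (fun u => (1 - 2 * u) ^ k) := by
  have hd' : (3:ℝ) ≤ d := by exact_mod_cast hd
  have hm := sph_moment b a
  set m := fun k : ℕ => (∫ y : Sph d, (∏ i : Fin d, (⟪b i.succ, (y : Amb d)⟫) ^ a i) *
        ⟪b 0, (y : Amb d)⟫ ^ k ∂(volume : Measure (Amb d)).toSphere) with hmdef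
  have hG : ∀ k : ℕ, 0 < Gamma (((d:ℝ) + 1 + k + (∑ i, a i : ℕ)) / 2) := fun k =>
    Gamma_pos_of_pos (by positivity)
  by_cases hodd : ∃ i, Odd (a i)
  · obtain ⟨i, hi⟩ := hodd
    refine ⟨0, 0, by simp, fun _ => Or.inl rfl, fun k => ?_⟩
    have := hm k
    rw [Finset.prod_eq_zero (Finset.mem_univ i) (gmom_odd hi), mul_zero] at this
    rcases mul_eq_zero.1 this with h | h
    · rw [h]; ring
    · have := hG k; linarith
  · push Not at hodd
    have hev : Even (∑ i, a i) := by
      apply Finset.even_sum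
      intro i _
      exact Nat.not_odd_iff_even.1 (hodd i)
    obtain ⟨j, hj⟩ := even_iff_exists_two_mul.1 hev
    set β : ℝ := (d:ℝ)/2 - 1 + j with hβ
    have hj0 : (0:ℝ) ≤ j := by positivity
    have hβ1 : -1 < β := by rw [hβ]; linarith
    have hA0 := wI_pos_one hβ1
    refine ⟨m 0 / wI β β (fun _ => 1), j, hj.ge, fun h => Or.inr (by omega), fun k => ?_⟩
    change m k = _
    induction k using Nat.twoStepInduction with
    | zero => simp only [pow_zero]; exact (div_mul_cancel₀ _ hA0.ne').symm
    | one =>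
      rw [A_one hβ1, mul_zero]
      have := hm 1
      rw [gmom_odd odd_one, zero_mul] at this
      rcases mul_eq_zero.1 this with h | h
      · exact h
      · have := hG 1; linarith
    | more k ih1 _ =>
      have h1 := hm k
      have h2 := hm (k + 2)
      have h3 := A_succ hβ1 k
      rw [gmom_succ] at h2
      have hz : 0 < ((d:ℝ) + 1 + k + (∑ i, a i : ℕ)) / 2 := by positivity
      rw [show ((d:ℝ) + 1 + (k + 2 : ℕ) + (∑ i, a i : ℕ)) / 2 =
        ((d:ℝ) + 1 + k + (∑ i, a i : ℕ)) / 2 + 1 by push_cast; ring,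
        Gamma_add_one (s := ((d:ℝ) + 1 + k + (∑ i, a i : ℕ)) / 2) hz.ne'] at h2
      have hz2 : ((d:ℝ) + 1 + k + (∑ i, a i : ℕ)) / 2 = β + 1 + ((k:ℝ) + 1) / 2 := by
        rw [hj, hβ]; push_cast; ring
      have hg := hG k
      rw [hz2] at h1 h2 hz hg
      change m k * _ = _ at h1
      change m (k + 2) * _ = _ at h2
      set z := β + 1 + ((k:ℝ) + 1) / 2
      have h4 : m (k + 2) * z = ((k:ℝ) + 1) / 2 * m k := by
        have : (m (k + 2) * z) * (Gamma z / 2) = (((k:ℝ) + 1) / 2 * m k) * (Gamma z / 2) := by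
          rw [mul_assoc (((k:ℝ) + 1) / 2), h1]; linarith
        exact mul_right_cancel₀ (by positivity) this
      have h5 : z * m (k + 2) = z * (m 0 / wI β β (fun _ => 1) *
          wI β β (fun u => (1 - 2 * u) ^ (k + 2))) := by
        rw [mul_left_comm, h3, mul_comm, h4, ih1]; ring
      exact mul_left_cancel₀ hz.ne' h5

instance sph_prob {d : ℕ} : IsProbabilityMeasure (sphMeasure d) := by
  constructor
  rw [sphMeasure, Measure.smul_apply, smul_eq_mul]
  apply ENNReal.inv_mul_cancel
  · rw [Ne, Measure.measure_univ_eq_zero]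
    exact Measure.toSphere_ne_zero _
  · exact measure_ne_top _ _

lemma sph_integrable {d : ℕ} (μ : Measure (Sph d)) [IsFiniteMeasure μ] {f : Sph d → ℝ}
    (hf : Continuous f) : Integrable f μ := by
  have : CompactSpace (Sph d) := isCompact_iff_compactSpace.1 (isCompact_sphere _ _)
  exact hf.integrable_of_hasCompactSupport (HasCompactSupport.of_compactSpace f)

lemma S2 {d : ℕ} (hd : 3 ≤ d) (b : OrthonormalBasis (Fin (d + 1)) ℝ (Amb d)) (a : Fin d → ℕ) :
    ∃ (C : ℝ) (j : ℕ), 2 * j ≤ ∑ i, a i ∧ ((∑ i, a i ≠ 0) → C = 0 ∨ 1 ≤ j) ∧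
      ∀ q : Polynomial ℝ, (∫ y : Sph d, (∏ i : Fin d, (⟪b i.succ, (y : Amb d)⟫) ^ a i) *
        q.eval ⟪b 0, (y : Amb d)⟫ ∂sphMeasure d) =
        C * wI ((d:ℝ)/2 - 1 + j) ((d:ℝ)/2 - 1 + j) (fun u => q.eval (1 - 2 * u)) := by
  have hd' : (3:ℝ) ≤ d := by exact_mod_cast hd
  obtain ⟨C, j, h1, h2, h3⟩ := S1 hd b a
  refine ⟨(((volume : Measure (Amb d)).toSphere Set.univ)⁻¹).toReal * C, j, h1, ?_, fun q => ?_⟩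
  · intro h
    rcases h2 h with h | h
    · left; rw [h, mul_zero]
    · right; exact h
  have hj0 : (0:ℝ) ≤ j := by positivity
  have hq : ∀ t, q.eval t = ∑ k ∈ Finset.range (q.natDegree + 1), q.coeff k * t ^ k :=
    fun t => q.eval_eq_sum_range t
  simp_rw [hq, Finset.mul_sum]
  rw [wI_sum (by linarith) (by linarith) _ (fun i => by fun_prop), integral_finsetSum]
  · rw [Finset.mul_sum]
    apply Finset.sum_congr rfl
    intro k _
    rw [wI_smul, sphMeasure, integral_smul_measure, smul_eq_mul]
    have := h3 k
    have e : (∫ y : Sph d, (∏ i : Fin d, (⟪b i.succ, (y : Amb d)⟫) ^ a i) *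
        (q.coeff k * ⟪b 0, (y : Amb d)⟫ ^ k) ∂(volume : Measure (Amb d)).toSphere) =
        q.coeff k * (∫ y : Sph d, (∏ i : Fin d, (⟪b i.succ, (y : Amb d)⟫) ^ a i) *
        ⟪b 0, (y : Amb d)⟫ ^ k ∂(volume : Measure (Amb d)).toSphere) := by
      rw [← integral_const_mul]; congr 1; ext y; ring
    rw [e, this]; ring
  · intro k _
    apply sph_integrable
    fun_prop

lemma exists_basis {d : ℕ} (x : Sph d) :
    ∃ b : OrthonormalBasis (Fin (d + 1)) ℝ (Amb d), b 0 = (x : Amb d) := by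
  have hx : ‖(x : Amb d)‖ = 1 := by simp
  have ho : Orthonormal ℝ (({0} : Set (Fin (d + 1))).domRestrict (fun _ => (x : Amb d))) := by
    rw [orthonormal_iff_ite]
    rintro ⟨i, hi⟩ ⟨j, hj⟩
    simp only [mem_singleton_iff] at hi hj
    subst hi; subst hj
    simp [Set.domRestrict, hx]
  obtain ⟨b, hb⟩ := ho.exists_orthonormalBasis_extension_of_card_eq (by simp)
  exact ⟨b, hb 0 rfl⟩

lemma zonal_integral {d : ℕ} (hd : 3 ≤ d) (x : Sph d) (q : Polynomial ℝ) :
    ∫ y, q.eval (ip x y) ∂sphMeasure d =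
      kap d * wI ((d:ℝ)/2 - 1) ((d:ℝ)/2 - 1) (fun u => q.eval (1 - 2 * u)) := by
  have hd' : (3:ℝ) ≤ d := by exact_mod_cast hd
  obtain ⟨b, hb⟩ := exists_basis x
  obtain ⟨C, j, h1, -, h3⟩ := S2 hd b (fun _ => 0)
  have hj : j = 0 := by simpa using h1
  subst hj
  simp only [pow_zero, Finset.prod_const_one, one_mul, Nat.cast_zero, add_zero, hb] at h3
  have h4 := h3 1
  have hw := wI_pos_one (b := (d:ℝ)/2 - 1) (by linarith)
  have hC : C = kap d := by
    simp only [Polynomial.eval_one, integral_const, probReal_univ, one_smul] at h4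
    rw [wI_beta (by linarith) (by linarith), sub_add_cancel,
      show (d:ℝ)/2 - 1 + (d/2 - 1) + 2 = d by ring] at h4
    have g0 : 0 < Gamma ((d:ℝ)/2) := Gamma_pos_of_pos (by linarith)
    have g2 : 0 < Gamma (d:ℝ) := Gamma_pos_of_pos (by linarith)
    rw [kap]; field_simp at h4 ⊢; linarith
  rw [← hC, ← h3 q]; rfl

/-- the polynomial behind `sphK` -/
def sphKp (d M : ℕ) : Polynomial ℝ :=
  Polynomial.C (omegaS d / omegaS (d - 1)) * jK ((d:ℝ)/2 - 1) ((d:ℝ)/2 - 1) M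

lemma sphK_eq (d M : ℕ) (t : ℝ) : sphK d M t = (sphKp d M).eval ((1 - t) / 2) := by
  simp [sphK, sphKp, jacobiK_eq]

/-- turn a polynomial in `u` to a polynomial in `t` -/
def toT (p : Polynomial ℝ) : Polynomial ℝ :=
  p.comp (Polynomial.C (1/2) - Polynomial.C (1/2) * Polynomial.X)

lemma toT_eval (p : Polynomial ℝ) (t : ℝ) : (toT p).eval t = p.eval ((1 - t) / 2) := by
  simp only [toT, Polynomial.eval_comp, Polynomial.eval_sub, Polynomial.eval_mul, Polynomial.eval_C,
    Polynomial.eval_X]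
  congr 1; ring

lemma toT_degree (p : Polynomial ℝ) : (toT p).natDegree ≤ p.natDegree := by
  refine Polynomial.natDegree_comp_le.trans ?_
  refine (Nat.mul_le_mul_left _ (?_ : _ ≤ 1)).trans (mul_one _).le
  compute_degree

lemma repro_mono {d : ℕ} (hd : 3 ≤ d) (b : OrthonormalBasis (Fin (d + 1)) ℝ (Amb d)) (M : ℕ)
    (s : Fin (d + 1) → ℕ) (hs : ∑ i, s i < M) :
    ∫ y : Sph d, (∏ i, ⟪b i, (y : Amb d)⟫ ^ s i) * sphK d M ⟪b 0, (y : Amb d)⟫ ∂sphMeasure d =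
      ∏ i, (if i = 0 then (1:ℝ) else 0) ^ s i := by
  have hd' : (3:ℝ) ≤ d := by exact_mod_cast hd
  obtain ⟨C, j, h1, h2, h3⟩ := S2 hd b (fun i => s i.succ)
  have hj0 : (0:ℝ) ≤ j := by positivity
  have h4 := h3 (Polynomial.X ^ s 0 * toT (sphKp d M))
  have e1 : (fun y : Sph d => (∏ i, ⟪b i, (y : Amb d)⟫ ^ s i) * sphK d M ⟪b 0, (y : Amb d)⟫) =
     fun y : Sph d => (∏ i : Fin d, (⟪b i.succ, (y : Amb d)⟫) ^ s i.succ) *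
        (Polynomial.X ^ s 0 * toT (sphKp d M)).eval ⟪b 0, (y : Amb d)⟫ := by
    ext y
    rw [Fin.prod_univ_succ, Polynomial.eval_mul, Polynomial.eval_pow, Polynomial.eval_X, toT_eval,
      sphK_eq]
    ring
  rw [e1, h4]
  set q : Polynomial ℝ := (Polynomial.X * (1 - Polynomial.X)) ^ j *
    (1 - Polynomial.C 2 * Polynomial.X) ^ s 0 with hq
  rw [Fin.sum_univ_succ] at hs
  have hqd : q.degree < (M : WithBot ℕ) := by
    have : q.natDegree ≤ j * 2 + s 0 * 1 := by
      rw [hq]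
      refine Polynomial.natDegree_mul_le.trans (add_le_add ?_ ?_)
      · refine Polynomial.natDegree_pow_le.trans (Nat.mul_le_mul_left _ ?_)
        compute_degree
      · refine Polynomial.natDegree_pow_le.trans (Nat.mul_le_mul_left _ ?_)
        compute_degree
    refine lt_of_le_of_lt (Polynomial.degree_le_of_natDegree_le this) ?_
    have : j * 2 + s 0 * 1 < M := by omega
    exact_mod_cast this
  have h5 := jK_repro (α := (d:ℝ)/2 - 1) (β := (d:ℝ)/2 - 1) (by linarith) (by linarith)
    (by linarith) M q hqd
  have e2 : wI ((d:ℝ)/2 - 1 + j) ((d:ℝ)/2 - 1 + j)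
      (fun u => (Polynomial.X ^ s 0 * toT (sphKp d M)).eval (1 - 2 * u)) =
      wI ((d:ℝ)/2 - 1) ((d:ℝ)/2 - 1) (fun u => omegaS d / omegaS (d - 1) *
        ((jK ((d:ℝ)/2 - 1) ((d:ℝ)/2 - 1) M).eval u * q.eval u)) := by
    apply wI_congr_ioo
    intro u hu
    have hu1 : (1 - u) ≠ 0 := by linarith [hu.2]
    rw [rpow_add_natCast hu.1.ne', rpow_add_natCast hu1, Polynomial.eval_mul, toT_eval, sphKp, hq]
    simp only [Polynomial.eval_mul, Polynomial.eval_pow, Polynomial.eval_X, Polynomial.eval_C,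
      Polynomial.eval_sub, Polynomial.eval_one]
    rw [show (1 - (1 - 2 * u)) / 2 = u by ring, mul_pow]
    ring
  rw [e2, wI_smul, h5, show (d:ℝ)/2 - 1 + (d/2 - 1) + 1 = d - 1 by ring]
  have e3 : ∏ i, (if i = (0 : Fin (d + 1)) then (1:ℝ) else 0) ^ s i = 
      ∏ i : Fin d, (0:ℝ) ^ s i.succ := by
    rw [Fin.prod_univ_succ]; simp [Fin.succ_ne_zero]
  rw [e3]
  by_cases h0 : ∑ i : Fin d, s i.succ = 0
  · have h0' : ∀ i : Fin d, s i.succ = 0 := by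
      intro i
      exact (Finset.sum_eq_zero_iff.1 h0) i (Finset.mem_univ i)
    have hj : j = 0 := by omega
    subst hj
    have h6 := h3 1
    simp only [h0', pow_zero, Finset.prod_const_one, one_mul, Nat.cast_zero, add_zero,
      Polynomial.eval_one, integral_const, probReal_univ, one_smul] at h6
    rw [wI_beta (by linarith) (by linarith), sub_add_cancel,
      show (d:ℝ)/2 - 1 + (d/2 - 1) + 2 = d by ring] at h6
    have hC : C = kap d := by
      have g0 : 0 < Gamma ((d:ℝ)/2) := Gamma_pos_of_pos (by linarith)
      have g2 : 0 < Gamma (d:ℝ) := Gamma_pos_of_pos (by linarith)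
      rw [kap]; field_simp at h6 ⊢; linarith
    have hr := omega_ratio hd
    have hp : (0:ℝ) < 2 ^ ((d:ℝ) - 1) := by positivity
    simp only [h0', pow_zero, Finset.prod_const_one]
    have : q.eval 0 = 1 := by simp [hq]
    rw [this, hC, mul_one, mul_one_div, mul_div_assoc', mul_comm, hr, div_self hp.ne']
  · have : ∏ i : Fin d, (0:ℝ) ^ s i.succ = 0 := by
      obtain ⟨i, hi, hne⟩ := Finset.exists_ne_zero_of_sum_ne_zero h0
      exact Finset.prod_eq_zero hi (zero_pow hne)
    rw [this]
    rcases h2 h0 with h | h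
    · rw [h, zero_mul]
    · have : q.eval 0 = 0 := by simp [hq, zero_pow (by omega : j ≠ 0)]
      rw [this]; ring

end Part7

section Part8

/-- `f` is the restriction of a polynomial of total degree at most `m` -/
def DegLE (d m : ℕ) (f : Sph d → ℝ) : Prop :=
  ∃ p : MvPolynomial (Fin (d + 1)) ℝ, p.totalDegree ≤ m ∧
    ∀ y : Sph d, f y = MvPolynomial.eval (fun i => (y : Amb d) i) p

lemma DegLE.mono {d m m' : ℕ} {f : Sph d → ℝ} (h : DegLE d m f) (hm : m ≤ m') : DegLE d m' f := by
  obtain ⟨p, h1, h2⟩ := h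
  exact ⟨p, h1.trans hm, h2⟩

lemma DegLE.add {d m : ℕ} {f g : Sph d → ℝ} (hf : DegLE d m f) (hg : DegLE d m g) :
    DegLE d m (fun y => f y + g y) := by
  obtain ⟨p, h1, h2⟩ := hf
  obtain ⟨q, h3, h4⟩ := hg
  exact ⟨p + q, (MvPolynomial.totalDegree_add _ _).trans (max_le h1 h3), fun y => by simp [h2, h4]⟩

lemma DegLE.mul {d m m' : ℕ} {f g : Sph d → ℝ} (hf : DegLE d m f) (hg : DegLE d m' g) :
    DegLE d (m + m') (fun y => f y * g y) := by
  obtain ⟨p, h1, h2⟩ := hf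
  obtain ⟨q, h3, h4⟩ := hg
  exact ⟨p * q, (MvPolynomial.totalDegree_mul _ _).trans (add_le_add h1 h3), fun y => by simp [h2, h4]⟩

lemma DegLE.const (d m : ℕ) (c : ℝ) : DegLE d m (fun _ => c) :=
  ⟨MvPolynomial.C c, by simp, fun y => by simp⟩

lemma DegLE.smul {d m : ℕ} {f : Sph d → ℝ} (hf : DegLE d m f) (c : ℝ) :
    DegLE d m (fun y => c * f y) := by
  have := (DegLE.const d 0 c).mul hf
  rwa [zero_add] at this

lemma DegLE.pow {d m : ℕ} {f : Sph d → ℝ} (hf : DegLE d m f) (k : ℕ) :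
    DegLE d (k * m) (fun y => f y ^ k) := by
  obtain ⟨p, h1, h2⟩ := hf
  exact ⟨p ^ k, (MvPolynomial.totalDegree_pow _ _).trans (Nat.mul_le_mul_left _ h1),
    fun y => by simp [h2]⟩

lemma DegLE.sum {d m : ℕ} {ι : Type*} (s : Finset ι) {f : ι → Sph d → ℝ}
    (hf : ∀ i ∈ s, DegLE d m (f i)) : DegLE d m (fun y => ∑ i ∈ s, f i y) := by
  classical
  induction s using Finset.induction_on with
  | empty => simpa using DegLE.const d m 0
  | insert a s ha ih =>
    simp only [Finset.sum_insert ha]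
    exact (hf a (Finset.mem_insert_self _ _)).add (ih fun i hi => hf i (Finset.mem_insert_of_mem hi))

lemma DegLE.coord (d : ℕ) (i : Fin (d + 1)) : DegLE d 1 (fun y => (y : Amb d) i) :=
  ⟨MvPolynomial.X i, (MvPolynomial.totalDegree_X i).le, fun y => by simp⟩

lemma ip_eq_sum {d : ℕ} (x y : Sph d) : ip x y = ∑ i, (x : Amb d) i * (y : Amb d) i := by
  rw [ip, PiLp.inner_apply]
  apply Finset.sum_congr rfl
  intro i _
  simp [mul_comm]

lemma DegLE.ip {d : ℕ} (x : Sph d) : DegLE d 1 (fun y => ip x y) := by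
  simp_rw [ip_eq_sum]
  exact DegLE.sum _ fun i _ => (DegLE.coord d i).smul _

lemma DegLE.poly {d m : ℕ} {f : Sph d → ℝ} (hf : DegLE d m f) (q : Polynomial ℝ) {k : ℕ}
    (hq : q.natDegree ≤ k) : DegLE d (k * m) (fun y => q.eval (f y)) := by
  simp_rw [Polynomial.eval_eq_sum_range]
  apply DegLE.sum
  intro i hi
  have : i ≤ k := by have := Finset.mem_range.1 hi; omega
  exact ((hf.pow i).smul _).mono (Nat.mul_le_mul_right _ this)

lemma DegLE.continuous {d m : ℕ} {f : Sph d → ℝ} (hf : DegLE d m f) : Continuous f := by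
  obtain ⟨p, h1, h2⟩ := hf
  have : f = fun y : Sph d => MvPolynomial.eval (fun i => (y : Amb d) i) p := funext h2
  rw [this]
  have h3 := MvPolynomial.continuous_eval p
  exact h3.comp (by fun_prop)

lemma DegLE.isSphPoly {d m : ℕ} {f : Sph d → ℝ} (hf : DegLE d m f) {n : ℝ} (h : (m:ℝ) < n) :
    IsSphPoly d n f := by
  obtain ⟨p, h1, h2⟩ := hf
  exact ⟨p, lt_of_le_of_lt (by exact_mod_cast h1) h, h2⟩

lemma ip_continuous {d : ℕ} (x : Sph d) : Continuous (fun y => ip x y) := (DegLE.ip x).continuous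

open MvPolynomial in
lemma linsubst {n : ℕ} (c : Fin n → Fin n → ℝ) (Q : MvPolynomial (Fin n) ℝ) :
    ∃ Q' : MvPolynomial (Fin n) ℝ, Q'.totalDegree ≤ Q.totalDegree ∧
      ∀ v : Fin n → ℝ, eval v Q' = eval (fun i => ∑ j, c i j * v j) Q := by
  set L : Fin n → MvPolynomial (Fin n) ℝ := fun i => ∑ j, C (c i j) * X j with hL
  have hLd : ∀ i, (L i).totalDegree ≤ 1 := by
    intro i
    refine (totalDegree_finsetSum _ _).trans ?_
    apply Finset.sup_le
    intro j _
    refine (totalDegree_mul _ _).trans ?_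
    simp
  refine ⟨∑ s ∈ Q.support, C (Q.coeff s) * ∏ i, L i ^ s i, ?_, ?_⟩
  · refine (totalDegree_finsetSum _ _).trans ?_
    apply Finset.sup_le
    intro s hs
    refine (totalDegree_mul _ _).trans ?_
    rw [totalDegree_C, zero_add]
    refine (totalDegree_finset_prod _ _).trans ?_
    calc ∑ i, (L i ^ s i).totalDegree ≤ ∑ i, s i := by
          apply Finset.sum_le_sum
          intro i _
          exact (totalDegree_pow _ _).trans ((Nat.mul_le_mul_left _ (hLd i)).trans (mul_one _).le)
      _ = s.sum fun _ e => e := by rw [Finsupp.sum_fintype _ _ (by simp)]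
      _ ≤ _ := le_totalDegree hs
  · intro v
    rw [eval_eq' _ Q]
    simp [hL]

lemma repro {d : ℕ} (hd : 3 ≤ d) (x : Sph d) {m M : ℕ} (hm : m < M) {f : Sph d → ℝ}
    (hf : DegLE d m f) : ∫ y, f y * sphK d M (ip x y) ∂sphMeasure d = f x := by
  obtain ⟨b, hb⟩ := exists_basis x
  obtain ⟨Q, h1, h2⟩ := hf
  obtain ⟨Q', h3, h4⟩ := linsubst (fun i j => (b j : Amb d) i) Q
  have h5 : ∀ y : Amb d, MvPolynomial.eval (fun i => y i) Q =
      MvPolynomial.eval (fun i => ⟪b i, y⟫) Q' := by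
    intro y
    rw [h4]
    congr 2
    ext i
    have := congrArg (fun z : Amb d => z i) (b.sum_repr y)
    simp only [b.repr_apply_apply] at this
    rw [← this]
    simp [mul_comm]
  have hK : Continuous fun y => sphK d M (ip x y) := by
    simp_rw [sphK_eq]
    have h1 := ip_continuous x
    have h2 := (sphKp d M).continuous
    exact h2.comp (by fun_prop)
  have e : ∀ y : Sph d, f y * sphK d M (ip x y) = ∑ s ∈ Q'.support, Q'.coeff s *
      ((∏ i, ⟪b i, (y : Amb d)⟫ ^ s i) * sphK d M ⟪b 0, (y : Amb d)⟫) := by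
    intro y
    rw [h2, h5, MvPolynomial.eval_eq', Finset.sum_mul, hb]
    apply Finset.sum_congr rfl
    intro s _
    rw [ip]; ring
  simp_rw [e]
  rw [integral_finsetSum]
  · rw [h2, h5, MvPolynomial.eval_eq']
    apply Finset.sum_congr rfl
    intro s hs
    rw [integral_const_mul, repro_mono hd b M s]
    · congr 2
      ext i
      rw [← hb, b.inner_eq_ite]
    · refine lt_of_le_of_lt ?_ hm
      refine le_trans ?_ (h3.trans h1)
      have := MvPolynomial.le_totalDegree hs
      rwa [Finsupp.sum_fintype _ _ (by simp)] at this
  · intro s _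
    apply Integrable.const_mul
    apply sph_integrable
    have e2 : ∀ y : Sph d, ⟪b 0, (y : Amb d)⟫ = ip x y := fun y => by rw [hb]; rfl
    simp_rw [e2]
    fun_prop

/-- sums of squares of polynomials of degree at most `m` -/
inductive SOS (d m : ℕ) : (Sph d → ℝ) → Prop
  | zero : SOS d m (fun _ => 0)
  | sq (f : Sph d → ℝ) : DegLE d m f → SOS d m (fun y => f y ^ 2)
  | add (f g : Sph d → ℝ) : SOS d m f → SOS d m g → SOS d m (fun y => f y + g y)

lemma SOS.mono {d m m' : ℕ} {f : Sph d → ℝ} (h : SOS d m f) (hm : m ≤ m') : SOS d m' f := by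
  induction h with
  | zero => exact SOS.zero
  | sq f hf => exact SOS.sq f (hf.mono hm)
  | add f g _ _ h1 h2 => exact SOS.add f g h1 h2

lemma SOS.smul {d m : ℕ} {f : Sph d → ℝ} (h : SOS d m f) {c : ℝ} (hc : 0 ≤ c) :
    SOS d m (fun y => c * f y) := by
  induction h with
  | zero => simpa using SOS.zero
  | sq f hf =>
    have := SOS.sq _ (hf.smul (√c))
    simpa [mul_pow, sq_sqrt hc] using this
  | add f g _ _ h1 h2 =>
    have := SOS.add _ _ h1 h2
    simpa [mul_add] using this

lemma SOS.mul_sq {d m m' : ℕ} {f g : Sph d → ℝ} (h : SOS d m f) (hg : DegLE d m' g) :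
    SOS d (m + m') (fun y => f y * g y ^ 2) := by
  induction h with
  | zero => simpa using SOS.zero
  | sq f hf =>
    have := SOS.sq _ (hf.mul hg)
    simpa [mul_pow] using this
  | add f g _ _ h1 h2 =>
    have := SOS.add _ _ h1 h2
    simpa [add_mul] using this

lemma SOS.mul {d m m' : ℕ} {f g : Sph d → ℝ} (h : SOS d m f) (hg : SOS d m' g) :
    SOS d (m + m') (fun y => f y * g y) := by
  induction hg with
  | zero => simpa using SOS.zero
  | sq g hg => exact h.mul_sq hg
  | add g k _ _ h1 h2 =>
    have := SOS.add _ _ h1 h2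
    simpa [mul_add] using this

lemma SOS.const (d m : ℕ) {c : ℝ} (hc : 0 ≤ c) : SOS d m (fun _ => c) := by
  have := SOS.sq _ (DegLE.const d m (√c))
  simpa [sq_sqrt hc] using this

lemma SOS.sum {d m : ℕ} {ι : Type*} (s : Finset ι) {f : ι → Sph d → ℝ}
    (hf : ∀ i ∈ s, SOS d m (f i)) : SOS d m (fun y => ∑ i ∈ s, f i y) := by
  classical
  induction s using Finset.induction_on with
  | empty => simpa using SOS.zero
  | insert a s ha ih =>
    simp only [Finset.sum_insert ha]
    exact SOS.add _ _ (hf a (Finset.mem_insert_self _ _))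
      (ih fun i hi => hf i (Finset.mem_insert_of_mem hi))

lemma SOS.pow {d m : ℕ} {f : Sph d → ℝ} (h : SOS d m f) (k : ℕ) :
    SOS d (k * m) (fun y => f y ^ k) := by
  induction k with
  | zero => simpa using SOS.const d 0 zero_le_one
  | succ k ih =>
    have := (ih.mul h)
    simp only [pow_succ]
    exact this.mono (by rw [Nat.succ_mul])

lemma SOS.continuous {d m : ℕ} {f : Sph d → ℝ} (h : SOS d m f) : Continuous f := by
  induction h with
  | zero => fun_prop
  | sq f hf => have := hf.continuous; fun_prop
  | add f g _ _ h1 h2 => fun_prop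

instance tv_finite {X : Type*} [MeasurableSpace X] (ν : SignedMeasure X) :
    IsFiniteMeasure ν.totalVariation := by
  unfold SignedMeasure.totalVariation; infer_instance

lemma SOS.mz {d m : ℕ} {f : Sph d → ℝ} (h : SOS d m f) {n c : ℝ} {ν : SignedMeasure (Sph d)}
    (hν : IsMZ d n ν c) (hm : (m:ℝ) < n / 2) :
    ∫ y, f y ∂ν.totalVariation ≤ c * ∫ y, f y ∂sphMeasure d := by
  induction h with
  | zero => simp
  | sq f hf => exact hν f (hf.isSphPoly hm)
  | add f g hf hg h1 h2 =>
    rw [integral_add (sph_integrable _ hf.continuous) (sph_integrable _ hg.continuous),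
      integral_add (sph_integrable _ hf.continuous) (sph_integrable _ hg.continuous)]
    linarith

lemma sph_sum_sq {d : ℕ} (x : Sph d) : ∑ i, (x : Amb d) i ^ 2 = 1 := by
  have hx : ‖(x : Amb d)‖ = 1 := by simp
  have := EuclideanSpace.norm_sq_eq (x : Amb d)
  rw [hx] at this
  simpa using this.symm

lemma one_sub_ip {d : ℕ} (x y : Sph d) :
    (1 - ip x y) / 2 = (1/4) * ∑ i, ((x : Amb d) i - (y : Amb d) i) ^ 2 := by
  have h1 := sph_sum_sq x
  have h2 := sph_sum_sq y
  have : ∑ i, ((x : Amb d) i - (y : Amb d) i) ^ 2 = ∑ i, (x : Amb d) i ^ 2 +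
      ∑ i, (y : Amb d) i ^ 2 - 2 * ∑ i, (x : Amb d) i * (y : Amb d) i := by
    rw [Finset.mul_sum, ← Finset.sum_add_distrib, ← Finset.sum_sub_distrib]
    apply Finset.sum_congr rfl; intro i _; ring
  rw [this, h1, h2, ip_eq_sum]; ring

lemma one_add_ip {d : ℕ} (x y : Sph d) :
    1 - (1 - ip x y) / 2 = (1/4) * ∑ i, ((x : Amb d) i + (y : Amb d) i) ^ 2 := by
  have h1 := sph_sum_sq x
  have h2 := sph_sum_sq y
  have : ∑ i, ((x : Amb d) i + (y : Amb d) i) ^ 2 = ∑ i, (x : Amb d) i ^ 2 +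
      ∑ i, (y : Amb d) i ^ 2 + 2 * ∑ i, (x : Amb d) i * (y : Amb d) i := by
    rw [Finset.mul_sum, ← Finset.sum_add_distrib, ← Finset.sum_add_distrib]
    apply Finset.sum_congr rfl; intro i _; ring
  rw [this, h1, h2, ip_eq_sum]; ring

/-- the variable `u = (1 - x·y)/2` -/
def uu {d : ℕ} (x y : Sph d) : ℝ := (1 - ip x y) / 2

lemma uu_mem {d : ℕ} (x y : Sph d) : uu x y ∈ Icc (0:ℝ) 1 := by
  constructor
  · rw [uu, one_sub_ip]; positivity
  · have : 0 ≤ 1 - uu x y := by rw [uu, one_add_ip]; positivity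
    linarith

lemma uu_dist {d : ℕ} (x y : Sph d) : dist x y ^ 2 = 4 * uu x y := by
  rw [uu, one_sub_ip, Subtype.dist_eq, EuclideanSpace.dist_eq, sq_sqrt (by positivity)]
  simp [Real.dist_eq, sq_abs]

lemma uu_degLE {d : ℕ} (x : Sph d) : DegLE d 1 (fun y => uu x y) := by
  have := ((DegLE.const d 1 1).add ((DegLE.ip x).smul (-1))).smul (1/2)
  convert this using 2
  rw [uu]; ring

lemma uu_sos {d : ℕ} (x : Sph d) : SOS d 1 (fun y => uu x y) := by
  simp_rw [uu, one_sub_ip]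
  refine (SOS.sum _ fun i _ => SOS.sq _ ?_).smul (by norm_num)
  have := (DegLE.const d 1 ((x : Amb d) i)).add ((DegLE.coord d i).smul (-1))
  convert this using 2
  ring

lemma one_sub_uu_sos {d : ℕ} (x : Sph d) : SOS d 1 (fun y => 1 - uu x y) := by
  simp_rw [uu, one_add_ip]
  refine (SOS.sum _ fun i _ => SOS.sq _ ?_).smul (by norm_num)
  exact (DegLE.const d 1 ((x : Amb d) i)).add (DegLE.coord d i)

end Part8

section Part9

open Polynomial in
def VP (θ : ℝ) : ℕ → Polynomial ℝ
  | 0 => 1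
  | K + 1 => X + C ((4:ℝ) ^ (-θ)) * (VP θ K).comp (4 * X * (1 - X))

lemma VP_zero_eval (θ u : ℝ) : (VP θ 0).eval u = 1 := by simp [VP]

lemma VP_succ_eval (θ u : ℝ) (K : ℕ) :
    (VP θ (K+1)).eval u = u + (4:ℝ) ^ (-θ) * (VP θ K).eval (4 * u * (1 - u)) := by
  simp [VP]

lemma four_mul_mem {u : ℝ} (hu : u ∈ Icc (0:ℝ) 1) : 4 * u * (1 - u) ∈ Icc (0:ℝ) 1 := by
  obtain ⟨h0, h1⟩ := hu
  constructor
  · have : 0 ≤ 1 - u := by linarith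
    positivity
  · nlinarith [sq_nonneg (1 - 2 * u)]

lemma four_rpow_mul {θ u : ℝ} (hu : u ∈ Icc (0:ℝ) 1) :
    (4:ℝ) ^ (-θ) * (4 * u * (1 - u)) ^ θ = u ^ θ * (1 - u) ^ θ := by
  obtain ⟨h0, h1⟩ := hu
  have h2 : 0 ≤ 1 - u := by linarith
  rw [mul_rpow (by positivity) h2, mul_rpow (by norm_num) h0, rpow_neg (by norm_num)]
  have : (4:ℝ) ^ θ ≠ 0 := (rpow_pos_of_pos (by norm_num) _).ne'
  field_simp

lemma VP_lower {θ : ℝ} (h0 : 0 < θ) (h1 : θ < 1) (K : ℕ) :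
    ∀ u ∈ Icc (0:ℝ) 1, u ^ θ ≤ (VP θ K).eval u := by
  induction K with
  | zero =>
    intro u hu
    rw [VP_zero_eval]
    exact rpow_le_one hu.1 hu.2 h0.le
  | succ K ih =>
    intro u hu
    rw [VP_succ_eval]
    have h2 := ih _ (four_mul_mem hu)
    have h3 : (4:ℝ) ^ (-θ) * (4 * u * (1 - u)) ^ θ ≤ (4:ℝ) ^ (-θ) * (VP θ K).eval (4 * u * (1 - u)) := by
      gcongr
    rw [four_rpow_mul hu] at h3
    obtain ⟨hu0, hu1⟩ := hu
    have h4 : 1 - u ≤ (1 - u) ^ θ := by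
      have := rpow_le_rpow_of_exponent_ge' (x := 1 - u) (by linarith) (by linarith) h0.le h1.le
      simpa using this
    have h5 : u ^ θ ≤ 1 := rpow_le_one hu0 hu1 h0.le
    have h6 : 0 ≤ u ^ θ := rpow_nonneg hu0 _
    nlinarith

lemma VP_upper {θ : ℝ} (h0 : 0 < θ) (h1 : θ < 1) {b B : ℝ} (hb : b * ((4:ℝ) ^ (1 - θ) - 1) = 1)
    (hb0 : 0 ≤ b) (hB : B * θ = (4:ℝ) ^ (1 - θ) * b) (K : ℕ) :
    ∀ u ∈ Icc (0:ℝ) 1, (VP θ K).eval u ≤ B * u ^ θ - b * u + (4:ℝ) ^ (-(K * θ)) := by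
  have h4 : (1:ℝ) ≤ (4:ℝ) ^ (1 - θ) := one_le_rpow (by norm_num) (by linarith)
  have hBn : 0 ≤ B := by
    by_contra h
    push Not at h
    have : 0 ≤ (4:ℝ) ^ (1 - θ) * b := by positivity
    nlinarith
  have hBb : b ≤ B := by nlinarith
  induction K with
  | zero =>
    intro u hu
    rw [VP_zero_eval]
    obtain ⟨hu0, hu1⟩ := hu
    have h4 : u ≤ u ^ θ := by
      have := rpow_le_rpow_of_exponent_ge' (x := u) (by linarith) (by linarith) h0.le h1.le
      simpa using this
    have : b * u ≤ B * u ^ θ := mul_le_mul hBb h4 hu0 hBn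
    simp; linarith
  | succ K ih =>
    intro u hu
    rw [VP_succ_eval]
    have h2 := ih _ (four_mul_mem hu)
    have h3 := mul_le_mul_of_nonneg_left h2 (rpow_nonneg (show (0:ℝ) ≤ 4 by norm_num) (-θ))
    have e1 : (4:ℝ) ^ (-θ) * (B * (4 * u * (1 - u)) ^ θ - b * (4 * u * (1 - u)) + 4 ^ (-(K * θ)))
        = B * (u ^ θ * (1 - u) ^ θ) - b * (4:ℝ) ^ (1 - θ) * (u * (1 - u)) + 4 ^ (-(((K + 1 : ℕ):ℝ) * θ)) := by
      have a1 : (4:ℝ) ^ (1 - θ) = 4 * 4 ^ (-θ) := by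
        rw [sub_eq_add_neg, rpow_add (by norm_num), rpow_one]
      have a2 : (4:ℝ) ^ (-(((K + 1 : ℕ):ℝ) * θ)) = 4 ^ (-θ) * 4 ^ (-(K * θ)) := by
        rw [← rpow_add (by norm_num)]; congr 1; push_cast; ring
      rw [← four_rpow_mul hu, a1, a2]; ring
    rw [e1] at h3
    obtain ⟨hu0, hu1⟩ := hu
    have h5 : (1 - u) ^ θ ≤ 1 - θ * u := by
      have := rpow_one_add_le_one_add_mul_self (s := -u) (by linarith) h0.le h1.le
      convert this using 1 <;> ring_nf
    have h6 : 0 ≤ u ^ θ := rpow_nonneg hu0 _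
    have h7 : u ≤ u ^ θ := by
      have := rpow_le_rpow_of_exponent_ge' (x := u) (by linarith) (by linarith) h0.le h1.le
      simpa using this
    have h8 : B * (u ^ θ * (1 - u) ^ θ) ≤ B * (u ^ θ * (1 - θ * u)) := by gcongr
    have h9 : B * (u ^ θ * (1 - θ * u)) = B * u ^ θ - (B * θ) * (u * u ^ θ) := by ring
    have h10 : (B * θ) * (u * u) ≤ (B * θ) * (u * u ^ θ) := by gcongr
    have h11 : b * (4:ℝ) ^ (1 - θ) * (u * (1 - u)) = (B * θ) * u - (B * θ) * (u * u) := by rw [hB]; ring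
    have h12 : (B * θ) * u = b * u + u := by rw [hB]; linear_combination u * hb
    linarith

lemma VP_sos {d : ℕ} {θ : ℝ} (K : ℕ) : ∀ {m : ℕ} {w : Sph d → ℝ}, DegLE d m w → SOS d m w →
    SOS d m (fun y => 1 - w y) → SOS d (m * 2 ^ K) (fun y => (VP θ K).eval (w y)) := by
  induction K with
  | zero =>
    intro m w _ _ _
    simp_rw [VP_zero_eval]
    exact SOS.const d _ zero_le_one
  | succ K ih =>
    intro m w h1 h2 h3
    simp_rw [VP_succ_eval]
    have k1 : DegLE d (2 * m) (fun y => 4 * w y * (1 - w y)) := by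
      have a := (h1.mul ((DegLE.const d m 1).add (h1.smul (-1)))).smul 4
      rw [← two_mul] at a
      convert a using 2
      ring
    have k2 : SOS d (2 * m) (fun y => 4 * w y * (1 - w y)) := by
      have a := (h2.mul h3).smul (show (0:ℝ) ≤ 4 by norm_num)
      rw [← two_mul] at a
      convert a using 2
      ring
    have k3 : SOS d (2 * m) (fun y => 1 - 4 * w y * (1 - w y)) := by
      have a := (SOS.sq _ ((DegLE.const d m 1).add (h1.smul (-2)))).mono (show m ≤ 2 * m by omega)
      convert a using 2
      ring
    have k4 := (ih k1 k2 k3).smul (rpow_nonneg (show (0:ℝ) ≤ 4 by norm_num) (-θ))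
    have e : 2 * m * 2 ^ K = m * 2 ^ (K + 1) := by ring
    rw [e] at k4
    exact SOS.add _ _ (h2.mono (Nat.le_mul_of_pos_right _ (by positivity))) k4

lemma exists_v (θ : ℝ) (h0 : 0 ≤ θ) (h1 : θ < 1) : ∃ B : ℝ, 0 < B ∧ ∀ n : ℕ, 1 ≤ n →
    ∃ v : Polynomial ℝ, (∀ u ∈ Icc (0:ℝ) 1, u ^ θ ≤ v.eval u ∧
      v.eval u ≤ B * (u ^ θ + (n:ℝ) ^ (-(2 * θ)))) ∧
      ∀ (d : ℕ) (x : Sph d), SOS d n (fun y => v.eval (uu x y)) := by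
  rcases h0.eq_or_lt with rfl | h0
  · refine ⟨1, one_pos, fun n hn => ⟨1, fun u hu => ?_, fun d x => ?_⟩⟩
    · simp
    · simpa using SOS.const d n zero_le_one
  · have h4 : (1:ℝ) < (4:ℝ) ^ (1 - θ) := one_lt_rpow (by norm_num) (by linarith)
    have h5 : 0 < (4:ℝ) ^ (1 - θ) - 1 := by linarith
    set b := ((4:ℝ) ^ (1 - θ) - 1)⁻¹ with hb
    have hb0 : 0 < b := by positivity
    set B := (4:ℝ) ^ (1 - θ) * b / θ with hB
    have hB0 : 0 < B := by positivity
    have h40 : 0 < (4:ℝ) ^ θ := by positivity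
    refine ⟨B + 4 ^ θ, by positivity, fun n hn => ⟨VP θ (Nat.log 2 n), fun u hu => ⟨VP_lower h0 h1 _ u hu, ?_⟩, fun d x => ?_⟩⟩
    · have h6 := VP_upper h0 h1 (b := b) (B := B) (inv_mul_cancel₀ h5.ne') hb0.le (by rw [hB]; field_simp)
        (Nat.log 2 n) u hu
      have h7 : (4:ℝ) ^ (-((Nat.log 2 n : ℝ) * θ)) ≤ 4 ^ θ * (n:ℝ) ^ (-(2 * θ)) := by
        have a : (n:ℝ) ≤ 2 ^ (Nat.log 2 n + 1) := by
          exact_mod_cast (Nat.lt_pow_succ_log_self (by norm_num) n).le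
        have hn0 : (0:ℝ) < n := by exact_mod_cast hn
        have a2 : (n:ℝ) ^ (2 * θ) ≤ ((2:ℝ) ^ (Nat.log 2 n + 1)) ^ (2 * θ) := by gcongr
        have a3 : ((2:ℝ) ^ (Nat.log 2 n + 1)) ^ (2 * θ) = 4 ^ θ * 4 ^ ((Nat.log 2 n : ℝ) * θ) := by
          rw [← rpow_natCast, ← rpow_mul (by norm_num), show (4:ℝ) = 2 ^ (2:ℝ) by norm_num,
            ← rpow_mul (by norm_num), ← rpow_mul (by norm_num), ← rpow_add (by norm_num)]
          congr 1; push_cast; ring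
        rw [a3] at a2
        rw [rpow_neg (by norm_num), rpow_neg hn0.le]
        have p1 : 0 < (n:ℝ) ^ (2 * θ) := by positivity
        have p2 : 0 < (4:ℝ) ^ ((Nat.log 2 n : ℝ) * θ) := by positivity
        rw [← div_eq_mul_inv, le_div_iff₀ p1, inv_mul_le_iff₀ p2]
        linarith
      have h8 : 0 ≤ u ^ θ := rpow_nonneg hu.1 _
      have h9 : 0 ≤ (n:ℝ) ^ (-(2 * θ)) := by positivity
      have h10 : 0 ≤ b * u := mul_nonneg hb0.le hu.1
      nlinarith [mul_nonneg h40.le h8, mul_nonneg hB0.le h9]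
    · have := VP_sos (θ := θ) (Nat.log 2 n) (uu_degLE x) (uu_sos x) (one_sub_uu_sos x)
      rw [one_mul] at this
      exact this.mono (Nat.pow_log_le_self 2 (by omega))

end Part9

section Part10

lemma uu_continuous {d : ℕ} (x : Sph d) : Continuous (fun y => uu x y) := (uu_degLE x).continuous

lemma zonal_u {d : ℕ} (hd : 3 ≤ d) (x : Sph d) (q : Polynomial ℝ) :
    ∫ y, q.eval (uu x y) ∂sphMeasure d =
      kap d * wI ((d:ℝ)/2 - 1) ((d:ℝ)/2 - 1) (fun u => q.eval u) := by
  have h := zonal_integral hd x (toT q)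
  simp_rw [toT_eval] at h
  unfold uu
  rw [h]
  congr 2
  ext u
  congr 1; ring

lemma jac_degree (α β : ℝ) (n : ℕ) : (jac α β n).natDegree ≤ n := by
  rw [jac]
  apply Polynomial.natDegree_sum_le_of_forall_le
  intro m hm
  exact (Polynomial.natDegree_C_mul_X_pow_le _ _).trans (Nat.lt_succ_iff.1 (Finset.mem_range.1 hm))

lemma jac_zero_pos {α β : ℝ} (hα : -1 < α) (hab : 0 < α + β + 1) (n : ℕ) :
    0 < (jac α β n).eval 0 := by
  have : (0:ℝ) ≤ n := by positivity
  rw [jac_zero]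
  exact div_pos (Gamma_pos_of_pos (by linarith)) (Gamma_pos_of_pos (by linarith))

/-- The normalized Jacobi factor as a polynomial in `u`. -/
def rho (d n : ℕ) (r : ℝ) : Polynomial ℝ :=
  Polynomial.C (((jac ((d:ℝ)/2 + r) ((d:ℝ)/2 - 2) (d * n)).eval 0)⁻¹) *
    jac ((d:ℝ)/2 + r) ((d:ℝ)/2 - 2) (d * n)

lemma rho_degree (d n : ℕ) (r : ℝ) : (rho d n r).natDegree ≤ d * n :=
  (Polynomial.natDegree_C_mul_le _ _).trans (jac_degree _ _ _)

lemma rho_zero {d n : ℕ} {r : ℝ} (hd : 3 ≤ d) (hr : 0 < r) : (rho d n r).eval 0 = 1 := by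
  have hd' : (3:ℝ) ≤ d := by exact_mod_cast hd
  rw [rho, Polynomial.eval_mul, Polynomial.eval_C, inv_mul_cancel₀]
  exact (jac_zero_pos (by linarith) (by linarith) _).ne'

lemma rho_eq {d n : ℕ} {r : ℝ} (hd : 3 ≤ d) (hr : 0 < r) (t : ℝ) :
    jacobiP ((d : ℝ) / 2 + r) ((d : ℝ) / 2 - 2) (d * n) t /
      jacobiP ((d : ℝ) / 2 + r) ((d : ℝ) / 2 - 2) (d * n) 1 = (rho d n r).eval ((1 - t)/2) := by
  have hd' : (3:ℝ) ≤ d := by exact_mod_cast hd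
  have h1 := jcoef_pos (α := (d:ℝ)/2 + r) (β := (d:ℝ)/2 - 2) (by linarith) (by linarith) (by linarith) (d * n)
  have h2 := jac_zero_pos (α := (d:ℝ)/2 + r) (β := (d:ℝ)/2 - 2) (by linarith) (by linarith) (d * n)
  rw [jacobiP_eq, jacobiP_eq, jp, rho]
  simp only [Polynomial.eval_mul, Polynomial.eval_C, sub_self, zero_div]
  generalize jac ((d:ℝ)/2 + r) ((d:ℝ)/2 - 2) (d * n) = q at *
  generalize jcoef ((d:ℝ)/2 + r) ((d:ℝ)/2 - 2) (d * n) = k at *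
  field_simp

lemma wI_rho {d n : ℕ} {r : ℝ} (hd : 3 ≤ d) (hr : 0 < r) (hn : 1 ≤ n) (hrn : r ≤ n) (hdn : d ≤ n) :
    wI ((d:ℝ)/2 + r - 2) ((d:ℝ)/2 - 1) (fun u => (rho d n r).eval u ^ 2) ≤
      580 * (n:ℝ)^2 * wI ((d:ℝ)/2 + r - 1) ((d:ℝ)/2 - 1) (fun u => (rho d n r).eval u ^ 2) ∧
    wI ((d:ℝ)/2 + r - 1) ((d:ℝ)/2 - 1) (fun u => (rho d n r).eval u ^ 2) ≤
      Gamma ((d:ℝ)/2 + r + 1) ^ 2 / (((d:ℝ)/2 + r) * ((d * n : ℕ):ℝ) ^ (2 * ((d:ℝ)/2 + r))) := by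
  have hd' : (3:ℝ) ≤ d := by exact_mod_cast hd
  have hn' : (1:ℝ) ≤ n := by exact_mod_cast hn
  have hdn' : (d:ℝ) ≤ n := by exact_mod_cast hdn
  have h2 := jac_zero_pos (α := (d:ℝ)/2 + r) (β := (d:ℝ)/2 - 2) (by linarith) (by linarith) (d * n)
  have hJ := orth_J (a := (d:ℝ)/2 + r) (b := (d:ℝ)/2 - 2) (by linarith) (by linarith) (N := d * n)
    (by nlinarith) (jac_orth (by linarith) (by linarith) (d * n)) (jac_degree _ _ _) hn' (by linarith)
    (by push_cast; nlinarith) (by push_cast; nlinarith)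
  have hI := I_le (α := (d:ℝ)/2 + r) (β := (d:ℝ)/2 - 2) (by linarith) (by linarith) (N := d * n)
    (by nlinarith)
  have e : (fun u => (rho d n r).eval u ^ 2) = fun u =>
      (((jac ((d:ℝ)/2 + r) ((d:ℝ)/2 - 2) (d * n)).eval 0)⁻¹) ^ 2 *
      ((jac ((d:ℝ)/2 + r) ((d:ℝ)/2 - 2) (d * n)).eval u * (jac ((d:ℝ)/2 + r) ((d:ℝ)/2 - 2) (d * n)).eval u) := by
    ext u
    rw [rho, Polynomial.eval_mul, Polynomial.eval_C]; ring
  rw [e, wI_smul, wI_smul]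
  rw [show (d:ℝ)/2 - 2 + 1 = (d:ℝ)/2 - 1 by ring] at hI hJ
  constructor
  · have := mul_le_mul_of_nonneg_left hJ (sq_nonneg (((jac ((d:ℝ)/2 + r) ((d:ℝ)/2 - 2) (d * n)).eval 0)⁻¹))
    linarith
  · have := mul_le_mul_of_nonneg_left hI (sq_nonneg (((jac ((d:ℝ)/2 + r) ((d:ℝ)/2 - 2) (d * n)).eval 0)⁻¹))
    refine this.trans (le_of_eq ?_)
    rw [mul_left_comm, ← mul_pow, inv_mul_cancel₀ h2.ne', one_pow, mul_one]

lemma mz_nonneg {d : ℕ} {n c : ℝ} {ν : SignedMeasure (Sph d)} (h : IsMZ d n ν c) (hn : 0 < n) :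
    0 ≤ c := by
  have := h (fun _ => 1) ((DegLE.const d 0 1).isSphPoly (by push_cast; linarith))
  simp at this
  exact le_trans (by positivity) this

lemma weighted (r : ℝ) (hr : 0 < r) : ∃ D : ℝ, 0 < D ∧ ∀ (d n : ℕ) (x : Sph d)
    (ν : SignedMeasure (Sph d)) (c : ℝ), 3 ≤ d → d ≤ n → r < n →
    IsMZ d ((2 * (d + 2) * n : ℕ) : ℝ) ν c →
    sphK d ((d + 2) * n) 1 * ∫ y, uu x y ^ r * (rho d n r).eval (uu x y) ^ 2 ∂ν.totalVariation
      ≤ D * (n:ℝ) ^ (-(2 * r)) * c := by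
  set s := ⌊r⌋₊ with hs
  have hs1 : (s:ℝ) ≤ r := Nat.floor_le hr.le
  have hs2 : r < s + 1 := Nat.lt_floor_add_one r
  set θ := r - s with hθ
  have hθ0 : 0 ≤ θ := by linarith
  have hθ1 : θ < 1 := by linarith
  obtain ⟨B, hB, hv⟩ := exists_v θ hθ0 hθ1
  refine ⟨582 * B * (exp 3 * (1 + r) ^ (2 * r)), by positivity, ?_⟩
  intro d n x ν c hd hdn hrn hν
  have hn : 1 ≤ n := by omega
  have hd' : (3:ℝ) ≤ d := by exact_mod_cast hd
  have hn' : (1:ℝ) ≤ n := by exact_mod_cast hn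
  have hdn' : (d:ℝ) ≤ n := by exact_mod_cast hdn
  have hsn : s < n := by
    have : (s:ℝ) < n := by linarith
    exact_mod_cast this
  have hc : 0 ≤ c := mz_nonneg hν (by positivity)
  obtain ⟨v, hv1, hv2⟩ := hv n hn
  set ρ := rho d n r with hρ
  have hρdeg : DegLE d (d * n) (fun y => ρ.eval (uu x y)) := by
    have := (uu_degLE x).poly ρ (rho_degree d n r)
    rwa [mul_one] at this
  have hsos : SOS d (s + n + d * n) (fun y => uu x y ^ s * v.eval (uu x y) * ρ.eval (uu x y) ^ 2) := by
    have := ((uu_sos x).pow s).mul (hv2 d x)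
    rw [mul_one] at this
    exact this.mul_sq hρdeg
  have h1 : ∫ y, uu x y ^ r * ρ.eval (uu x y) ^ 2 ∂ν.totalVariation ≤
      ∫ y, uu x y ^ s * v.eval (uu x y) * ρ.eval (uu x y) ^ 2 ∂ν.totalVariation := by
    have hcu := uu_continuous x
    apply integral_mono
    · apply sph_integrable
      have := hcu.rpow_const (p := r) (fun _ => Or.inr hr.le)
      have := hρdeg.continuous
      fun_prop
    · exact sph_integrable _ hsos.continuous
    · intro y
      have hu := uu_mem x y
      have h2 := (hv1 _ hu).1
      have e : uu x y ^ r = uu x y ^ s * uu x y ^ θ := by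
        rw [← rpow_natCast, ← rpow_add_of_nonneg hu.1 (by positivity) hθ0]
        congr 1; rw [hθ]; ring
      have hu0 := hu.1
      simp only []
      rw [e]
      gcongr
  have h2 := hsos.mz hν (by
    push_cast
    have : (s:ℝ) < n := by exact_mod_cast hsn
    nlinarith)
  have h3 : ∫ y, uu x y ^ s * v.eval (uu x y) * ρ.eval (uu x y) ^ 2 ∂sphMeasure d =
      kap d * wI ((d:ℝ)/2 - 1) ((d:ℝ)/2 - 1) (fun u => u ^ s * v.eval u * ρ.eval u ^ 2) := by
    have := zonal_u hd x (Polynomial.X ^ s * v * ρ ^ 2)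
    simpa using this
  set h : ℝ := ((n:ℝ) ^ 2)⁻¹ with hh
  have hh0 : 0 < h := by positivity
  have hhθ : (n:ℝ) ^ (-(2 * θ)) = h ^ θ := by
    rw [rpow_neg (by positivity), hh, inv_rpow (by positivity), rpow_mul (by positivity)]
    norm_num
  have hcθ : Continuous (fun u : ℝ => u ^ θ) := continuous_id.rpow_const (fun _ => Or.inr hθ0)
  have hcθ' : Continuous (fun u : ℝ => u ^ (1 - θ)) := continuous_id.rpow_const (fun _ => Or.inr (by linarith))
  have hρc : Continuous (fun u : ℝ => ρ.eval u) := ρ.continuous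
  have hvc : Continuous (fun u : ℝ => v.eval u) := v.continuous
  have h4 : wI ((d:ℝ)/2 - 1) ((d:ℝ)/2 - 1) (fun u => u ^ s * v.eval u * ρ.eval u ^ 2) ≤
      wI ((d:ℝ)/2 - 1) ((d:ℝ)/2 - 1) (fun u => u ^ s * (B * (u ^ θ + h ^ θ)) * ρ.eval u ^ 2) := by
    apply wI_mono (by linarith) (by linarith) (by fun_prop) (by fun_prop)
    intro u hu
    have h2 := (hv1 _ hu).2
    rw [hhθ] at h2
    have hu0 := hu.1
    gcongr
  have h5 : wI ((d:ℝ)/2 - 1) ((d:ℝ)/2 - 1) (fun u => u ^ s * (B * (u ^ θ + h ^ θ)) * ρ.eval u ^ 2) =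
      wI ((d:ℝ)/2 + r - 2) ((d:ℝ)/2 - 1) (fun u => B * (u + h ^ θ * u ^ (1 - θ)) * ρ.eval u ^ 2) := by
    apply wI_congr_ioo
    intro u hu
    have e1 : u ^ ((d:ℝ)/2 - 1) * u ^ s = u ^ ((d:ℝ)/2 + r - 2) * u ^ (1 - θ) := by
      rw [← rpow_natCast, ← rpow_add hu.1, ← rpow_add hu.1]
      congr 1; rw [hθ]; ring
    have e2 : u = u ^ (1 - θ) * u ^ θ := by
      rw [← rpow_add hu.1]; simp
    calc _ = (u ^ ((d:ℝ)/2 - 1) * u ^ s) * ((1 - u) ^ ((d:ℝ)/2 - 1) * (B * (u ^ θ + h ^ θ)) * ρ.eval u ^ 2) := by ring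
      _ = (u ^ ((d:ℝ)/2 + r - 2)) * ((1 - u) ^ ((d:ℝ)/2 - 1) * (B * (u ^ (1 - θ) * u ^ θ + h ^ θ * u ^ (1 - θ))) * ρ.eval u ^ 2) := by rw [e1]; ring
      _ = _ := by rw [← e2]; ring
  have h6 : wI ((d:ℝ)/2 + r - 2) ((d:ℝ)/2 - 1) (fun u => B * (u + h ^ θ * u ^ (1 - θ)) * ρ.eval u ^ 2) ≤
      wI ((d:ℝ)/2 + r - 2) ((d:ℝ)/2 - 1) (fun u => B * (2 * (u * ρ.eval u ^ 2) + h * ρ.eval u ^ 2)) := by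
    apply wI_mono (by linarith) (by linarith) (by fun_prop) (by fun_prop)
    intro u hu
    have h2 := Real.geom_mean_le_arith_mean2_weighted hθ0 (by linarith : 0 ≤ 1 - θ) hh0.le hu.1 (by ring)
    have h3 : θ * h + (1 - θ) * u ≤ h + u := by nlinarith [hu.1]
    have : B * (u + h ^ θ * u ^ (1 - θ)) * ρ.eval u ^ 2 ≤ B * (u + (h + u)) * ρ.eval u ^ 2 := by
      gcongr; exact h2.trans h3
    refine this.trans (le_of_eq ?_)
    ring
  have h7 : wI ((d:ℝ)/2 + r - 2) ((d:ℝ)/2 - 1) (fun u => B * (2 * (u * ρ.eval u ^ 2) + h * ρ.eval u ^ 2))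
      = B * (2 * wI ((d:ℝ)/2 + r - 1) ((d:ℝ)/2 - 1) (fun u => ρ.eval u ^ 2) +
        h * wI ((d:ℝ)/2 + r - 2) ((d:ℝ)/2 - 1) (fun u => ρ.eval u ^ 2)) := by
    rw [wI_smul, wI_add (by linarith) (by linarith) (by fun_prop) (by fun_prop), wI_smul, wI_smul,
      wI_mul_u, show (d:ℝ)/2 + r - 2 + 1 = (d:ℝ)/2 + r - 1 by ring]
  obtain ⟨h8, h9⟩ := wI_rho hd hr hn hrn.le hdn
  rw [← hρ] at h8 h9
  set I := wI ((d:ℝ)/2 + r - 1) ((d:ℝ)/2 - 1) (fun u => ρ.eval u ^ 2) with hI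
  set J := wI ((d:ℝ)/2 + r - 2) ((d:ℝ)/2 - 1) (fun u => ρ.eval u ^ 2) with hJ
  have h10 : h * J ≤ 580 * I := by
    rw [hh, inv_mul_le_iff₀ (by positivity)]; linarith
  have hkap := kap_pos hd
  have hK := sphK_one_pos hd ((d + 2) * n)
  have h11 : ∫ y, uu x y ^ r * ρ.eval (uu x y) ^ 2 ∂ν.totalVariation ≤ c * (kap d * (B * (582 * I))) := by
    refine h1.trans (h2.trans ?_)
    rw [h3]
    gcongr
    refine h4.trans (h5.le.trans (h6.trans (h7.le.trans ?_)))
    gcongr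
    linarith
  have h12 := key_size hd hr hdn'
  calc _ ≤ sphK d ((d + 2) * n) 1 * (c * (kap d * (B * (582 * I)))) := by gcongr
    _ = c * (582 * B) * (sphK d ((d + 2) * n) 1 * kap d * I) := by ring
    _ ≤ c * (582 * B) * (sphK d ((d + 2) * n) 1 * kap d * (Gamma ((d:ℝ)/2 + r + 1) ^ 2 / (((d:ℝ)/2 + r) * ((d * n : ℕ):ℝ) ^ (2 * ((d:ℝ)/2 + r))))) := by gcongr
    _ ≤ c * (582 * B) * (exp 3 * (1 + r) ^ (2 * r) * (n:ℝ) ^ (-(2 * r))) := by gcongr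
    _ = _ := by ring

end Part10

section Part11

lemma sphK_one_pos' {d : ℕ} (hd : 3 ≤ d) {M : ℕ} (hM : 1 ≤ M) : 0 < sphK d M 1 := by
  have hd' : (3:ℝ) ≤ d := by exact_mod_cast hd
  rw [sphK_one hd]
  apply Finset.sum_pos
  · intro l _
    have h0 : (0:ℝ) ≤ l := by positivity
    have g1 : 0 < Gamma ((l:ℝ) + d - 1) := Gamma_pos_of_pos (by linarith)
    have g2 : 0 < Gamma (d:ℝ) := Gamma_pos_of_pos (by linarith)
    have : 0 < 2 * (l:ℝ) + d - 1 := by linarith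
    have : (0:ℝ) < l.factorial := by exact_mod_cast l.factorial_pos
    positivity
  · exact ⟨0, Finset.mem_range.2 hM⟩

lemma ip_self {d : ℕ} (x : Sph d) : ip x x = 1 := by
  rw [ip_eq_sum, ← sph_sum_sq x]
  apply Finset.sum_congr rfl
  intro i _; ring

lemma sphK_degLE (d M : ℕ) (x : Sph d) : DegLE d (M - 1) (fun y => sphK d M (ip x y)) := by
  have h1 : (sphKp d M).natDegree ≤ M - 1 := by
    refine (Polynomial.natDegree_C_mul_le _ _).trans ?_
    have := jK_degree ((d:ℝ)/2 - 1) ((d:ℝ)/2 - 1) M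
    by_cases h0 : jK ((d:ℝ)/2 - 1) ((d:ℝ)/2 - 1) M = 0
    · simp [h0]
    · have := (Polynomial.natDegree_lt_iff_degree_lt h0).2 this
      omega
  have := (uu_degLE x).poly (sphKp d M) h1
  rw [mul_one] at this
  simp_rw [sphK_eq]
  exact this

lemma sphK_sq {d : ℕ} (hd : 3 ≤ d) {M : ℕ} (hM : 1 ≤ M) (x : Sph d)
    {ν : SignedMeasure (Sph d)} {c : ℝ} (hν : IsMZ d ((2 * M : ℕ):ℝ) ν c) :
    ∫ y, sphK d M (ip x y) ^ 2 ∂ν.totalVariation ≤ c * sphK d M 1 := by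
  have h1 := sphK_degLE d M x
  have h2 := hν _ (h1.isSphPoly (by
    push_cast
    have : ((M - 1 : ℕ) : ℝ) < M := by exact_mod_cast (by omega : M - 1 < M)
    linarith))
  have h3 := repro hd x (by omega : M - 1 < M) h1
  rw [ip_self] at h3
  rw [← h3]
  simpa only [sq] using h2

lemma Qbound (r : ℝ) (hr : 0 < r) : ∃ D : ℝ, 0 < D ∧ ∀ (d n : ℕ) (x : Sph d)
    (ν : SignedMeasure (Sph d)) (c : ℝ), 3 ≤ d → d ≤ n → r < n →
    IsMZ d ((2 * (d + 2) * n : ℕ) : ℝ) ν c →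
    ∫ y, dist x y ^ r * |sphK d ((d + 2) * n) (ip x y) * (rho d n r).eval (uu x y)| ∂ν.totalVariation
      ≤ D * (n:ℝ) ^ (-r) * c := by
  obtain ⟨D, hD, hw⟩ := weighted r hr
  refine ⟨1 + 4 ^ r * D, by positivity, ?_⟩
  intro d n x ν c hd hdn hrn hν
  have h1 := hw d n x ν c hd hdn hrn hν
  set M := (d + 2) * n with hM
  have hM1 : 1 ≤ M := by rw [hM]; nlinarith
  have h2 := sphK_sq hd hM1 x (c := c) (ν := ν) (by rw [hM, ← mul_assoc]; exact hν)
  have hK := sphK_one_pos' hd hM1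
  set K1 := sphK d M 1 with hK1
  have hn0 : (0:ℝ) < n := by exact_mod_cast (by omega : 0 < n)
  have hc : 0 ≤ c := mz_nonneg hν (by push_cast; positivity)
  have hnr : 0 < (n:ℝ) ^ (-r) := by positivity
  set ρ := rho d n r with hρ
  set t := (n:ℝ) ^ (-r) with ht
  have ht2 : (n:ℝ) ^ (-(2 * r)) = t * t := by
    rw [ht, ← rpow_add hn0]; congr 1; ring
  rw [ht2] at h1
  have hKc := (sphK_degLE d M x).continuous
  have hcu := uu_continuous x
  have hur := hcu.rpow_const (p := r) (fun _ => Or.inr hr.le)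
  have hdr : Continuous (fun y => dist x y ^ r) :=
    (continuous_const.dist continuous_id).rpow_const (fun _ => Or.inr hr.le)
  have hρc : Continuous (fun y => ρ.eval (uu x y)) := ρ.continuous.comp hcu
  have hdist : ∀ y, (dist x y ^ r) ^ 2 = 4 ^ r * uu x y ^ r := by
    intro y
    rw [← rpow_natCast, ← rpow_mul dist_nonneg, mul_comm r, rpow_mul dist_nonneg, rpow_natCast,
      uu_dist, mul_rpow (by norm_num) (uu_mem x y).1]
  have h3 : ∀ y, dist x y ^ r * |sphK d M (ip x y) * ρ.eval (uu x y)| ≤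
      t / K1 * sphK d M (ip x y) ^ 2 + 4 ^ r * (K1 / t) * (uu x y ^ r * ρ.eval (uu x y) ^ 2) := by
    intro y
    have e : 4 ^ r * (K1 / t) * (uu x y ^ r * ρ.eval (uu x y) ^ 2) =
        (dist x y ^ r * |ρ.eval (uu x y)|) ^ 2 / (t / K1) := by
      rw [mul_pow, hdist, sq_abs]; field_simp
    rw [e, abs_mul, ← sq_abs (sphK d M (ip x y))]
    set a := |sphK d M (ip x y)|
    set b := dist x y ^ r * |ρ.eval (uu x y)|
    have e2 : dist x y ^ r * (a * |ρ.eval (uu x y)|) = a * b := by simp only [b]; ring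
    rw [e2]
    have hτ : 0 < t / K1 := by positivity
    set τ := t / K1
    have e3 : τ * a ^ 2 + b ^ 2 / τ = (τ * a - b) ^ 2 / τ + 2 * (a * b) := by field_simp; ring
    rw [e3]
    have a0 : 0 ≤ a * b := by simp only [a, b]; positivity
    have : 0 ≤ (τ * a - b) ^ 2 / τ := by positivity
    linarith
  calc _ ≤ ∫ y, (t / K1 * sphK d M (ip x y) ^ 2 + 4 ^ r * (K1 / t) * (uu x y ^ r * ρ.eval (uu x y) ^ 2))
        ∂ν.totalVariation := by
        apply integral_mono
        · exact sph_integrable _ (by fun_prop)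
        · exact sph_integrable _ (by fun_prop)
        · exact h3
    _ = t / K1 * ∫ y, sphK d M (ip x y) ^ 2 ∂ν.totalVariation + 4 ^ r / t * (K1 *
        ∫ y, uu x y ^ r * ρ.eval (uu x y) ^ 2 ∂ν.totalVariation) := by
        rw [integral_add (sph_integrable _ (by fun_prop)) (sph_integrable _ (by fun_prop)),
          integral_const_mul, integral_const_mul]
        ring
    _ ≤ t / K1 * (c * K1) + 4 ^ r / t * (D * (t * t) * c) := by gcongr
    _ = _ := by field_simp

end Part11

section Part12

open Polynomial in
lemma poly_abs_le (q : Polynomial ℝ) {N : ℕ} (hq : q.natDegree ≤ N) :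
    ∃ C : ℝ, 0 ≤ C ∧ ∀ T : ℝ, 1 ≤ T → |q.eval T| ≤ C * T ^ N := by
  refine ⟨∑ k ∈ Finset.range (N + 1), |q.coeff k|, Finset.sum_nonneg fun _ _ => abs_nonneg _, ?_⟩
  intro T hT
  rw [Polynomial.eval_eq_sum_range' (Nat.lt_succ_of_le hq), Finset.sum_mul]
  refine (Finset.abs_sum_le_sum_abs _ _).trans ?_
  apply Finset.sum_le_sum
  intro k hk
  rw [abs_mul, abs_of_nonneg (by positivity : (0:ℝ) ≤ T ^ k)]
  gcongr
  exact Nat.lt_succ_iff.1 (Finset.mem_range.1 hk)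

open Polynomial in
lemma lagrange_growth (N : ℕ) : ∃ C : ℝ, 0 ≤ C ∧ ∀ (Q : Polynomial ℝ) (B T : ℝ), Q.natDegree ≤ N →
    (∀ t ∈ Icc (0:ℝ) 1, |Q.eval t| ≤ B) → 1 ≤ T → |Q.eval T| ≤ C * B * T ^ N := by
  classical
  set v : ℕ → ℝ := fun j => (j:ℝ) / (N + 1) with hv
  set s := Finset.range (N + 1) with hs
  have hinj : Set.InjOn v s := by
    intro a _ b _ hab
    simp only [hv] at hab
    have : ((N:ℝ) + 1) ≠ 0 := by positivity
    field_simp at hab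
    exact_mod_cast hab
  have hb : ∀ j, ∃ C : ℝ, j ∈ s → 0 ≤ C ∧ ∀ T : ℝ, 1 ≤ T → |(Lagrange.basis s v j).eval T| ≤ C * T ^ N := by
    intro j
    by_cases hj : j ∈ s
    · have h1 := Lagrange.natDegree_basis hinj hj
      obtain ⟨C, h⟩ := poly_abs_le (Lagrange.basis s v j) (N := N) (by rw [h1, hs, Finset.card_range]; omega)
      exact ⟨C, fun _ => h⟩
    · exact ⟨0, fun h => absurd h hj⟩
  choose C hC using hb
  refine ⟨∑ j ∈ s, C j, Finset.sum_nonneg fun j hj => (hC j hj).1, ?_⟩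
  intro Q B T hQ hB hT
  have hdeg : Q.degree < s.card := by
    rw [hs, Finset.card_range]
    exact lt_of_le_of_lt Polynomial.degree_le_natDegree (by exact_mod_cast Nat.lt_succ_of_le hQ)
  rw [Lagrange.eq_interpolate hinj hdeg, Lagrange.interpolate_apply, Polynomial.eval_finsetSum]
  refine (Finset.abs_sum_le_sum_abs _ _).trans ?_
  rw [Finset.sum_mul, Finset.sum_mul]
  apply Finset.sum_le_sum
  intro j hj
  rw [Polynomial.eval_mul, Polynomial.eval_C, abs_mul]
  obtain ⟨h1, h2⟩ := hC j hj
  have h3 : v j ∈ Icc (0:ℝ) 1 := by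
    constructor
    · simp only [hv]; positivity
    · simp only [hv]
      rw [div_le_one (by positivity)]
      exact_mod_cast (Finset.mem_range.1 hj).le
  have hB0 : 0 ≤ B := (abs_nonneg _).trans (hB 0 (by simp))
  calc _ ≤ B * (C j * T ^ N) := by
        gcongr
        · exact hB _ h3
        · exact h2 T hT
    _ = _ := by ring

open Polynomial in
lemma rat_subst {k m : ℕ} (p : MvPolynomial (Fin k) ℝ) (hp : p.totalDegree ≤ m)
    (a : Fin k → Polynomial ℝ) (b : Polynomial ℝ) (ha : ∀ i, (a i).natDegree ≤ 2)
    (hb : b.natDegree ≤ 2) :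
    ∃ q : Polynomial ℝ, q.natDegree ≤ 2 * m ∧ ∀ t, b.eval t ≠ 0 →
      q.eval t = b.eval t ^ m * MvPolynomial.eval (fun i => (a i).eval t / b.eval t) p := by
  have hdeg : ∀ e ∈ p.support, ∑ i, e i ≤ m := by
    intro e he
    have h := (MvPolynomial.le_totalDegree he).trans hp
    rwa [Finsupp.sum_fintype _ _ (fun _ => rfl)] at h
  refine ⟨∑ e ∈ p.support, C (p.coeff e) * ((∏ i, a i ^ e i) * b ^ (m - ∑ i, e i)), ?_, ?_⟩
  · apply natDegree_sum_le_of_forall_le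
    intro e he
    refine (natDegree_C_mul_le _ _).trans (natDegree_mul_le.trans ?_)
    have h1 : (∏ i, a i ^ e i).natDegree ≤ ∑ i, 2 * e i := by
      refine (natDegree_prod_le _ _).trans (Finset.sum_le_sum fun i _ => ?_)
      refine natDegree_pow_le.trans ?_
      rw [mul_comm]; exact Nat.mul_le_mul_right _ (ha i)
    have h2 : (b ^ (m - ∑ i, e i)).natDegree ≤ (m - ∑ i, e i) * 2 :=
      natDegree_pow_le.trans (Nat.mul_le_mul_left _ hb)
    rw [← Finset.mul_sum] at h1
    have := hdeg e he
    omega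
  · intro t ht
    rw [MvPolynomial.eval_eq', Finset.mul_sum, eval_finsetSum]
    apply Finset.sum_congr rfl
    intro e he
    simp only [eval_mul, eval_C, eval_pow, eval_prod, div_pow, Finset.prod_div_distrib]
    rw [Finset.prod_pow_eq_pow_sum]
    have h3 : b.eval t ^ m = b.eval t ^ (m - ∑ i, e i) * b.eval t ^ (∑ i, e i) := by
      rw [← pow_add]; congr 1; have := hdeg e he; omega
    rw [h3]
    have : b.eval t ^ (∑ i, e i) ≠ 0 := pow_ne_zero _ ht
    field_simp

lemma growth (m : ℕ) : ∃ C : ℝ, 0 ≤ C ∧ ∀ (d : ℕ) (P : Sph d → ℝ) (x y : Sph d) (δ A : ℝ),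
    DegLE d m P → 0 < δ → δ ≤ 2 → (∀ z ∈ Metric.closedBall x δ, |P z| ≤ A) → δ ≤ dist x y →
    uu x y ≠ 1 → |P y| ≤ C * A * (4 / δ ^ 2) ^ m := by
  obtain ⟨C, hC, hg⟩ := lagrange_growth (2 * m)
  refine ⟨C * 2 ^ m, by positivity, ?_⟩
  intro d P x y δ A hP hδ hδ2 hA hxy hne
  have hA0 : 0 ≤ A := (abs_nonneg _).trans (hA x (by simp [hδ.le]))
  obtain ⟨p, hp, hPp⟩ := hP
  set c := ip x y with hc
  have hu := uu_mem x y
  have hc1 : 0 < 1 + c := by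
    have h1 : uu x y < 1 := lt_of_le_of_ne hu.2 hne
    rw [uu, ← hc] at h1; linarith
  set W := (1 - c) / (1 + c) with hW
  have huW : uu x y * (1 + W) = W := by
    rw [uu, ← hc, hW]; field_simp; ring
  have hδu : δ ^ 2 / 4 ≤ uu x y := by
    have := uu_dist x y
    have h2 : δ ^ 2 ≤ dist x y ^ 2 := by gcongr
    linarith
  have hW0 : 0 ≤ W := by
    have := hu.2; have := hu.1
    rw [uu, ← hc] at this
    rw [hW]; exact div_nonneg (by linarith) hc1.le
  have hδW : δ ^ 2 / 4 ≤ W := by nlinarith [hu.1]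
  have hWpos : 0 < W := lt_of_lt_of_le (by positivity) hδW
  set X : Fin (d+1) → ℝ := fun i => (x : Amb d) i with hX
  set Y : Fin (d+1) → ℝ := fun i => (y : Amb d) i with hY
  set w : Fin (d+1) → ℝ := fun i => (Y i - c * X i) / (1 + c) with hw
  have sxx : ∑ i, X i ^ 2 = 1 := sph_sum_sq x
  have syy : ∑ i, Y i ^ 2 = 1 := sph_sum_sq y
  have sxy : ∑ i, X i * Y i = c := (ip_eq_sum x y).symm
  have sxw : ∑ i, X i * w i = 0 := by
    have : ∀ i, X i * w i = (X i * Y i) * (1 + c)⁻¹ - X i ^ 2 * (c * (1 + c)⁻¹) := by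
      intro i; simp only [hw]; field_simp
    simp_rw [this]
    rw [Finset.sum_sub_distrib, ← Finset.sum_mul, ← Finset.sum_mul, sxx, sxy]; ring
  have sww : ∑ i, w i ^ 2 = W := by
    have : ∀ i, w i ^ 2 = (Y i ^ 2) * ((1 + c)⁻¹ ^ 2) - (X i * Y i) * (2 * c * (1 + c)⁻¹ ^ 2)
        + X i ^ 2 * (c ^ 2 * (1 + c)⁻¹ ^ 2) := by
      intro i; simp only [hw]; field_simp; ring
    simp_rw [this]
    rw [Finset.sum_add_distrib, Finset.sum_sub_distrib, ← Finset.sum_mul, ← Finset.sum_mul,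
      ← Finset.sum_mul, sxx, sxy, syy, hW]
    field_simp; ring
  set a : Fin (d+1) → Polynomial ℝ := fun i =>
    Polynomial.C (X i) + Polynomial.C (2 * w i) * Polynomial.X - Polynomial.C (W * X i) * Polynomial.X ^ 2 with ha
  set b : Polynomial ℝ := Polynomial.C 1 + Polynomial.C W * Polynomial.X ^ 2 with hb
  have had : ∀ i, (a i).natDegree ≤ 2 := by
    intro i; simp only [ha]; compute_degree
  have hbd : b.natDegree ≤ 2 := by simp only [hb]; compute_degree
  have hae : ∀ i t, (a i).eval t = X i + 2 * w i * t - W * X i * t ^ 2 := by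
    intro i t; simp [ha]
  have hbe : ∀ t, b.eval t = 1 + W * t ^ 2 := by intro t; simp [hb]
  have hbp : ∀ t, 0 < b.eval t := by intro t; rw [hbe]; positivity
  obtain ⟨q, hq, hqe⟩ := rat_subst p hp a b had hbd
  -- the curve
  have hz : ∀ t : ℝ, ∃ z : Sph d, (∀ i, (z : Amb d) i = (a i).eval t / b.eval t) ∧
      uu x z = W * t ^ 2 / (1 + W * t ^ 2) := by
    intro t
    have hbt := hbp t
    have hs : ∑ i, ((a i).eval t / b.eval t) ^ 2 = 1 := by
      have : ∀ i, ((a i).eval t / b.eval t) ^ 2 = (X i ^ 2 * (1 - W * t ^ 2) ^ 2 +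
          X i * w i * (4 * t * (1 - W * t ^ 2)) + w i ^ 2 * (4 * t ^ 2)) / b.eval t ^ 2 := by
        intro i; rw [hae, div_pow]; congr 1; ring
      simp_rw [this]
      rw [← Finset.sum_div, Finset.sum_add_distrib, Finset.sum_add_distrib, ← Finset.sum_mul,
        ← Finset.sum_mul, ← Finset.sum_mul, sxx, sxw, sww, div_eq_one_iff_eq (by positivity), hbe]
      ring
    let z0 : Amb d := WithLp.toLp 2 (fun i => (a i).eval t / b.eval t)
    have hz0 : ‖z0‖ = 1 := by
      rw [EuclideanSpace.norm_eq]
      simp only [z0, Real.norm_eq_abs, sq_abs]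
      rw [hs, sqrt_one]
    refine ⟨⟨z0, by simp [hz0]⟩, fun i => rfl, ?_⟩
    rw [uu, ip_eq_sum]
    have : ∀ i, X i * ((a i).eval t / b.eval t) = (X i ^ 2 * (1 - W * t ^ 2) +
          X i * w i * (2 * t)) / b.eval t := by
      intro i; rw [hae]; ring
    have h2 : ∑ i, X i * ((a i).eval t / b.eval t) = (1 - W * t ^ 2) / (1 + W * t ^ 2) := by
      simp_rw [this]
      rw [← Finset.sum_div, Finset.sum_add_distrib, ← Finset.sum_mul, ← Finset.sum_mul, sxx, sxw, hbe]
      ring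
    change (1 - ∑ i, X i * ((a i).eval t / b.eval t)) / 2 = _
    rw [h2]
    have : (1 + W * t ^ 2) ≠ 0 := by positivity
    field_simp; ring
  -- bound near zero
  set e := δ / (2 * √W) with he
  have hsW : 0 < √W := sqrt_pos.2 hWpos
  have he0 : 0 < e := by positivity
  have he2 : W * e ^ 2 = δ ^ 2 / 4 := by
    rw [he, div_pow, mul_pow, sq_sqrt hW0]; field_simp; norm_num
  have he1 : e ≤ 1 := by
    by_contra h
    push Not at h
    have : 1 < e ^ 2 := by nlinarith
    nlinarith
  have hnear : ∀ t ∈ Icc (0:ℝ) 1, |(q.comp (Polynomial.C e * Polynomial.X)).eval t| ≤ A * 2 ^ m := by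
    intro t ht
    simp only [Polynomial.eval_comp, Polynomial.eval_mul, Polynomial.eval_C, Polynomial.eval_X]
    obtain ⟨z, hz1, hz2⟩ := hz (e * t)
    have h1 : W * (e * t) ^ 2 ≤ δ ^ 2 / 4 := by
      rw [mul_pow, ← mul_assoc, he2]
      have : t ^ 2 ≤ 1 := by nlinarith [ht.1, ht.2]
      nlinarith [sq_nonneg δ]
    have h0 : 0 ≤ W * (e * t) ^ 2 := by positivity
    have h2 : uu x z ≤ δ ^ 2 / 4 := by
      rw [hz2]
      exact (div_le_self h0 (by linarith)).trans h1
    have h3 : z ∈ Metric.closedBall x δ := by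
      rw [Metric.mem_closedBall, dist_comm]
      have := uu_dist x z
      exact le_of_sq_le_sq (by linarith) hδ.le
    rw [hqe _ (hbp _).ne', abs_mul, abs_of_pos (pow_pos (hbp _) m)]
    have h4 : MvPolynomial.eval (fun i => (a i).eval (e * t) / b.eval (e * t)) p = P z := by
      rw [hPp z]; congr 2; ext i; exact (hz1 i).symm
    rw [h4, mul_comm]
    have h5 : b.eval (e * t) ≤ 2 := by
      rw [hbe]
      nlinarith
    have h6 := pow_le_pow_left₀ (hbp (e * t)).le h5 m
    exact mul_le_mul (hA z h3) h6 (pow_nonneg (hbp _).le m) hA0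
  have hfin := hg (q.comp (Polynomial.C e * Polynomial.X)) (A * 2 ^ m) (1 / e) (by
    refine Polynomial.natDegree_comp_le.trans ?_
    refine (Nat.mul_le_mul hq (?_ : _ ≤ 1)).trans (mul_one _).le
    compute_degree) hnear (by rw [le_div_iff₀ he0]; linarith)
  simp only [Polynomial.eval_comp, Polynomial.eval_mul, Polynomial.eval_C, Polynomial.eval_X] at hfin
  rw [mul_one_div_cancel he0.ne', hqe _ (hbp _).ne', abs_mul, abs_of_pos (pow_pos (hbp _) m)] at hfin
  have h6 : MvPolynomial.eval (fun i => (a i).eval 1 / b.eval 1) p = P y := by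
    rw [hPp y]; congr 2; ext i
    rw [hae, hbe]
    simp only [hw]
    have : 1 + W * 1 ^ 2 ≠ 0 := by positivity
    rw [div_eq_iff this, hW]
    change _ = Y i * _
    field_simp
    ring
  rw [h6, hbe] at hfin
  have h7 : (1 / e) ^ (2 * m) = (4 / δ ^ 2) ^ m * W ^ m := by
    rw [pow_mul, ← mul_pow]
    congr 1
    rw [div_pow, one_pow, div_eq_iff (by positivity)]
    have := he2
    field_simp
    linarith
  have h8 : W ^ m ≤ (1 + W * 1 ^ 2) ^ m := by gcongr; linarith
  have h9 : 0 < (1 + W * 1 ^ 2) ^ m := by positivity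
  rw [h7] at hfin
  have h10 : (1 + W * 1 ^ 2) ^ m * |P y| ≤ (1 + W * 1 ^ 2) ^ m * (C * 2 ^ m * A * (4 / δ ^ 2) ^ m) := by
    refine hfin.trans ?_
    calc _ = (C * 2 ^ m * A * (4 / δ ^ 2) ^ m) * W ^ m := by ring
      _ ≤ (C * 2 ^ m * A * (4 / δ ^ 2) ^ m) * (1 + W * 1 ^ 2) ^ m := by gcongr
      _ = _ := by ring
  exact le_of_mul_le_mul_left h10 h9

end Part12

lemma le_supNorm {d : ℕ} {f : Sph d → ℝ} (hf : Continuous f) (y : Sph d) : |f y| ≤ supNorm f := by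
  apply le_csSup
  · exact (isCompact_range hf.abs).bddAbove
  · exact ⟨y, rfl⟩

lemma sInt_sub {d : ℕ} (ν : SignedMeasure (Sph d)) {f g : Sph d → ℝ} (hf : Continuous f)
    (hg : Continuous g) : sInt ν f - sInt ν g = sInt ν (fun y => f y - g y) := by
  unfold sInt
  rw [integral_sub (sph_integrable _ hf) (sph_integrable _ hg),
    integral_sub (sph_integrable _ hf) (sph_integrable _ hg)]
  ring

lemma sInt_abs_le {d : ℕ} (ν : SignedMeasure (Sph d)) {g : Sph d → ℝ} (hg : Continuous g) :
    |sInt ν g| ≤ ∫ y, |g y| ∂ν.totalVariation := by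
  unfold sInt SignedMeasure.totalVariation
  rw [integral_add_measure (sph_integrable _ hg.abs) (sph_integrable _ hg.abs)]
  refine (abs_sub _ _).trans ?_
  exact add_le_add (abs_integral_le_integral_abs) (abs_integral_le_integral_abs)

set_option maxHeartbeats 1000000 in
lemma pointwise (r : ℝ) (hr : 0 < r) : ∃ E : ℝ, 0 < E ∧ ∀ (d n : ℕ) (x : Sph d) (f P : Sph d → ℝ)
    (L S : ℝ), 3 ≤ n → 0 ≤ L → (∀ y, |f y| ≤ S) → DegLE d (⌈r⌉₊ - 1) P →
    (∀ y ∈ Metric.closedBall x (√(16 * r * Real.log n / n)), |f y - P y| ≤ L * dist x y ^ r) →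
    ∀ y, |f y - P y| * (1 - uu x y) ^ n ≤ E * (S + L) * dist x y ^ r := by
  set m := ⌈r⌉₊ - 1 with hm
  have hmr : (m:ℝ) ≤ r := by
    have h1 := Nat.ceil_lt_add_one hr.le
    have h2 : 0 < ⌈r⌉₊ := Nat.ceil_pos.2 hr
    have h3 : ((m + 1 : ℕ) : ℝ) = (⌈r⌉₊ : ℝ) := by congr 1; omega
    push_cast at h3; linarith
  obtain ⟨C, hC, hg⟩ := growth m
  have h4r : 0 < (4 * r) ^ (2 * r) := by positivity
  refine ⟨1 + (1 + 2 ^ r * C) / (4 * r) ^ (2 * r), by positivity, ?_⟩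
  intro d n x f P L S hn hL hf hP hball y
  have hn' : (3:ℝ) ≤ n := by exact_mod_cast hn
  have hn0 : (0:ℝ) < n := by linarith
  have hS : 0 ≤ S := (abs_nonneg _).trans (hf x)
  have hlog : 1 ≤ Real.log n := by
    rw [le_log_iff_exp_le hn0]
    have := exp_one_lt_d9
    linarith
  set δ := √(16 * r * Real.log n / n) with hδ
  have hδsq : δ ^ 2 = 16 * r * Real.log n / n := sq_sqrt (by positivity)
  have hδ0 : 0 < δ := sqrt_pos.2 (by positivity)
  have hu := uu_mem x y
  have h1u : (1 - uu x y) ^ n ≤ 1 := pow_le_one₀ (by linarith [hu.2]) (by linarith [hu.1])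
  have h1u0 : 0 ≤ (1 - uu x y) ^ n := pow_nonneg (by linarith [hu.2]) _
  have hd0 : 0 ≤ dist x y ^ r := by positivity
  set F := (1 + 2 ^ r * C) / (4 * r) ^ (2 * r) with hF
  have hF0 : 0 ≤ F := by positivity
  by_cases hin : y ∈ Metric.closedBall x δ
  · have h1 := hball y hin
    calc _ ≤ (L * dist x y ^ r) * 1 := by gcongr
      _ = L * dist x y ^ r := mul_one _
      _ ≤ _ := by
        gcongr
        nlinarith [mul_nonneg hF0 hS, mul_nonneg hF0 hL]
  · have hdist : δ < dist x y := by
      rw [Metric.mem_closedBall, dist_comm] at hin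
      exact not_le.1 hin
    by_cases hone : uu x y = 1
    · rw [hone, sub_self, zero_pow (by omega), mul_zero]
      positivity
    · have hdu := uu_dist x y
      set h := δ ^ 2 / 4 with hh
      have hh0 : 0 < h := by positivity
      have hhu : h ≤ uu x y := by
        have : δ ^ 2 ≤ dist x y ^ 2 := by gcongr
        rw [hh]; linarith
      have hh1 : h ≤ 1 := hhu.trans hu.2
      have hδ2 : δ ≤ 2 := by
        have : δ ^ 2 ≤ 2 ^ 2 := by rw [hh] at hh1; linarith
        exact le_of_sq_le_sq this (by norm_num)
      have hA : ∀ z ∈ Metric.closedBall x δ, |P z| ≤ S + 2 ^ r * L := by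
        intro z hz
        have h1 := hball z hz
        have h2 : dist x z ^ r ≤ 2 ^ r := by
          rw [Metric.mem_closedBall, dist_comm] at hz
          exact rpow_le_rpow dist_nonneg (hz.trans hδ2) hr.le
        have h3 : L * dist x z ^ r ≤ L * 2 ^ r := by gcongr
        have h4 : |P z| ≤ |f z| + |f z - P z| := by
          have := abs_sub (f z) (f z - P z)
          rwa [sub_sub_cancel] at this
        linarith [hf z]
      have hPy := hg d P x y δ (S + 2 ^ r * L) hP hδ0 hδ2 hA hdist.le hone
      have hinv : 4 / δ ^ 2 = h⁻¹ := by rw [hh, inv_div]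
      rw [hinv] at hPy
      have hinv1 : 1 ≤ h⁻¹ := (one_le_inv₀ hh0).2 hh1
      have h5 : h⁻¹ ^ m ≤ (h ^ r)⁻¹ := by
        rw [← inv_rpow hh0.le, ← rpow_natCast]
        exact rpow_le_rpow_of_exponent_le hinv1 hmr
      have hhr0 : 0 < h ^ r := by positivity
      have hhr1 : 1 ≤ (h ^ r)⁻¹ := (one_le_inv₀ hhr0).2 (rpow_le_one hh0.le hh1 hr.le)
      have h2r : (1:ℝ) ≤ 2 ^ r := one_le_rpow (by norm_num) hr.le
      have h6 : |f y - P y| ≤ (1 + 2 ^ r * C) * (S + L) * (h ^ r)⁻¹ := by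
        have a1 : |P y| ≤ C * (S + 2 ^ r * L) * (h ^ r)⁻¹ := hPy.trans (by gcongr)
        have a2 : |f y - P y| ≤ |f y| + |P y| := abs_sub _ _
        have a3 : |f y| ≤ S * (h ^ r)⁻¹ := (hf y).trans (le_mul_of_one_le_right hS hhr1)
        have a4 : S + C * (S + 2 ^ r * L) ≤ (1 + 2 ^ r * C) * (S + L) := by
          nlinarith [mul_nonneg hC hS, mul_nonneg hC hL]
        calc _ ≤ (S + C * (S + 2 ^ r * L)) * (h ^ r)⁻¹ := by linarith
          _ ≤ _ := by gcongr
      have h7 : (1 - uu x y) ^ n ≤ (n:ℝ) ^ (-(4 * r)) := by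
        have b1 : 1 - uu x y ≤ exp (-h) := by
          have := add_one_le_exp (-h); linarith
        have b2 : (1 - uu x y) ^ n ≤ exp (-h) ^ n := pow_le_pow_left₀ (by linarith [hu.2]) b1 n
        refine b2.trans (le_of_eq ?_)
        rw [← exp_nat_mul, rpow_def_of_pos hn0]
        congr 1
        rw [hh, hδsq]; field_simp; ring
      have h8 : (4 * r) ^ (2 * r) * (n:ℝ) ^ (-(2 * r)) ≤ h ^ r * h ^ r := by
        rw [← rpow_add hh0, ← two_mul, rpow_neg hn0.le, ← inv_rpow hn0.le, ← mul_rpow (by positivity) (by positivity)]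
        apply rpow_le_rpow (by positivity) _ (by positivity)
        rw [hh, hδsq, ← div_eq_mul_inv, div_div, div_le_div_iff₀ hn0 (by positivity)]
        nlinarith [mul_pos hr hn0]
      have h9 : h ^ r ≤ dist x y ^ r := by
        apply rpow_le_rpow hh0.le _ hr.le
        rw [hh]; nlinarith
      have h10 : (n:ℝ) ^ (-(4 * r)) ≤ (n:ℝ) ^ (-(2 * r)) :=
        rpow_le_rpow_of_exponent_le (by linarith) (by linarith)
      have h11 : (h ^ r)⁻¹ * (n:ℝ) ^ (-(4 * r)) ≤ ((4 * r) ^ (2 * r))⁻¹ * dist x y ^ r := by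
        rw [inv_mul_le_iff₀ hhr0]
        have : (n:ℝ) ^ (-(2 * r)) ≤ ((4 * r) ^ (2 * r))⁻¹ * (h ^ r * h ^ r) := by
          rw [le_inv_mul_iff₀ h4r]; exact h8
        calc _ ≤ ((4 * r) ^ (2 * r))⁻¹ * (h ^ r * h ^ r) := h10.trans this
          _ ≤ ((4 * r) ^ (2 * r))⁻¹ * (h ^ r * dist x y ^ r) := by gcongr
          _ = _ := by ring
      calc _ ≤ ((1 + 2 ^ r * C) * (S + L) * (h ^ r)⁻¹) * (n:ℝ) ^ (-(4 * r)) := by gcongr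
        _ = ((1 + 2 ^ r * C) * (S + L)) * ((h ^ r)⁻¹ * (n:ℝ) ^ (-(4 * r))) := by ring
        _ ≤ ((1 + 2 ^ r * C) * (S + L)) * (((4 * r) ^ (2 * r))⁻¹ * dist x y ^ r) := by gcongr
        _ = F * (S + L) * dist x y ^ r := by rw [hF]; ring
        _ ≤ _ := by gcongr; linarith

lemma Phi_eq {d n : ℕ} {r : ℝ} (hd : 3 ≤ d) (hr : 0 < r) (x y : Sph d) :
    Phi d n r (ip x y) = sphK d ((d + 2) * n) (ip x y) * (rho d n r).eval (uu x y) *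
      (1 - uu x y) ^ n := by
  rw [Phi, PhiTilde, rho_eq hd hr, uu]
  congr 2; ring

/-- Local approximation: if `f` is `r`-smooth at `x` (with local Lipschitz-type constant `L`
for some `P ∈ Π_r^d` on the cap `B(x,δ)`), then `σ_{d;n,r}(ν,f)(x)` approximates `f(x)`
with rate `dim(Π_{2(d+2)n}^d)^{−r/d}`, the constant depending only on `r`. -/
theorem local_smooth_approx :
    ∀ r : ℝ, 0 < r → ∃ C : ℝ, 0 < C ∧
      ∀ (d : ℕ) (x : Sph d) (δ : ℝ) (f : Sph d → ℝ) (L : ℝ) (n : ℕ)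
        (ν : SignedMeasure (Sph d)) (c : ℝ),
        3 ≤ d → 0 < δ → Continuous f → 0 ≤ L →
        (∃ P, IsSphPoly d r P ∧
          ∀ y ∈ Metric.closedBall x δ, |f y - P y| ≤ L * dist x y ^ r) →
        ((d : ℝ) + r + 1) ^ 2 ≤ (n : ℝ) * d →
        Real.sqrt (16 * r * Real.log n / n) ≤ δ →
        IsQuadrature d ((2 * (d + 2) * n : ℕ) : ℝ) ν →
        IsMZ d ((2 * (d + 2) * n : ℕ) : ℝ) ν c →
        |f x - sigmaOp d n r ν f x| ≤
          C * (d : ℝ) ^ ((1 : ℝ)/6) * dimPi d (2 * (d + 2) * n) ^ (-(r / (d : ℝ))) *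
            (supNorm f + L) * c := by
  intro r hr
  obtain ⟨E, hE, hpw⟩ := pointwise r hr
  obtain ⟨D, hD, hQ⟩ := Qbound r hr
  refine ⟨E * D * (8 * exp 1) ^ r, by positivity, ?_⟩
  intro d x δ f L n ν c hd hδ hf hL hP hnd hδn hq hmz
  obtain ⟨P, hPr, hball⟩ := hP
  have hd' : (3:ℝ) ≤ d := by exact_mod_cast hd
  have hn1 : (d:ℝ) + 2 * (r + 1) ≤ n := by
    by_contra h
    push Not at h
    nlinarith [mul_lt_mul_of_pos_right h (by linarith : (0:ℝ) < d), sq_nonneg (r + 1)]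
  have hdn : d ≤ n := by
    have : (d:ℝ) ≤ n := by linarith
    exact_mod_cast this
  have hrn : r < n := by linarith
  have hn3 : 3 ≤ n := hd.trans hdn
  set m := ⌈r⌉₊ - 1 with hm
  have hPd : DegLE d m P := by
    obtain ⟨p, h1, h2⟩ := hPr
    refine ⟨p, ?_, h2⟩
    have := Nat.lt_ceil.2 h1
    omega
  have hmn : m < n := by
    have h1 := Nat.ceil_lt_add_one hr.le
    have h2 : 0 < ⌈r⌉₊ := Nat.ceil_pos.2 hr
    have h3 : ((m + 1 : ℕ) : ℝ) = (⌈r⌉₊ : ℝ) := by congr 1; omega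
    push_cast at h3
    have : (m:ℝ) < n := by linarith
    exact_mod_cast this
  have hc : 0 ≤ c := mz_nonneg hmz (by
    have : (0:ℝ) < n := by linarith
    push_cast; positivity)
  set M := (d + 2) * n with hM
  have hMe : M = d * n + 2 * n := by rw [hM]; ring
  -- degrees
  have hKd := sphK_degLE d M x
  have hRd : DegLE d (d * n) (fun y => (rho d n r).eval (uu x y)) := by
    have := (uu_degLE x).poly (rho d n r) (rho_degree d n r)
    rwa [mul_one] at this
  have hUd : DegLE d n (fun y => (1 - uu x y) ^ n) := by
    have := ((DegLE.const d 1 1).add ((uu_degLE x).smul (-1))).pow n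
    rw [mul_one] at this
    convert this using 3
    ring
  have hG := (hPd.mul hRd).mul hUd
  have hGK := hG.mul hKd
  have e1 : ∀ y, P y * Phi d n r (ip x y) =
      P y * (rho d n r).eval (uu x y) * (1 - uu x y) ^ n * sphK d M (ip x y) := by
    intro y; rw [Phi_eq hd hr]; ring
  have hPx : sInt ν (fun y => P y * Phi d n r (ip x y)) = P x := by
    simp_rw [e1]
    rw [hq _ (hGK.isSphPoly ?_), repro hd x (by omega) hG]
    · have : uu x x = 0 := by rw [uu, ip_self]; ring
      simp only [this]
      rw [rho_zero hd hr]; simp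
    · have : m + d * n + n + (M - 1) < 2 * (d + 2) * n := by
        have : 2 * (d + 2) * n = M + M := by rw [hM]; ring
        omega
      exact_mod_cast this
  have hfx : f x = P x := by
    have := hball x (by simp [hδ.le])
    rw [dist_self, zero_rpow hr.ne', mul_zero] at this
    have := abs_nonpos_iff.1 this
    linarith
  have hΦc : Continuous (fun y => Phi d n r (ip x y)) := by
    have : (fun y => Phi d n r (ip x y)) = fun y => sphK d M (ip x y) * (rho d n r).eval (uu x y) *
      (1 - uu x y) ^ n := by ext y; exact Phi_eq hd hr x y
    rw [this]
    exact (hKd.continuous.mul hRd.continuous).mul hUd.continuous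
  have hPc := hPd.continuous
  have hdr : Continuous (fun y => dist x y ^ r) :=
    (continuous_const.dist continuous_id).rpow_const (fun _ => Or.inr hr.le)
  have hKc := hKd.continuous
  have hRc := hRd.continuous
  set S := supNorm f with hS
  have hSf : ∀ y, |f y| ≤ S := le_supNorm hf
  have hS0 : 0 ≤ S := (abs_nonneg _).trans (hSf x)
  have hpt := hpw d n x f P L S hn3 hL hSf hPd
    (fun y hy => hball y (Metric.closedBall_subset_closedBall hδn hy))
  have h1 : |f x - sigmaOp d n r ν f x| ≤
      ∫ y, |P y * Phi d n r (ip x y) - f y * Phi d n r (ip x y)| ∂ν.totalVariation := by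
    rw [hfx, ← hPx, sigmaOp, sInt_sub ν (f := fun y => P y * Phi d n r (ip x y))
      (g := fun y => f y * Phi d n r (ip x y)) (hPc.mul hΦc) (hf.mul hΦc)]
    exact sInt_abs_le ν ((hPc.mul hΦc).sub (hf.mul hΦc))
  have h2 : ∫ y, |P y * Phi d n r (ip x y) - f y * Phi d n r (ip x y)| ∂ν.totalVariation ≤
      ∫ y, E * (S + L) * (dist x y ^ r * |sphK d M (ip x y) * (rho d n r).eval (uu x y)|)
        ∂ν.totalVariation := by
    apply integral_mono
    · exact sph_integrable _ (by fun_prop)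
    · exact sph_integrable _ (by fun_prop)
    · intro y
      have hu := uu_mem x y
      have a0 : 0 ≤ (1 - uu x y) ^ n := pow_nonneg (by linarith [hu.2]) _
      have a1 : |P y * Phi d n r (ip x y) - f y * Phi d n r (ip x y)| =
          (|f y - P y| * (1 - uu x y) ^ n) * |sphK d M (ip x y) * (rho d n r).eval (uu x y)| := by
        rw [← sub_mul, abs_mul, abs_sub_comm, Phi_eq hd hr, abs_mul _ ((1 - uu x y) ^ n), abs_of_nonneg a0]
        ring
      simp only [a1]
      calc _ ≤ (E * (S + L) * dist x y ^ r) * |sphK d M (ip x y) * (rho d n r).eval (uu x y)| := by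
            exact mul_le_mul_of_nonneg_right (hpt y) (abs_nonneg _)
        _ = _ := by ring
  rw [integral_const_mul] at h2
  have h3 := hQ d n x ν c hd hdn hrn hmz
  have h4 := npow_dim (r := r) hd (by omega : 2 ≤ n) hr
  have h5 : (1:ℝ) ≤ (d:ℝ) ^ ((1:ℝ)/6) := one_le_rpow (by linarith) (by norm_num)
  have h6 : 0 ≤ dimPi d (2 * (d + 2) * n) ^ (-(r / (d:ℝ))) := by
    have : 0 ≤ (8 * exp 1) ^ r * dimPi d (2 * (d + 2) * n) ^ (-(r / (d:ℝ))) :=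
      le_trans (by positivity) h4
    exact nonneg_of_mul_nonneg_right this (by positivity)
  calc _ ≤ E * (S + L) * (D * (n:ℝ) ^ (-r) * c) := by
        refine h1.trans (h2.trans ?_)
        gcongr
    _ ≤ E * (S + L) * (D * ((8 * exp 1) ^ r * dimPi d (2 * (d + 2) * n) ^ (-(r / (d:ℝ)))) * c) := by
        gcongr
    _ = E * D * (8 * exp 1) ^ r * 1 * dimPi d (2 * (d + 2) * n) ^ (-(r / (d : ℝ))) * (S + L) * c := by
        ring
    _ ≤ _ := by gcongr
end
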